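/- Let Ω ⊂ ℂⁿ, n ≥ 2, be a bounded domain admitting a C^∞ defining function ρ such that Ω is strongly convex: for every q ∈ ∂Ω, H_q(ξ,ξ) > 0 for every nonzero ξ ∈ ℂⁿ with dρ_q(ξ) = 0, where H_q is the second real Fréchet derivative of ρ at q. Let p ∈ ∂Ω and let F : Ω → Ω be holomorphic. If F(z₀) = z₀ for some z₀ ∈ Ω and F(z) = z + o(‖z−p‖²) as z → p within Ω, then F(z) = z for all z ∈ Ω. -/

import Mathlib

open Complex Topology Filter Metric Set Function

noncomputable section

/-- `ℂⁿ` as a normed space. -/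
abbrev En (n : ℕ) : Type := EuclideanSpace ℂ (Fin n)

/-- A domain: a nonempty open connected set. -/
def IsDomain' {n : ℕ} (Ω : Set (En n)) : Prop :=
  IsOpen Ω ∧ IsConnected Ω

/-- The Levi form of `ρ` at `q` in direction `ξ`:
`(1/4)(H_q(ξ,ξ) + H_q(iξ,iξ))` with `H_q` the second real Fréchet derivative. -/
def LeviForm {n : ℕ} (ρ : En n → ℝ) (q ξ : En n) : ℝ :=
  (1 / 4) * (iteratedFDeriv ℝ 2 ρ q ![ξ, ξ] + iteratedFDeriv ℝ 2 ρ q ![I • ξ, I • ξ])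

/-- `ξ` lies in the complex tangent space of `{ρ = 0}` at `q`. -/
def InCplxTangent {n : ℕ} (ρ : En n → ℝ) (q ξ : En n) : Prop :=
  fderiv ℝ ρ q ξ = 0 ∧ fderiv ℝ ρ q (I • ξ) = 0

/-- `ρ` is a `C^m` defining function for `Ω`. -/
def IsDefiningFunction {n : ℕ} (Ω : Set (En n)) (m : ℕ∞) (ρ : En n → ℝ) : Prop :=
  ContDiff ℝ m ρ ∧ Ω = {z | ρ z < 0} ∧ frontier Ω = {z | ρ z = 0} ∧
    ∀ q ∈ frontier Ω, fderiv ℝ ρ q ≠ 0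

/-- `q` is a strongly pseudoconvex point with respect to `ρ`. -/
def StronglyPcxAt {n : ℕ} (ρ : En n → ℝ) (q : En n) : Prop :=
  ∀ ξ : En n, ξ ≠ 0 → InCplxTangent ρ q ξ → 0 < LeviForm ρ q ξ

/-- `Ω` is pseudoconvex with `C^∞` boundary, witnessed by the defining function `ρ`. -/
def IsPcxCinfBoundary {n : ℕ} (Ω : Set (En n)) (ρ : En n → ℝ) : Prop :=
  IsDefiningFunction Ω ⊤ ρ ∧
    ∀ q ∈ frontier Ω, ∀ ξ : En n, InCplxTangent ρ q ξ → 0 ≤ LeviForm ρ q ξ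

/-- `F z = z + o(‖z - p‖^k)` as `z → p` within `Ω`. -/
def LittleOh {n : ℕ} (Ω : Set (En n)) (F : En n → En n) (p : En n) (k : ℕ) : Prop :=
  Tendsto (fun z => ‖F z - z‖ / ‖z - p‖ ^ k) (𝓝[Ω] p) (𝓝 0)

/-- `F` is an automorphism of `Ω`: a holomorphic bijection with holomorphic inverse. -/
def IsAutomorphismOf {n : ℕ} (F : En n → En n) (Ω : Set (En n)) : Prop :=
  DifferentiableOn ℂ F Ω ∧ MapsTo F Ω Ω ∧
    ∃ G : En n → En n, DifferentiableOn ℂ G Ω ∧ MapsTo G Ω Ω ∧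
      (∀ z ∈ Ω, G (F z) = z) ∧ (∀ z ∈ Ω, F (G z) = z)

section HolomorphicMaps

variable {E F : Type*} [NormedAddCommGroup E] [NormedSpace ℂ E]
  [NormedAddCommGroup F] [NormedSpace ℂ F]

/-- Lipschitz estimate at the centre of a ball for a bounded holomorphic map. -/
theorem norm_sub_le_of_bounded_on_ball {f : E → F} {a y : E} {R M : ℝ}
    (hd : DifferentiableOn ℂ f (ball a R)) (hM : ∀ x ∈ ball a R, ‖f x‖ ≤ M) (hy : y ∈ ball a R) :
    ‖f y - f a‖ ≤ 2 * M / R * ‖y - a‖ := by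
  have hR : 0 < R := nonempty_ball.mp ⟨_, hy⟩
  have h := Complex.dist_le_div_mul_dist_of_mapsTo_ball (R₂ := 2 * M) hd (fun x hx => ?_) hy
  · simpa [dist_eq_norm] using h
  · rw [mem_closedBall, dist_eq_norm]
    have h1 := hM x hx
    have h2 := hM a (mem_ball_self hR)
    linarith [norm_sub_le (f x) (f a)]

/-- Cauchy estimate for the derivative of a bounded holomorphic map. -/
theorem norm_fderiv_le_of_bounded_on_ball {f : E → F} {a : E} {R M : ℝ} (hR : 0 < R)
    (hd : DifferentiableOn ℂ f (ball a R)) (hM : ∀ x ∈ ball a R, ‖f x‖ ≤ M) :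
    ‖fderiv ℂ f a‖ ≤ 2 * M / R := by
  refine Complex.norm_fderiv_le_div_of_mapsTo_ball hd (fun x hx => ?_) hR
  rw [mem_closedBall, dist_eq_norm]
  have h1 := hM x hx
  have h2 := hM a (mem_ball_self hR)
  linarith [norm_sub_le (f x) (f a)]

/-- Second order Taylor estimate for a bounded holomorphic map. -/
theorem norm_sub_sub_fderiv_le_of_bounded_on_ball {f : E → F} {a y : E} {R M : ℝ}
    (hd : DifferentiableOn ℂ f (ball a R)) (hM : ∀ x ∈ ball a R, ‖f x‖ ≤ M) (hy : y ∈ ball a R) :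
    ‖f y - f a - fderiv ℂ f a (y - a)‖ ≤ 4 * M * (‖y - a‖ / R) ^ 2 := by
  have hR : 0 < R := nonempty_ball.mp ⟨_, hy⟩
  have hfa : DifferentiableAt ℂ f a := hd.differentiableAt (ball_mem_nhds _ hR)
  have h := Complex.dist_le_mul_div_pow_of_mapsTo_ball_of_isLittleO (n := 1) (R₂ := 4 * M)
    (f := fun x => f x - fderiv ℂ f a (x - a)) (c := a) (R₁ := R) (z := y) (by fun_prop)
    (fun x hx => ?_) ?_ hy
  · simp only [sub_self, map_zero, sub_zero, dist_eq_norm] at h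
    rw [show f y - fderiv ℂ f a (y - a) - f a = f y - f a - fderiv ℂ f a (y - a) by abel] at h
    simpa using h
  · rw [mem_closedBall, dist_eq_norm]
    simp only [sub_self, map_zero, sub_zero]
    have h1 := hM x hx
    have h2 := hM a (mem_ball_self hR)
    have h3 : ‖fderiv ℂ f a (x - a)‖ ≤ 2 * M := by
      refine (ContinuousLinearMap.le_opNorm _ _).trans ?_
      have h4 := norm_fderiv_le_of_bounded_on_ball hR hd hM
      have h5 : ‖x - a‖ ≤ R := by rw [← dist_eq_norm]; exact (mem_ball.mp hx).le
      have h0 : 0 ≤ 2 * M / R := (norm_nonneg _).trans h4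
      calc _ ≤ 2 * M / R * R := by gcongr
        _ = 2 * M := by field_simp
    calc ‖f x - fderiv ℂ f a (x - a) - f a‖
        ≤ ‖f x - fderiv ℂ f a (x - a)‖ + ‖f a‖ := norm_sub_le _ _
      _ ≤ ‖f x‖ + ‖fderiv ℂ f a (x - a)‖ + ‖f a‖ := by gcongr; exact norm_sub_le _ _
      _ ≤ 4 * M := by linarith
  · have h := hfa.hasFDerivAt.isLittleO
    simp only [sub_self, map_zero, sub_zero, pow_one]
    refine (h.norm_right).congr_left (fun x => ?_)
    abel

theorem exists_tendsto_ultrafilter_of_norm_le {ι F : Type*} [NormedAddCommGroup F] [ProperSpace F]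
    (𝒰 : Ultrafilter ι) {u : ι → F} {M : ℝ} (hM : ∀ᶠ j in 𝒰, ‖u j‖ ≤ M) :
    ∃ l, Tendsto u 𝒰 (𝓝 l) := by
  have h : (𝒰.map u : Filter F) ≤ 𝓟 (closedBall 0 M) := by
    rw [le_principal_iff]
    change ∀ᶠ j in 𝒰, u j ∈ closedBall 0 M
    simpa using hM
  obtain ⟨l, -, hl⟩ := (isCompact_closedBall (0 : F) M).ultrafilter_le_nhds (𝒰.map u) h
  exact ⟨l, hl⟩

/-- Montel's theorem along an ultrafilter: a locally bounded family of holomorphic maps converges,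
together with the derivatives, to a holomorphic map. -/
theorem exists_holomorphic_ultralimit {ι : Type*} [FiniteDimensional ℂ E] [FiniteDimensional ℂ F]
    (𝒰 : Ultrafilter ι) {U : Set E} {f : ι → E → F}
    (hf : ∀ x ∈ U, ∃ R > 0, ∃ M, ∀ᶠ j in 𝒰, DifferentiableOn ℂ (f j) (ball x R) ∧
      ∀ y ∈ ball x R, ‖f j y‖ ≤ M) (hU : IsOpen U) :
    ∃ g : E → F, DifferentiableOn ℂ g U ∧ (∀ x ∈ U, Tendsto (fun j => f j x) 𝒰 (𝓝 (g x))) ∧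
      ∀ x ∈ U, Tendsto (fun j => fderiv ℂ (f j) x) 𝒰 (𝓝 (fderiv ℂ g x)) := by
  have : ProperSpace F := FiniteDimensional.proper ℂ F
  have : ProperSpace (E →L[ℂ] F) := FiniteDimensional.proper ℂ _
  have hlim : ∀ x, ∃ l, x ∈ U → Tendsto (fun j => f j x) 𝒰 (𝓝 l) := by
    intro x
    by_cases hx : x ∈ U
    · obtain ⟨R, hR, M, h⟩ := hf x hx
      obtain ⟨l, hl⟩ := exists_tendsto_ultrafilter_of_norm_le (M := M) 𝒰
        (h.mono fun j hj => hj.2 x (mem_ball_self hR))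
      exact ⟨l, fun _ => hl⟩
    · exact ⟨0, fun h => absurd h hx⟩
  choose g hg using hlim
  have key : ∀ x ∈ U, ∃ B : E →L[ℂ] F, HasFDerivAt g B x ∧
      Tendsto (fun j => fderiv ℂ (f j) x) 𝒰 (𝓝 B) := by
    intro x hx
    obtain ⟨R, hR, M, h⟩ := hf x hx
    obtain ⟨B, hB⟩ := exists_tendsto_ultrafilter_of_norm_le (M := 2 * M / R) 𝒰
      (h.mono fun j hj => norm_fderiv_le_of_bounded_on_ball hR hj.1 hj.2)
    refine ⟨B, ?_, hB⟩
    have hest : ∀ y ∈ ball x R ∩ U, ‖g y - g x - B (y - x)‖ ≤ 4 * M / R ^ 2 * ‖y - x‖ ^ 2 := by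
      rintro y ⟨hy, hyU⟩
      refine le_of_tendsto (((hg y hyU).sub (hg x hx)).sub
        ((ContinuousLinearMap.apply ℂ F (y - x)).continuous.tendsto B |>.comp hB)).norm ?_
      filter_upwards [h] with j hj
      refine (norm_sub_sub_fderiv_le_of_bounded_on_ball hj.1 hj.2 hy).trans_eq ?_
      field_simp
    have hO : (fun y => g y - g x - B (y - x)) =O[𝓝 x] fun y => ‖y - x‖ ^ 2 := by
      refine Asymptotics.IsBigO.of_bound (4 * M / R ^ 2) ?_
      filter_upwards [inter_mem (ball_mem_nhds x hR) (hU.mem_nhds hx)] with y hy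
      simpa using hest y hy
    refine HasFDerivAt.of_isLittleO (hO.trans_isLittleO ?_)
    have h2 := (Asymptotics.isLittleO_pow_sub_sub (E' := E) x (one_lt_two))
    simpa using h2
  refine ⟨g, fun x hx => ?_, fun x hx => hg x hx, fun x hx => ?_⟩
  · obtain ⟨B, h1, -⟩ := key x hx
    exact h1.differentiableAt.differentiableWithinAt
  · obtain ⟨B, h1, h2⟩ := key x hx
    rwa [h1.fderiv]

end HolomorphicMaps

section Cartan

/-- A unipotent element with bounded powers is the identity. -/
theorem eq_zero_of_isNilpotent_of_bounded_pow {A : Type*} [NormedRing A] [NormedAlgebra ℝ A]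
    {N : A} {K : ℝ} (hN : IsNilpotent N) (hK : ∀ m : ℕ, ‖(1 + N) ^ m‖ ≤ K) : N = 0 := by
  by_contra hne
  have : Nontrivial A := nontrivial_of_ne N 0 hne
  have h2 : 2 ≤ nilpotencyClass N := by
    by_contra h
    have h1 : nilpotencyClass N = 0 ∨ nilpotencyClass N = 1 := by omega
    have h0 := pow_nilpotencyClass hN
    rcases h1 with h1 | h1 <;> rw [h1] at h0
    · simp at h0
    · exact hne (by simpa using h0)
  obtain ⟨k, hk⟩ := Nat.exists_eq_add_of_le h2
  have hP : N * N ^ k ≠ 0 := by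
    rw [← pow_succ']
    intro h
    have := nilpotencyClass_eq_succ_iff (x := N) (k := k + 1) |>.mp (by omega)
    exact this.2 h
  have hNP : N * (N * N ^ k) = 0 := by
    rw [← pow_succ', ← pow_succ']
    have := pow_nilpotencyClass hN
    rwa [hk, show 2 + k = k + 1 + 1 by ring] at this
  have hm : ∀ m : ℕ, (1 + N) ^ m * N ^ k = N ^ k + (m : ℝ) • (N * N ^ k) := by
    intro m
    induction m with
    | zero => simp
    | succ m ih =>
      rw [pow_succ', mul_assoc, ih, add_mul, one_mul, mul_add, mul_smul_comm, hNP]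
      push_cast
      rw [add_smul]
      simp [add_assoc]
  have hpos : 0 < ‖N * N ^ k‖ := norm_pos_iff.mpr hP
  obtain ⟨m, hm'⟩ := exists_nat_gt ((K * ‖N ^ k‖ + ‖N ^ k‖) / ‖N * N ^ k‖)
  rw [div_lt_iff₀ hpos] at hm'
  have h3 : (m : ℝ) * ‖N * N ^ k‖ ≤ K * ‖N ^ k‖ + ‖N ^ k‖ := by
    have h4 : (m : ℝ) • (N * N ^ k) = (1 + N) ^ m * N ^ k - N ^ k := by rw [hm]; abel
    calc (m : ℝ) * ‖N * N ^ k‖ = ‖(m : ℝ) • (N * N ^ k)‖ := by simp [norm_smul]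
      _ ≤ ‖(1 + N) ^ m * N ^ k‖ + ‖N ^ k‖ := by rw [h4]; exact norm_sub_le _ _
      _ ≤ K * ‖N ^ k‖ + ‖N ^ k‖ := by
        gcongr
        exact (norm_mul_le _ _).trans (by gcongr; exact hK m)
  linarith

variable {E F : Type*} [NormedAddCommGroup E] [NormedSpace ℂ E]
  [NormedAddCommGroup F] [NormedSpace ℂ F]

/-- The derivative of a bounded holomorphic map is Lipschitz at the centre of the ball. -/
theorem norm_fderiv_sub_le_of_bounded_on_ball {f : E → F} {a x : E} {R M : ℝ} (hR : 0 < R)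
    (hd : DifferentiableOn ℂ f (ball a R)) (hM : ∀ x ∈ ball a R, ‖f x‖ ≤ M)
    (hx : x ∈ ball a (R / 2)) :
    ‖fderiv ℂ f x - fderiv ℂ f a‖ ≤ 32 * M / R ^ 2 * ‖x - a‖ := by
  rcases eq_or_ne x a with rfl | hne
  · simp
  have hs : 0 < ‖x - a‖ := norm_pos_iff.mpr (sub_ne_zero.mpr hne)
  have hxR : ‖x - a‖ < R / 2 := by rwa [mem_ball, dist_eq_norm] at hx
  have hsub : ball x ‖x - a‖ ⊆ ball a R := by
    intro y hy
    rw [mem_ball, dist_eq_norm] at hy ⊢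
    have : y - a = (y - x) + (x - a) := by abel
    rw [this]
    linarith [norm_add_le (y - x) (x - a)]
  have hM0 : 0 ≤ M := (norm_nonneg _).trans (hM a (mem_ball_self hR))
  have hdx : DifferentiableAt ℂ f x :=
    hd.differentiableAt (isOpen_ball.mem_nhds (hsub (mem_ball_self hs)))
  have h := norm_fderiv_le_of_bounded_on_ball (f := fun y => f y - f a - fderiv ℂ f a (y - a))
    (M := 16 * M / R ^ 2 * ‖x - a‖ ^ 2) hs (a := x) ?_ ?_
  · have h1 : fderiv ℂ (fun y => f y - f a - fderiv ℂ f a (y - a)) x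
        = fderiv ℂ f x - fderiv ℂ f a := by
      refine HasFDerivAt.fderiv ?_
      have h2 := (hdx.hasFDerivAt.sub_const (f a)).sub
        ((fderiv ℂ f a).hasFDerivAt.comp x ((hasFDerivAt_id x).sub_const a))
      rwa [ContinuousLinearMap.comp_id] at h2
    rw [h1] at h
    refine h.trans_eq ?_
    field_simp
    ring
  · have := hd.mono hsub
    fun_prop
  · intro y hy
    refine (norm_sub_sub_fderiv_le_of_bounded_on_ball hd hM (hsub hy)).trans ?_
    have hya : ‖y - a‖ ≤ 2 * ‖x - a‖ := by
      rw [mem_ball, dist_eq_norm] at hy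
      have : y - a = (y - x) + (x - a) := by abel
      rw [this]
      linarith [norm_add_le (y - x) (x - a)]
    calc 4 * M * (‖y - a‖ / R) ^ 2 ≤ 4 * M * (2 * ‖x - a‖ / R) ^ 2 := by gcongr
      _ = _ := by field_simp; ring

theorem hasStrictFDerivAt_of_bounded_on_ball {f : E → F} {a : E} {R M : ℝ} (hR : 0 < R)
    (hd : DifferentiableOn ℂ f (ball a R)) (hM : ∀ x ∈ ball a R, ‖f x‖ ≤ M) :
    HasStrictFDerivAt f (fderiv ℂ f a) a := by
  refine hasStrictFDerivAt_of_hasFDerivAt_of_continuousAt (f' := fderiv ℂ f) ?_ ?_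
  · filter_upwards [ball_mem_nhds a hR] with x hx
    exact (hd.differentiableAt (isOpen_ball.mem_nhds hx)).hasFDerivAt
  · rw [ContinuousAt, tendsto_iff_norm_sub_tendsto_zero]
    refine squeeze_zero' (g := fun x => 32 * M / R ^ 2 * ‖x - a‖)
      (Eventually.of_forall fun _ => norm_nonneg _) ?_ ?_
    · filter_upwards [ball_mem_nhds a (half_pos hR)] with x hx
      exact norm_fderiv_sub_le_of_bounded_on_ball hR hd hM hx
    · have : Continuous fun x => 32 * M / R ^ 2 * ‖x - a‖ := by fun_prop
      simpa using this.tendsto a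

open Asymptotics in
/-- Cartan's uniqueness theorem: a holomorphic germ at a fixed point which has a unipotent
derivative and uniformly bounded iterates is the identity. -/
theorem eq_self_of_bounded_iterates {g : ℕ → E → E} {a : E} {R M : ℝ} (hR : 0 < R)
    (hd : ∀ m, DifferentiableOn ℂ (g m) (ball a R)) (hM : ∀ m, ∀ x ∈ ball a R, ‖g m x‖ ≤ M)
    (hga : ∀ m, g m a = a) (hg0 : ∀ᶠ x in 𝓝 a, g 0 x = x)
    (hcomp : ∀ m, ∀ᶠ x in 𝓝 a, g (m + 1) x = g 1 (g m x))
    (hnil : IsNilpotent (fderiv ℂ (g 1) a - 1)) : ∀ x ∈ ball a R, g 1 x = x := by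
  have hdiff : ∀ m, DifferentiableAt ℂ (g m) a := fun m =>
    (hd m).differentiableAt (ball_mem_nhds a hR)
  have hpow : ∀ m, fderiv ℂ (g m) a = (fderiv ℂ (g 1) a) ^ m := by
    intro m
    induction m with
    | zero =>
      have h : g 0 =ᶠ[𝓝 a] id := hg0
      rw [h.fderiv_eq, fderiv_id, pow_zero]
      rfl
    | succ m ih =>
      have h : g (m + 1) =ᶠ[𝓝 a] g 1 ∘ g m := hcomp m
      have h1 : DifferentiableAt ℂ (g 1) (g m a) := by rw [hga]; exact hdiff 1
      rw [h.fderiv_eq, fderiv_comp _ h1 (hdiff m), ih, pow_succ', hga]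
      rfl
  have hB : fderiv ℂ (g 1) a = 1 := by
    have := eq_zero_of_isNilpotent_of_bounded_pow (K := 2 * M / R) hnil (fun m => by
      rw [add_sub_cancel, ← hpow]
      exact norm_fderiv_le_of_bounded_on_ball hR (hd m) (hM m))
    exact sub_eq_zero.mp this
  set C : ℝ := M + ‖a‖ + R with hC
  have hbd : ∀ m, ∀ x ∈ ball a R, ‖g m x - x‖ ≤ C := by
    intro m x hx
    have h1 := hM m x hx
    have h2 : ‖x‖ ≤ ‖a‖ + R := by
      have : ‖x - a‖ ≤ R := by rw [← dist_eq_norm]; exact (mem_ball.mp hx).le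
      have h3 : x = a + (x - a) := by abel
      rw [h3]
      exact (norm_add_le _ _).trans (by linarith)
    exact (norm_sub_le _ _).trans (by linarith)
  have schwarz : ∀ m k, (fun x => g m x - x) =o[𝓝 a] (fun x => ‖x - a‖ ^ k) →
      ∀ x ∈ ball a R, ‖g m x - x‖ ≤ C * (‖x - a‖ / R) ^ (k + 1) := by
    intro m k hk x hx
    have h := Complex.dist_le_mul_div_pow_of_mapsTo_ball_of_isLittleO (n := k) (R₂ := C)
      (f := fun x => g m x - x) (c := a) (R₁ := R) (z := x) ((hd m).sub differentiableOn_id)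
      (fun x hx => ?_) ?_ hx
    · simpa [hga, dist_eq_norm] using h
    · simpa [hga] using hbd m x hx
    · simpa [hga] using hk
  have hstrict : HasStrictFDerivAt (fun x => g 1 x - x) (0 : E →L[ℂ] E) a := by
    have h := (hasStrictFDerivAt_of_bounded_on_ball hR (hd 1) (hM 1)).sub (hasStrictFDerivAt_id a)
    rw [hB] at h
    rwa [show (1 : E →L[ℂ] E) - ContinuousLinearMap.id ℂ E = 0 from sub_self _] at h
  have step : ∀ k, 1 ≤ k → (fun x => g 1 x - x) =o[𝓝 a] (fun x => ‖x - a‖ ^ k) →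
      (fun x => g 1 x - x) =o[𝓝 a] (fun x => ‖x - a‖ ^ (k + 1)) := by
    intro k hk1 hk
    have hO : (fun x => g 1 x - x) =O[𝓝 a] (fun x => ‖x - a‖ ^ (k + 1)) := by
      refine IsBigO.of_bound (C / R ^ (k + 1)) ?_
      filter_upwards [ball_mem_nhds a hR] with x hx
      refine (schwarz 1 k hk x hx).trans_eq ?_
      rw [div_pow, norm_pow, norm_norm]
      ring
    have hiter : ∀ m : ℕ, (fun x => g m x - x - (m : ℂ) • (g 1 x - x)) =o[𝓝 a]
        (fun x => ‖x - a‖ ^ (k + 1)) := by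
      intro m
      induction m with
      | zero =>
        refine (isLittleO_zero _ _).congr' ?_ EventuallyEq.rfl
        filter_upwards [hg0] with x hx
        simp [hx]
      | succ m ih =>
        have hm : (fun x => g m x - x) =O[𝓝 a] (fun x => ‖x - a‖ ^ (k + 1)) := by
          have := ih.isBigO.add (hO.const_smul_left (m : ℂ))
          refine this.congr_left fun x => ?_
          simp
        have hmt : Tendsto (fun x => (g m x, x)) (𝓝 a) (𝓝 (a, a)) := by
          refine Tendsto.prodMk_nhds ?_ tendsto_id
          have := (hdiff m).continuousAt.tendsto
          rwa [hga] at this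
        have h1 := (hstrict.isLittleO.comp_tendsto hmt).trans_isBigO hm
        refine (ih.add h1).congr' ?_ EventuallyEq.rfl
        filter_upwards [hcomp m] with x hx
        simp only [comp_apply, zero_apply, sub_zero, hx]
        push_cast
        rw [add_smul, one_smul]
        abel
    refine IsLittleO.of_bound fun c hc => ?_
    have hC0 : 0 ≤ C := (norm_nonneg _).trans (hbd 0 a (mem_ball_self hR))
    obtain ⟨m, hm⟩ := exists_nat_gt ((C / R ^ (k + 1) + 1) / c)
    have hm0 : (0 : ℝ) < m := lt_of_le_of_lt (by positivity) hm
    rw [div_lt_iff₀ hc] at hm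
    have hmk : (fun x => g m x - x) =o[𝓝 a] (fun x => ‖x - a‖ ^ k) := by
      have h1 : (fun x => g m x - x - (m : ℂ) • (g 1 x - x)) =o[𝓝 a] (fun x => ‖x - a‖ ^ k) := by
        refine (hiter m).trans_isBigO ?_
        refine IsBigO.of_bound 1 ?_
        filter_upwards [ball_mem_nhds a one_pos] with x hx
        rw [mem_ball, dist_eq_norm] at hx
        simp only [norm_pow, norm_norm, one_mul]
        exact pow_le_pow_of_le_one (norm_nonneg _) hx.le (Nat.le_succ k)
      refine (h1.add (hk.const_smul_left (m : ℂ))).congr_left fun x => ?_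
      simp
    filter_upwards [(hiter m).bound one_pos, ball_mem_nhds a hR] with x hx hxR
    have h2 := schwarz m k hmk x hxR
    rw [norm_pow, norm_norm] at hx ⊢
    have h3 : (m : ℝ) * ‖g 1 x - x‖ ≤ (C / R ^ (k + 1) + 1) * ‖x - a‖ ^ (k + 1) := by
      have h4 : (m : ℂ) • (g 1 x - x) =
          (g m x - x) - (g m x - x - (m : ℂ) • (g 1 x - x)) := by abel
      calc (m : ℝ) * ‖g 1 x - x‖ = ‖(m : ℂ) • (g 1 x - x)‖ := by simp [norm_smul]
        _ ≤ ‖g m x - x‖ + ‖g m x - x - (m : ℂ) • (g 1 x - x)‖ := by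
          rw [h4]; exact (norm_sub_le _ _).trans (by simp)
        _ ≤ C * (‖x - a‖ / R) ^ (k + 1) + 1 * ‖x - a‖ ^ (k + 1) := add_le_add h2 hx
        _ = _ := by rw [div_pow]; ring
    have h5 : (m : ℝ) * ‖g 1 x - x‖ ≤ m * (c * ‖x - a‖ ^ (k + 1)) := by
      refine h3.trans ?_
      rw [← mul_assoc]
      gcongr
    exact le_of_mul_le_mul_left h5 hm0
  have hall : ∀ k, 1 ≤ k → (fun x => g 1 x - x) =o[𝓝 a] (fun x => ‖x - a‖ ^ k) := by
    intro k hk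
    induction k, hk using Nat.le_induction with
    | base =>
      have h := hstrict.hasFDerivAt.isLittleO
      simpa [hga] using h.norm_right
    | succ k hk ih => exact step k hk ih
  intro x hx
  have hlt : ‖x - a‖ / R < 1 := by
    rw [div_lt_one hR, ← dist_eq_norm]
    exact mem_ball.mp hx
  have hlim : Tendsto (fun k : ℕ => C * (‖x - a‖ / R) ^ (k + 1)) atTop (𝓝 0) := by
    have h := (tendsto_pow_atTop_nhds_zero_of_lt_one (by positivity) hlt).comp
      (tendsto_add_atTop_nat 1)
    simpa using h.const_mul C
  have h0 : ‖g 1 x - x‖ ≤ 0 := ge_of_tendsto hlim (by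
    filter_upwards [eventually_ge_atTop 1] with k hk
    exact schwarz 1 k (hall k hk) x hx)
  exact sub_eq_zero.mp (norm_le_zero_iff.mp h0)

end Cartan

section Harnack

variable {E : Type*} [NormedAddCommGroup E] [NormedSpace ℂ E]

/-- The Schwarz lemma for holomorphic functions with values in the right half plane. -/
theorem norm_sub_le_mul_norm_add_conj_of_re_nonneg {h : E → ℂ} {a y : E} {R : ℝ}
    (hd : DifferentiableOn ℂ h (ball a R)) (hre : ∀ x ∈ ball a R, 0 ≤ (h x).re)
    (ha : 0 < (h a).re) (hy : y ∈ ball a R) :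
    ‖h y - h a‖ ≤ ‖y - a‖ / R * ‖h y + (starRingEnd ℂ) (h a)‖ := by
  have hR : 0 < R := nonempty_ball.mp ⟨_, hy⟩
  have hne : ∀ x ∈ ball a R, h x + (starRingEnd ℂ) (h a) ≠ 0 := by
    intro x hx h0
    have := congrArg Complex.re h0
    simp only [add_re, conj_re, zero_re] at this
    linarith [hre x hx]
  have key := Complex.dist_le_div_mul_dist_of_mapsTo_ball (R₂ := 1) (c := a) (R₁ := R) (z := y)
    (f := fun x => (h x - h a) * (h x + (starRingEnd ℂ) (h a))⁻¹)
    ((hd.sub_const _).mul ((hd.add_const _).inv hne)) (fun x hx => ?_) hy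
  · simp only [← div_eq_mul_inv, sub_self, zero_div, norm_div, dist_eq_norm, sub_zero] at key
    rw [div_le_iff₀ (norm_pos_iff.mpr (hne y hy))] at key
    refine key.trans_eq ?_
    ring
  · simp only [← div_eq_mul_inv, sub_self, zero_div, mem_closedBall, dist_zero_right, norm_div]
    rw [div_le_one (norm_pos_iff.mpr (hne x hx))]
    rw [← abs_of_nonneg (norm_nonneg (h x - h a)),
      ← abs_of_nonneg (norm_nonneg (h x + (starRingEnd ℂ) (h a))), ← sq_le_sq,
      Complex.sq_norm, Complex.sq_norm, normSq_apply, normSq_apply]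
    simp only [sub_re, sub_im, add_re, add_im, conj_re, conj_im]
    nlinarith [mul_nonneg (hre x hx) ha.le]

/-- Harnack's inequality. -/
theorem harnack_of_re_nonneg {h : E → ℂ} {a y : E} {R : ℝ}
    (hd : DifferentiableOn ℂ h (ball a R)) (hre : ∀ x ∈ ball a R, 0 ≤ (h x).re)
    (hy : y ∈ ball a R) :
    (1 - ‖y - a‖ / R) * (h a).re ≤ (1 + ‖y - a‖ / R) * (h y).re := by
  have hR : 0 < R := nonempty_ball.mp ⟨_, hy⟩
  have ha0 := hre a (mem_ball_self hR)
  have hy0 := hre y hy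
  have ht0 : 0 ≤ ‖y - a‖ / R := by positivity
  have ht1 : ‖y - a‖ / R ≤ 1 := by
    rw [div_le_one hR, ← dist_eq_norm]
    exact (mem_ball.mp hy).le
  rcases ha0.eq_or_lt with ha | ha
  · rw [← ha]
    simp only [mul_zero]
    positivity
  have key := norm_sub_le_mul_norm_add_conj_of_re_nonneg hd hre ha hy
  set t := ‖y - a‖ / R
  have h1 : ‖h y - h a‖ ^ 2 ≤ t ^ 2 * ‖h y + (starRingEnd ℂ) (h a)‖ ^ 2 := by
    rw [← mul_pow]
    gcongr
  rw [Complex.sq_norm, Complex.sq_norm, normSq_apply, normSq_apply] at h1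
  simp only [sub_re, sub_im, add_re, add_im, conj_re, conj_im] at h1
  have h2 : t ^ 2 ≤ 1 := by nlinarith
  have h3 : ((h a).re - (h y).re) ^ 2 ≤ (t * ((h y).re + (h a).re)) ^ 2 := by
    nlinarith [mul_nonneg (sub_nonneg.mpr h2) (sq_nonneg ((h y).im - (h a).im))]
  have h4 := abs_le_of_sq_le_sq' h3 (by positivity)
  nlinarith [h4.2]

theorem norm_le_three_mul_of_re_nonneg {h : E → ℂ} {a y : E} {R : ℝ} (hR : 0 < R)
    (hd : DifferentiableOn ℂ h (ball a R)) (hre : ∀ x ∈ ball a R, 0 ≤ (h x).re)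
    (ha : 0 < (h a).re) (hy : ‖y - a‖ ≤ R / 2) : ‖h y‖ ≤ 3 * ‖h a‖ := by
  have hyR : y ∈ ball a R := by rw [mem_ball, dist_eq_norm]; linarith
  have key := norm_sub_le_mul_norm_add_conj_of_re_nonneg hd hre ha hyR
  have ht : ‖y - a‖ / R ≤ 1 / 2 := by rw [div_le_iff₀ hR]; linarith
  have h1 : ‖h y + (starRingEnd ℂ) (h a)‖ ≤ ‖h y‖ + ‖h a‖ :=
    (norm_add_le _ _).trans (by simp)
  have h2 : ‖h y - h a‖ ≤ 1 / 2 * (‖h y‖ + ‖h a‖) := key.trans (by gcongr)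
  linarith [norm_sub_norm_le (h y) (h a)]

theorem norm_fderiv_le_of_re_nonneg {h : E → ℂ} {a : E} {R : ℝ} (hR : 0 < R)
    (hd : DifferentiableOn ℂ h (ball a R)) (hre : ∀ x ∈ ball a R, 0 ≤ (h x).re)
    (ha : 0 < (h a).re) : ‖fderiv ℂ h a‖ ≤ 4 * (h a).re / R := by
  refine (hd.differentiableAt (ball_mem_nhds a hR)).hasFDerivAt.le_of_lip' (by positivity) ?_
  filter_upwards [ball_mem_nhds a (half_pos hR)] with y hy
  rw [mem_ball, dist_eq_norm] at hy
  have hyR : y ∈ ball a R := by rw [mem_ball, dist_eq_norm]; linarith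
  have key := norm_sub_le_mul_norm_add_conj_of_re_nonneg hd hre ha hyR
  have ht : ‖y - a‖ / R ≤ 1 / 2 := by rw [div_le_iff₀ hR]; linarith
  have h1 : ‖h y + (starRingEnd ℂ) (h a)‖ ≤ ‖h y - h a‖ + 2 * (h a).re := by
    have : h y + (starRingEnd ℂ) (h a) = (h y - h a) + (2 * (h a).re : ℝ) := by
      rw [← add_conj]
      ring
    rw [this]
    refine (norm_add_le _ _).trans ?_
    rw [norm_real, Real.norm_of_nonneg (by positivity)]
  have h0 : 0 ≤ ‖y - a‖ / R := by positivity
  have h2 : ‖h y - h a‖ ≤ ‖y - a‖ / R * ‖h y - h a‖ + ‖y - a‖ / R * (2 * (h a).re) :=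
    key.trans (by rw [← mul_add]; gcongr)
  have h3 : ‖y - a‖ / R * ‖h y - h a‖ ≤ 1 / 2 * ‖h y - h a‖ := by gcongr
  have h4 : 4 * (h a).re / R * ‖y - a‖ = 2 * (‖y - a‖ / R * (2 * (h a).re)) := by
    field_simp
    ring
  rw [h4]
  linarith

theorem moebius_mem_ball {r : ℝ} (h0 : 0 ≤ r) (h1 : r < 1) {ζ : ℂ} (hζ : ζ ∈ ball (0 : ℂ) 1) :
    1 + r * ζ ≠ 0 ∧ (ζ + r) / (1 + r * ζ) ∈ ball (0 : ℂ) 1 := by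
  have hζ1 : ‖ζ‖ < 1 := by simpa using hζ
  have hne : 1 + r * ζ ≠ 0 := by
    intro h
    have h2 : ‖(r : ℂ) * ζ‖ = 1 := by
      rw [← norm_neg, show -((r : ℂ) * ζ) = 1 by linear_combination -h, norm_one]
    rw [norm_mul, norm_real, Real.norm_of_nonneg h0] at h2
    nlinarith [norm_nonneg ζ]
  refine ⟨hne, ?_⟩
  simp only [mem_ball, dist_zero_right, norm_div]
  rw [div_lt_one (norm_pos_iff.mpr hne)]
  refine lt_of_pow_lt_pow_left₀ 2 (norm_nonneg _) ?_
  have h3 : ‖ζ‖ ^ 2 < 1 := by nlinarith [norm_nonneg ζ]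
  rw [Complex.sq_norm, normSq_apply] at h3
  rw [Complex.sq_norm, Complex.sq_norm, normSq_apply, normSq_apply]
  simp only [add_re, add_im, ofReal_re, ofReal_im, one_re, one_im, mul_re, mul_im, zero_mul,
    sub_zero, add_zero, zero_add]
  nlinarith [mul_pos (show 0 < 1 - r ^ 2 by nlinarith) (sub_pos.mpr h3)]

/-- The normalised radial values of a positive harmonic function are nondecreasing. -/
theorem re_mul_div_mono {h : ℂ → ℂ} (hd : DifferentiableOn ℂ h (ball 0 1))
    (hre : ∀ x ∈ ball (0 : ℂ) 1, 0 ≤ (h x).re) {r r' : ℝ} (h0 : 0 ≤ r) (hrr : r ≤ r')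
    (h1 : r' < 1) :
    (h r).re * ((1 + r) / (1 - r)) ≤ (h r').re * ((1 + r') / (1 - r')) := by
  have hr1 : r < 1 := hrr.trans_lt h1
  have hrr1 : 0 < 1 - r * r' := by nlinarith
  set s : ℝ := (r' - r) / (1 - r * r') with hs
  have hsm : s * (1 - r * r') = r' - r := div_mul_cancel₀ _ hrr1.ne'
  have hs0 : 0 ≤ s := div_nonneg (by linarith) hrr1.le
  have hs1 : s < 1 := by rw [hs, div_lt_one hrr1]; nlinarith
  have hsb : (s : ℂ) ∈ ball (0 : ℂ) 1 := by
    simp only [mem_ball, dist_zero_right, norm_real, Real.norm_eq_abs]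
    rwa [abs_of_nonneg hs0]
  have key := harnack_of_re_nonneg (h := fun ζ => h ((ζ + r) / (1 + r * ζ))) (a := 0) (R := 1)
    (y := (s : ℂ)) ?_ (fun x hx => hre _ (moebius_mem_ball h0 hr1 hx).2) hsb
  · have hs' : ((s : ℂ) + r) / (1 + r * s) = r' := by
      have : (s + r) / (1 + r * s) = r' := by
        rw [div_eq_iff (by positivity)]
        linear_combination hsm
      exact_mod_cast congrArg (fun x : ℝ => (x : ℂ)) this
    simp only [hs', sub_zero, norm_real, Real.norm_eq_abs, abs_of_nonneg hs0, div_one, zero_add,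
      mul_zero, add_zero] at key
    have e1 : 1 - s = (1 - r') * (1 + r) / (1 - r * r') := by
      rw [eq_div_iff hrr1.ne']
      linear_combination -hsm
    have e2 : 1 + s = (1 + r') * (1 - r) / (1 - r * r') := by
      rw [eq_div_iff hrr1.ne']
      linear_combination hsm
    rw [e1, e2, div_mul_eq_mul_div, div_mul_eq_mul_div, div_le_div_iff_of_pos_right hrr1] at key
    have p1 : 0 < 1 - r := by linarith
    have p2 : 0 < 1 - r' := by linarith
    rw [← mul_div_assoc, ← mul_div_assoc, div_le_div_iff₀ p1 p2]
    nlinarith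
  · refine hd.comp (t := ball 0 1) ?_ (fun x hx => (moebius_mem_ball h0 hr1 hx).2)
    exact (differentiableOn_id.add_const _).div ((differentiableOn_id.const_mul _).const_add _)
      (fun x hx => (moebius_mem_ball h0 hr1 hx).1)

end Harnack

section SmoothFunctions

variable {E : Type*} [NormedAddCommGroup E] [NormedSpace ℝ E]

set_option maxSynthPendingDepth 3 in
/-- Uniform Taylor estimates for a `C^3` function on a ball. -/
theorem exists_taylor_bound [FiniteDimensional ℝ E] {ρ : E → ℝ} (hρ : ContDiff ℝ 3 ρ) (r : ℝ) :
    ∃ L > 0, ∀ b ∈ closedBall (0 : E) r, ‖fderiv ℝ ρ b‖ ≤ L ∧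
      ∀ x ∈ closedBall (0 : E) r, ‖fderiv ℝ ρ x - fderiv ℝ ρ b‖ ≤ L * ‖x - b‖ ∧
      |ρ x - ρ b - fderiv ℝ ρ b (x - b)| ≤ L * ‖x - b‖ ^ 2 ∧
      |ρ x - ρ b - fderiv ℝ ρ b (x - b) - fderiv ℝ (fderiv ℝ ρ) b (x - b) (x - b) / 2|
        ≤ L * ‖x - b‖ ^ 3 := by
  have : ProperSpace E := FiniteDimensional.proper ℝ E
  set D := fderiv ℝ ρ with hD
  have hD2 : ContDiff ℝ 2 D := hρ.fderiv_right (by norm_num)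
  set D2 := fderiv ℝ D with hD2def
  have hD3 : ContDiff ℝ 1 D2 := hD2.fderiv_right (by norm_num)
  have hD4 : Continuous (fderiv ℝ D2) := hD3.continuous_fderiv (by norm_num)
  obtain ⟨L1, hL1⟩ := (isCompact_closedBall (0 : E) r).exists_bound_of_continuousOn
    hD2.continuous.continuousOn
  obtain ⟨L2, hL2⟩ := (isCompact_closedBall (0 : E) r).exists_bound_of_continuousOn
    hD3.continuous.continuousOn
  obtain ⟨L3, hL3⟩ := (isCompact_closedBall (0 : E) r).exists_bound_of_continuousOn
    hD4.continuousOn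
  set L := max 1 (max L1 (max L2 L3))
  have hl1 : L1 ≤ L := (le_max_left _ _).trans (le_max_right _ _)
  have hl2 : L2 ≤ L := (le_max_left _ _).trans ((le_max_right _ _).trans (le_max_right _ _))
  have hl3 : L3 ≤ L := (le_max_right _ _).trans ((le_max_right _ _).trans (le_max_right _ _))
  have hL0 : 0 < L := lt_of_lt_of_le one_pos (le_max_left _ _)
  have hconv : Convex ℝ (closedBall (0 : E) r) := convex_closedBall _ _
  have hρd : Differentiable ℝ ρ := hρ.differentiable (by norm_num)
  have hDd : Differentiable ℝ D := hD2.differentiable (by norm_num)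
  have hD2d : Differentiable ℝ D2 := hD3.differentiable (by norm_num)
  refine ⟨L, hL0, fun b hb => ⟨(hL1 b hb).trans hl1, fun x hx => ?_⟩⟩
  have hDL : ∀ y ∈ closedBall (0 : E) r, ‖D y - D b‖ ≤ L * ‖y - b‖ := fun y hy =>
    hconv.norm_image_sub_le_of_norm_fderiv_le (𝕜 := ℝ) (fun z _ => hDd z)
      (fun z hz => (hL2 z hz).trans hl2) hb hy
  have hD2L : ∀ y ∈ closedBall (0 : E) r, ‖D2 y - D2 b‖ ≤ L * ‖y - b‖ := fun y hy =>
    hconv.norm_image_sub_le_of_norm_fderiv_le (𝕜 := ℝ) (fun z _ => hD2d z)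
      (fun z hz => (hL3 z hz).trans hl3) hb hy
  have hseg : ∀ t ∈ Icc (0 : ℝ) 1, b + t • (x - b) ∈ closedBall (0 : E) r := fun t ht =>
    hconv.add_smul_sub_mem hb hx ht
  set v := x - b with hv
  have hline : ∀ t : ℝ, HasDerivAt (fun t : ℝ => b + t • v) v t := fun t => by
    simpa using ((hasDerivAt_id t).smul_const v).const_add b
  have hρline : ∀ t : ℝ, HasDerivAt (fun t : ℝ => ρ (b + t • v)) (D (b + t • v) v) t := fun t =>
    (hρd _).hasFDerivAt.comp_hasDerivAt t (hline t)
  have hDline : ∀ t : ℝ, HasDerivAt (fun t : ℝ => D (b + t • v)) (D2 (b + t • v) v) t := fun t =>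
    (hDd _).hasFDerivAt.comp_hasDerivAt t (hline t)
  have hnorm : ∀ t ∈ Icc (0 : ℝ) 1, ‖b + t • v - b‖ ≤ ‖v‖ := fun t ht => by
    rw [add_sub_cancel_left, norm_smul, Real.norm_of_nonneg ht.1]
    exact mul_le_of_le_one_left (norm_nonneg _) ht.2
  have hx1 : b + (1 : ℝ) • v = x := by simp [hv]
  refine ⟨hDL x hx, ?_, ?_⟩
  · have h := norm_image_sub_le_of_norm_deriv_le_segment_01'
      (f := fun t : ℝ => ρ (b + t • v) - t * D b v) (C := L * ‖v‖ ^ 2)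
      (f' := fun t => D (b + t • v) v - 1 * D b v)
      (fun t _ => ((hρline t).sub ((hasDerivAt_id t).mul_const (D b v))).hasDerivWithinAt) ?_
    · simp only [hx1, one_mul, zero_smul, add_zero, zero_mul, sub_zero, Real.norm_eq_abs] at h
      rwa [sub_right_comm] at h
    · intro t ht
      have ht' : t ∈ Icc (0 : ℝ) 1 := ⟨ht.1, ht.2.le⟩
      rw [one_mul, ← sub_apply]
      refine (ContinuousLinearMap.le_opNorm _ _).trans ?_
      rw [pow_two, ← mul_assoc]
      gcongr
      exact (hDL _ (hseg t ht')).trans (by gcongr; exact hnorm t ht')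
  · have hstep : ∀ t ∈ Icc (0 : ℝ) 1, ‖D (b + t • v) - D b - t • D2 b v‖ ≤ L * ‖v‖ ^ 2 := by
      have h : ∀ t ∈ Icc (0 : ℝ) 1, ‖(D (b + t • v) - t • D2 b v) - (D (b + (0 : ℝ) • v) -
          (0 : ℝ) • D2 b v)‖ ≤ L * ‖v‖ ^ 2 * (t - 0) := by
        refine norm_image_sub_le_of_norm_deriv_le_segment' (f := fun t : ℝ =>
          D (b + t • v) - t • D2 b v) (f' := fun t => D2 (b + t • v) v - (1 : ℝ) • D2 b v)
          (fun t _ => ((hDline t).sub ((hasDerivAt_id t).smul_const _)).hasDerivWithinAt) ?_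
        intro t ht
        have ht' : t ∈ Icc (0 : ℝ) 1 := ⟨ht.1, ht.2.le⟩
        rw [one_smul, ← sub_apply]
        refine (ContinuousLinearMap.le_opNorm _ _).trans ?_
        rw [pow_two, ← mul_assoc]
        gcongr
        exact (hD2L _ (hseg t ht')).trans (by gcongr; exact hnorm t ht')
      intro t ht
      have h1 := h t ht
      simp only [zero_smul, add_zero, sub_zero] at h1
      rw [sub_right_comm]
      refine h1.trans ?_
      exact mul_le_of_le_one_right (by positivity) ht.2
    have h := norm_image_sub_le_of_norm_deriv_le_segment_01'
      (f := fun t : ℝ => ρ (b + t • v) - t * D b v - t ^ 2 * (D2 b v v / 2)) (C := L * ‖v‖ ^ 3)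
      (f' := fun t => D (b + t • v) v - 1 * D b v - (2 * t) * (D2 b v v / 2))
      (fun t _ => ?_) ?_
    · simp only [hx1, one_mul, zero_smul, add_zero, zero_mul, sub_zero, Real.norm_eq_abs,
        one_pow, ne_eq, OfNat.ofNat_ne_zero, not_false_eq_true, zero_pow] at h
      convert h using 2
      ring
    · have h2 : HasDerivAt (fun t : ℝ => t ^ 2) (2 * t) t := by
        simpa using hasDerivAt_pow 2 t
      exact (((hρline t).sub ((hasDerivAt_id t).mul_const (D b v))).sub
        (h2.mul_const _)).hasDerivWithinAt
    · intro t ht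
      have ht' : t ∈ Icc (0 : ℝ) 1 := ⟨ht.1, ht.2.le⟩
      have e : D (b + t • v) v - 1 * D b v - (2 * t) * (D2 b v v / 2) =
          (D (b + t • v) - D b - t • D2 b v) v := by
        simp
        ring
      rw [e]
      refine (ContinuousLinearMap.le_opNorm _ _).trans ?_
      rw [pow_succ ‖v‖ 2, ← mul_assoc]
      gcongr
      exact hstep t ht'

end SmoothFunctions

theorem Filter.Tendsto.continuousLinearMap_apply {𝕜 E F ι : Type*} [NontriviallyNormedField 𝕜]
    [NormedAddCommGroup E] [NormedSpace 𝕜 E] [NormedAddCommGroup F] [NormedSpace 𝕜 F]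
    {l : Filter ι} {A : ι → E →L[𝕜] F} {u : ι → E} {A₀ : E →L[𝕜] F} {u₀ : E}
    (hA : Tendsto A l (𝓝 A₀)) (hu : Tendsto u l (𝓝 u₀)) :
    Tendsto (fun k => A k (u k)) l (𝓝 (A₀ u₀)) :=
  ((isBoundedBilinearMap_apply (𝕜 := 𝕜) (E := E) (F := F)).continuous.tendsto (A₀, u₀)).comp
    (hA.prodMk_nhds hu)

section StrongConvexity

/-- A bounded domain given by a regular `C^3` defining function whose second derivative is positive
definite on the tangent spaces of the boundary. -/
structure IsStronglyConvexDomain {E : Type*} [NormedAddCommGroup E] [NormedSpace ℝ E]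
    (Ω : Set E) (ρ : E → ℝ) : Prop where
  contDiff : ContDiff ℝ 3 ρ
  isOpen : IsOpen Ω
  isPreconnected : IsPreconnected Ω
  isBounded : Bornology.IsBounded Ω
  eq_setOf : Ω = {z | ρ z < 0}
  frontier_eq : frontier Ω = {z | ρ z = 0}
  fderiv_ne_zero : ∀ q ∈ frontier Ω, fderiv ℝ ρ q ≠ 0
  hessian_pos : ∀ q ∈ frontier Ω, ∀ ξ : E, ξ ≠ 0 → fderiv ℝ ρ q ξ = 0 →
    0 < fderiv ℝ (fderiv ℝ ρ) q ξ ξ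

namespace IsStronglyConvexDomain

variable {E : Type*} [NormedAddCommGroup E] [NormedSpace ℝ E]
  {Ω : Set E} {ρ : E → ℝ}

theorem le_zero_of_mem_closure (h : IsStronglyConvexDomain Ω ρ) {x : E} (hx : x ∈ closure Ω) :
    ρ x ≤ 0 := by
  rw [closure_eq_self_union_frontier, h.frontier_eq] at hx
  rcases hx with hx | hx
  · rw [h.eq_setOf] at hx
    exact le_of_lt hx
  · exact le_of_eq hx

theorem eq_zero_of_mem_frontier (h : IsStronglyConvexDomain Ω ρ) {x : E} (hx : x ∈ frontier Ω) :
    ρ x = 0 := by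
  rwa [h.frontier_eq] at hx

variable [FiniteDimensional ℝ E]

theorem pos_of_tangent (h : IsStronglyConvexDomain Ω ρ) {b v : E} (hb : b ∈ frontier Ω)
    (hv : v ≠ 0) (hDv : fderiv ℝ ρ b v = 0) :
    ∃ ε > (0 : ℝ), ∀ s, 0 < s → s < ε → 0 < ρ (b + s • v) := by
  obtain ⟨L, hL, hT⟩ := exists_taylor_bound h.contDiff (‖b‖ + ‖v‖)
  have hH := h.hessian_pos b hb v hv hDv
  set H := fderiv ℝ (fderiv ℝ ρ) b v v with hHdef
  have hv0 : 0 < ‖v‖ := norm_pos_iff.mpr hv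
  refine ⟨min 1 (H / (2 * L * ‖v‖ ^ 3)), by positivity, fun s hs hsε => ?_⟩
  have hs1 : s < 1 := hsε.trans_le (min_le_left _ _)
  have hs2 : s < H / (2 * L * ‖v‖ ^ 3) := hsε.trans_le (min_le_right _ _)
  rw [lt_div_iff₀ (by positivity)] at hs2
  have hmem : b + s • v ∈ closedBall (0 : E) (‖b‖ + ‖v‖) := by
    rw [mem_closedBall_zero_iff]
    refine (norm_add_le _ _).trans ?_
    rw [norm_smul, Real.norm_of_nonneg hs.le]
    gcongr
    exact mul_le_of_le_one_left hv0.le hs1.le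
  have := ((hT b (by simp)).2 _ hmem).2.2
  rw [add_sub_cancel_left, h.eq_zero_of_mem_frontier hb] at this
  simp only [map_smul, hDv, smul_apply, smul_eq_mul, norm_smul,
    Real.norm_of_nonneg hs.le, mul_zero, sub_zero, ← hHdef] at this
  have h1 := (abs_le.mp this).1
  have h2 : 0 < s ^ 2 * (H / 2 - L * s * ‖v‖ ^ 3) := by
    apply mul_pos (by positivity)
    nlinarith
  nlinarith

theorem convex (h : IsStronglyConvexDomain Ω ρ) : Convex ℝ Ω := by
  have key : ∀ x ∈ Ω, Ω ⊆ {y | ∀ t ∈ Icc (0 : ℝ) 1, x + t • (y - x) ∈ Ω} := by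
    intro x hx
    refine h.isPreconnected.subset_of_closure_inter_subset ?_ ⟨x, hx, ?_⟩ ?_
    · rw [isOpen_iff_mem_nhds]
      intro y hy
      refine isCompact_Icc.eventually_forall_of_forall_eventually (P := fun y t =>
        x + t • (y - x) ∈ Ω) fun t ht => ?_
      have hc : ContinuousAt (fun z : E × ℝ => x + z.2 • (z.1 - x)) (y, t) := by fun_prop
      exact hc.eventually (h.isOpen.mem_nhds (hy t ht))
    · intro t _
      simpa using hx
    · rintro y ⟨hy, hyΩ⟩ t ht
      have hcl : ∀ s ∈ Icc (0 : ℝ) 1, x + s • (y - x) ∈ closure Ω := by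
        intro s hs
        have hc : Continuous fun z : E => x + s • (z - x) := by fun_prop
        exact map_mem_closure (f := fun z : E => x + s • (z - x)) hc hy fun z hz => hz s hs
      by_contra hb
      have hbf : x + t • (y - x) ∈ frontier Ω := by
        rw [h.isOpen.frontier_eq]
        exact ⟨hcl t ht, hb⟩
      have ht0 : 0 < t := lt_of_le_of_ne ht.1 fun h0 => hb (by simpa [← h0] using hx)
      have ht1 : t < 1 := lt_of_le_of_ne ht.2 fun h1 => hb (by simpa [h1] using hyΩ)
      have hv : y - x ≠ 0 := fun h0 => hb (by simpa [h0] using hx)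
      have hρd : Differentiable ℝ ρ := h.contDiff.differentiable (by norm_num)
      have hder : HasDerivAt (fun s : ℝ => ρ (x + s • (y - x)))
          (fderiv ℝ ρ (x + t • (y - x)) (y - x)) t := by
        have hline : HasDerivAt (fun s : ℝ => x + s • (y - x)) (y - x) t := by
          simpa using ((hasDerivAt_id t).smul_const (y - x)).const_add x
        exact (hρd _).hasFDerivAt.comp_hasDerivAt t hline
      have hmax : IsLocalMax (fun s : ℝ => ρ (x + s • (y - x))) t := by
        filter_upwards [Icc_mem_nhds ht0 ht1] with s hs
        rw [h.eq_zero_of_mem_frontier hbf]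
        exact h.le_zero_of_mem_closure (hcl s hs)
      obtain ⟨ε, hε, hpos⟩ := h.pos_of_tangent hbf hv (hmax.hasDerivAt_eq_zero hder)
      have hs : 0 < min (ε / 2) (1 - t) := lt_min (by linarith) (by linarith)
      have h1 := hpos _ hs ((min_le_left _ _).trans_lt (by linarith))
      rw [add_assoc, ← add_smul] at h1
      have h2 := h.le_zero_of_mem_closure (hcl (t + min (ε / 2) (1 - t))
        ⟨by linarith, by linarith [min_le_right (ε / 2) (1 - t)]⟩)
      linarith
  intro x hx y hy a b ha hb hab
  have h1 := key x hx hy b ⟨hb, by linarith⟩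
  convert h1 using 1
  rw [show a = 1 - b by linarith]
  module

theorem fderiv_sub_nonpos (h : IsStronglyConvexDomain Ω ρ) {b x : E} (hb : b ∈ frontier Ω)
    (hx : x ∈ closure Ω) : fderiv ℝ ρ b (x - b) ≤ 0 := by
  have hρd : Differentiable ℝ ρ := h.contDiff.differentiable (by norm_num)
  have hder : HasDerivAt (fun s : ℝ => ρ (b + s • (x - b))) (fderiv ℝ ρ b (x - b)) 0 := by
    have hline : HasDerivAt (fun s : ℝ => b + s • (x - b)) (x - b) 0 := by
      simpa using ((hasDerivAt_id (0 : ℝ)).smul_const (x - b)).const_add b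
    have h1 : HasFDerivAt ρ (fderiv ℝ ρ b) (b + (0 : ℝ) • (x - b)) := by
      simpa using (hρd b).hasFDerivAt
    exact h1.comp_hasDerivAt 0 hline
  have hslope := hder.tendsto_slope_zero_right
  refine le_of_tendsto hslope ?_
  filter_upwards [Ioo_mem_nhdsGT (show (0 : ℝ) < 1 by norm_num)] with t ht
  have h1 : b + t • (x - b) ∈ closure Ω :=
    h.convex.closure.add_smul_sub_mem (frontier_subset_closure hb) hx ⟨ht.1.le, ht.2.le⟩
  have h2 := h.le_zero_of_mem_closure h1
  simp only [zero_add, zero_smul, add_zero, h.eq_zero_of_mem_frontier hb, sub_zero, smul_eq_mul]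
  exact mul_nonpos_of_nonneg_of_nonpos (inv_nonneg.mpr ht.1.le) h2

set_option maxSynthPendingDepth 3 in
/-- The boundary of a strongly convex domain is uniformly curved. -/
theorem exists_quadratic_support (h : IsStronglyConvexDomain Ω ρ) :
    ∃ c > 0, ∀ b ∈ frontier Ω, ∀ x ∈ closure Ω, c * ‖x - b‖ ^ 2 ≤ -fderiv ℝ ρ b (x - b) := by
  have : ProperSpace E := FiniteDimensional.proper ℝ E
  by_contra hcon
  push Not at hcon
  have hseq : ∀ k : ℕ, ∃ b ∈ frontier Ω, ∃ x ∈ closure Ω,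
      -fderiv ℝ ρ b (x - b) < 1 / ((k : ℝ) + 1) * ‖x - b‖ ^ 2 := fun k =>
    hcon _ Nat.one_div_pos_of_nat
  choose b hb x hx hlt using hseq
  obtain ⟨r, hr⟩ := h.isBounded.closure.subset_closedBall (0 : E)
  have hbr : ∀ k, b k ∈ closedBall (0 : E) r := fun k => hr (frontier_subset_closure (hb k))
  have hxr : ∀ k, x k ∈ closedBall (0 : E) r := fun k => hr (hx k)
  obtain ⟨L, hL, hT⟩ := exists_taylor_bound h.contDiff r
  set 𝒰 := hyperfilter ℕ
  have h𝒰 : Tendsto (fun k : ℕ => 1 / ((k : ℝ) + 1)) 𝒰 (𝓝 0) :=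
    tendsto_one_div_add_atTop_nhds_zero_nat.mono_left Nat.hyperfilter_le_atTop
  obtain ⟨b₀, hb₀⟩ := exists_tendsto_ultrafilter_of_norm_le (u := b) (M := r) 𝒰
    (Eventually.of_forall fun k => by simpa using hbr k)
  obtain ⟨x₀, hx₀⟩ := exists_tendsto_ultrafilter_of_norm_le (u := x) (M := r) 𝒰
    (Eventually.of_forall fun k => by simpa using hxr k)
  have hb₀f : b₀ ∈ frontier Ω :=
    isClosed_frontier.mem_of_tendsto hb₀ (Eventually.of_forall hb)
  have hx₀c : x₀ ∈ closure Ω := isClosed_closure.mem_of_tendsto hx₀ (Eventually.of_forall hx)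
  have hD : Continuous (fderiv ℝ ρ) := h.contDiff.continuous_fderiv (by norm_num)
  have hD2 : Continuous (fderiv ℝ (fderiv ℝ ρ)) :=
    (h.contDiff.fderiv_right (m := 2) (by norm_num)).continuous_fderiv (by norm_num)
  have hDb : Tendsto (fun k => fderiv ℝ ρ (b k)) 𝒰 (𝓝 (fderiv ℝ ρ b₀)) :=
    (hD.tendsto b₀).comp hb₀
  have hD2b : Tendsto (fun k => fderiv ℝ (fderiv ℝ ρ) (b k)) 𝒰
      (𝓝 (fderiv ℝ (fderiv ℝ ρ) b₀)) := (hD2.tendsto b₀).comp hb₀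
  have hv : Tendsto (fun k => x k - b k) 𝒰 (𝓝 (x₀ - b₀)) := hx₀.sub hb₀
  by_cases hne : x₀ = b₀
  · rw [hne, sub_self] at hv
    have hvpos : ∀ k, 0 < ‖x k - b k‖ := by
      intro k
      refine norm_pos_iff.mpr fun h0 => ?_
      have := hlt k
      simp [h0] at this
    set ξ : ℕ → E := fun k => ‖x k - b k‖⁻¹ • (x k - b k) with hξdef
    have hvξ : ∀ k, x k - b k = ‖x k - b k‖ • ξ k := by
      intro k
      rw [hξdef, smul_smul, mul_inv_cancel₀ (hvpos k).ne', one_smul]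
    have hξ1 : ∀ k, ‖ξ k‖ = 1 := by
      intro k
      rw [hξdef, norm_smul, norm_inv, norm_norm, inv_mul_cancel₀ (hvpos k).ne']
    obtain ⟨ξ₀, hξ₀⟩ := exists_tendsto_ultrafilter_of_norm_le (u := ξ) (M := 1) 𝒰
      (Eventually.of_forall fun k => (hξ1 k).le)
    have hξ₀1 : ‖ξ₀‖ = 1 := tendsto_nhds_unique hξ₀.norm (by simp [hξ1])
    have hξ₀ne : ξ₀ ≠ 0 := fun h0 => by simp [h0] at hξ₀1
    have hDξ : Tendsto (fun k => fderiv ℝ ρ (b k) (ξ k)) 𝒰 (𝓝 (fderiv ℝ ρ b₀ ξ₀)) :=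
      hDb.continuousLinearMap_apply hξ₀
    have hHξ : Tendsto (fun k => fderiv ℝ (fderiv ℝ ρ) (b k) (ξ k) (ξ k)) 𝒰
        (𝓝 (fderiv ℝ (fderiv ℝ ρ) b₀ ξ₀ ξ₀)) :=
      (hD2b.continuousLinearMap_apply hξ₀).continuousLinearMap_apply hξ₀
    have hDval : ∀ k, fderiv ℝ ρ (b k) (x k - b k) = ‖x k - b k‖ * fderiv ℝ ρ (b k) (ξ k) := by
      intro k
      conv_lhs => rw [hvξ k]
      rw [map_smul, smul_eq_mul]
    have hzero : fderiv ℝ ρ b₀ ξ₀ = 0 := by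
      refine tendsto_nhds_unique hDξ ?_
      have hlow : Tendsto (fun k : ℕ => -(1 / ((k : ℝ) + 1) * ‖x k - b k‖)) 𝒰 (𝓝 0) := by
        simpa using (h𝒰.mul hv.norm).neg
      refine tendsto_of_tendsto_of_tendsto_of_le_of_le hlow tendsto_const_nhds ?_ ?_
      · intro k
        have h1 := hlt k
        rw [hDval] at h1
        have h2 : ‖x k - b k‖ * -(fderiv ℝ ρ (b k) (ξ k)) <
            ‖x k - b k‖ * (1 / ((k : ℝ) + 1) * ‖x k - b k‖) := by
          linarith
        have := lt_of_mul_lt_mul_left h2 (hvpos k).le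
        simp only
        linarith
      · intro k
        have h1 := h.fderiv_sub_nonpos (hb k) (hx k)
        rw [hDval] at h1
        exact nonpos_of_mul_nonpos_right h1 (hvpos k)
    have hpos := h.hessian_pos b₀ hb₀f ξ₀ hξ₀ne hzero
    have hle : fderiv ℝ (fderiv ℝ ρ) b₀ ξ₀ ξ₀ / 2 ≤ 0 := by
      have hup : Tendsto (fun k : ℕ => 1 / ((k : ℝ) + 1) + L * ‖x k - b k‖) 𝒰 (𝓝 0) := by
        simpa using h𝒰.add (hv.norm.const_mul L)
      refine le_of_tendsto_of_tendsto (hHξ.div_const 2) hup (Eventually.of_forall fun k => ?_)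
      have h1 := ((hT (b k) (hbr k)).2 (x k) (hxr k)).2.2
      rw [h.eq_zero_of_mem_frontier (hb k)] at h1
      have h2 := h.le_zero_of_mem_closure (hx k)
      have h3 := (abs_le.mp h1).1
      have h4 : fderiv ℝ (fderiv ℝ ρ) (b k) (x k - b k) (x k - b k) =
          ‖x k - b k‖ ^ 2 * fderiv ℝ (fderiv ℝ ρ) (b k) (ξ k) (ξ k) := by
        conv_lhs => rw [hvξ k]
        simp only [map_smul, smul_apply, smul_eq_mul]
        ring
      rw [h4] at h3
      have h5 := hlt k
      have h6 : ‖x k - b k‖ ^ 2 * (fderiv ℝ (fderiv ℝ ρ) (b k) (ξ k) (ξ k) / 2) ≤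
          ‖x k - b k‖ ^ 2 * (1 / ((k : ℝ) + 1) + L * ‖x k - b k‖) := by
        nlinarith
      exact le_of_mul_le_mul_left h6 (pow_pos (hvpos k) 2)
    linarith
  · have h1 : fderiv ℝ ρ b₀ (x₀ - b₀) = 0 := by
      refine le_antisymm (h.fderiv_sub_nonpos hb₀f hx₀c) ?_
      have h2 : Tendsto (fun k => -fderiv ℝ ρ (b k) (x k - b k)) 𝒰
          (𝓝 (-fderiv ℝ ρ b₀ (x₀ - b₀))) := (hDb.continuousLinearMap_apply hv).neg
      have h3 : Tendsto (fun k : ℕ => 1 / ((k : ℝ) + 1) * ‖x k - b k‖ ^ 2) 𝒰 (𝓝 0) := by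
        simpa using h𝒰.mul (hv.norm.pow 2)
      have := le_of_tendsto_of_tendsto h2 h3 (Eventually.of_forall fun k => (hlt k).le)
      linarith
    obtain ⟨ε, hε, hpos⟩ := h.pos_of_tangent hb₀f (sub_ne_zero.mpr hne) h1
    have hs : 0 < min (ε / 2) 1 := lt_min (by linarith) one_pos
    have h2 := hpos _ hs ((min_le_left _ _).trans_lt (by linarith))
    have h3 := h.le_zero_of_mem_closure (h.convex.closure.add_smul_sub_mem
      (frontier_subset_closure hb₀f) hx₀c ⟨hs.le, min_le_right _ _⟩)
    linarith

end IsStronglyConvexDomain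

end StrongConvexity

section LocalGeometry

/-- The geometric properties of a strongly convex domain `Ω` near a boundary point `p` with complex
conormal `ω`. -/
structure StronglyConvexAt {E : Type*} [NormedAddCommGroup E] [NormedSpace ℂ E]
    (Ω : Set E) (p : E) (ω : E →L[ℂ] ℂ) : Prop where
  isOpen : IsOpen Ω
  bounded : ∃ R > 0, ∀ x ∈ Ω, ‖x‖ ≤ R
  segment : ∀ x ∈ Ω, ∀ y ∈ Ω, ∀ t ∈ Icc (0 : ℝ) 1, x + (t : ℂ) • (y - x) ∈ Ω
  mem_frontier : p ∈ frontier Ω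
  support : ∃ c > 0, ∃ K > 0, ∀ b ∈ frontier Ω, ∃ η : E →L[ℂ] ℂ, ‖η‖ ≤ K ∧
    ∀ x ∈ closure Ω, c * ‖x - b‖ ^ 2 ≤ (η (x - b)).re
  support_at : ∃ c > 0, ∀ x ∈ closure Ω, c * ‖x - p‖ ^ 2 ≤ (ω (x - p)).re
  mem_of_lt : ∃ C > 0, ∀ x, C * ‖x - p‖ ^ 2 < (ω (x - p)).re → x ∈ Ω
  add_mem : ∀ a > 0, ∀ B > 0, ∃ κ > 0, ∀ᶠ δ in 𝓝[>] (0 : ℝ), ∀ x ∈ Ω, ∀ h,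
    ‖x - p‖ ^ 2 ≤ B * δ → ball x (a * δ) ⊆ Ω → ‖ω h‖ ≤ κ * δ → ‖h‖ ^ 2 ≤ κ ^ 2 * δ → x + h ∈ Ω

variable {E : Type*} [NormedAddCommGroup E] [NormedSpace ℝ E] [FiniteDimensional ℝ E]
  {Ω : Set E} {ρ : E → ℝ}

theorem IsStronglyConvexDomain.exists_push (h : IsStronglyConvexDomain Ω ρ) {p : E}
    (hp : p ∈ frontier Ω) {a B : ℝ} (ha : 0 < a) (hB : 0 < B) :
    ∃ κ > 0, ∀ᶠ δ in 𝓝[>] (0 : ℝ), ∀ x ∈ Ω, ∀ h, ‖x - p‖ ^ 2 ≤ B * δ → ball x (a * δ) ⊆ Ω →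
      fderiv ℝ ρ p h ≤ κ * δ → ‖h‖ ^ 2 ≤ κ ^ 2 * δ → x + h ∈ Ω := by
  obtain ⟨r, hr⟩ := h.isBounded.closure.subset_closedBall (0 : E)
  obtain ⟨L, hL, hT⟩ := exists_taylor_bound h.contDiff (r + 1)
  have hsub : ∀ x ∈ closure Ω, x ∈ closedBall (0 : E) (r + 1) := fun x hx =>
    closedBall_subset_closedBall (by linarith) (hr hx)
  obtain ⟨v, hv⟩ : ∃ v, fderiv ℝ ρ p v = -1 := by
    obtain ⟨w, hw⟩ : ∃ w, fderiv ℝ ρ p w ≠ 0 := by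
      by_contra! hcon
      exact h.fderiv_ne_zero p hp (ContinuousLinearMap.ext hcon)
    exact ⟨(-(fderiv ℝ ρ p w)⁻¹) • w, by simp [hw]⟩
  set a' := a / (2 * (‖v‖ + 1)) with ha'
  have ha'0 : 0 < a' := by positivity
  set κ := min 1 (a' / (4 * (1 + L * √B + L))) with hκ
  have hκ0 : 0 < κ := lt_min one_pos (by positivity)
  have hκ1 : κ ≤ 1 := min_le_left _ _
  have hκ2 : κ * (4 * (1 + L * √B + L)) ≤ a' := by
    rw [← le_div_iff₀ (by positivity)]
    exact min_le_right _ _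
  refine ⟨κ, hκ0, ?_⟩
  have hsmall : ∀ᶠ δ in 𝓝[>] (0 : ℝ), L * √(B * δ) * ‖v‖ + L * (a' * δ) * ‖v‖ ^ 2 < 1 / 2 := by
    have hc : Continuous fun δ : ℝ => L * √(B * δ) * ‖v‖ + L * (a' * δ) * ‖v‖ ^ 2 := by fun_prop
    have := (hc.tendsto 0).mono_left (nhdsWithin_le_nhds (s := Ioi 0))
    simp only [mul_zero, Real.sqrt_zero, zero_mul, add_zero] at this
    exact this.eventually (gt_mem_nhds (by norm_num))
  filter_upwards [hsmall, Ioo_mem_nhdsGT (show (0 : ℝ) < 1 by norm_num)] with δ hδ hδ1 x hx u hxp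
    hball hu hu2
  have hδ0 : 0 < δ := hδ1.1
  have hxp' : ‖x - p‖ ≤ √(B * δ) := Real.le_sqrt_of_sq_le hxp
  have hxr := hsub x (subset_closure hx)
  have hpr := hsub p (frontier_subset_closure hp)
  have hDx : ‖fderiv ℝ ρ x - fderiv ℝ ρ p‖ ≤ L * √(B * δ) :=
    (((hT p hpr).2 x hxr).1).trans (by gcongr)
  have hDxu : ∀ w, fderiv ℝ ρ x w ≤ fderiv ℝ ρ p w + L * √(B * δ) * ‖w‖ := by
    intro w
    have h1 := (ContinuousLinearMap.le_opNorm (fderiv ℝ ρ x - fderiv ℝ ρ p) w).trans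
      (mul_le_mul_of_nonneg_right hDx (norm_nonneg w))
    rw [sub_apply, Real.norm_eq_abs] at h1
    linarith [(abs_le.mp h1).2]
  set s := a' * δ with hs
  have hs0 : 0 < s := by positivity
  have hρx : ρ x ≤ -s / 2 := by
    have hmem : x - s • v ∈ Ω := by
      apply hball
      rw [mem_ball, dist_eq_norm, sub_sub_cancel_left, norm_neg, norm_smul,
        Real.norm_of_nonneg hs0.le, hs, ha']
      rw [div_mul_eq_mul_div, div_mul_eq_mul_div, div_lt_iff₀ (by positivity)]
      have : 0 < a * δ := by positivity
      nlinarith [norm_nonneg v]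
    have h1 := (abs_le.mp ((hT x hxr).2 _ (hsub _ (subset_closure hmem))).2.1).1
    have h2 : ρ (x - s • v) < 0 := by rwa [h.eq_setOf] at hmem
    rw [sub_sub_cancel_left, map_neg, map_smul, norm_neg, norm_smul, Real.norm_of_nonneg hs0.le,
      smul_eq_mul] at h1
    have h3 := hDxu v
    rw [hv] at h3
    have h4 : s * fderiv ℝ ρ x v ≤ s * (-1 + L * √(B * δ) * ‖v‖) := by gcongr
    nlinarith [mul_lt_mul_of_pos_left hδ hs0]
  have hu1 : ‖u‖ ≤ κ * √δ := by
    refine (Real.le_sqrt_of_sq_le hu2).trans_eq ?_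
    rw [Real.sqrt_mul (by positivity), Real.sqrt_sq hκ0.le]
  have hxu : x + u ∈ closedBall (0 : E) (r + 1) := by
    rw [mem_closedBall_zero_iff]
    have h1 : ‖x‖ ≤ r := by simpa using hr (subset_closure hx)
    have h2 : √δ ≤ 1 := Real.sqrt_le_one.mpr hδ1.2.le
    refine (norm_add_le _ _).trans (add_le_add h1 (hu1.trans ?_))
    exact mul_le_one₀ hκ1 (Real.sqrt_nonneg _) h2
  have h1 := (abs_le.mp ((hT x hxr).2 _ hxu).2.1).2
  rw [add_sub_cancel_left] at h1
  have h2 := hDxu u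
  have h3 : L * √(B * δ) * ‖u‖ ≤ L * √B * κ * δ := by
    calc L * √(B * δ) * ‖u‖ ≤ L * √(B * δ) * (κ * √δ) := by gcongr
      _ = L * √B * κ * (√δ * √δ) := by rw [Real.sqrt_mul hB.le]; ring
      _ = _ := by rw [Real.mul_self_sqrt hδ0.le]
  have h4 : L * ‖u‖ ^ 2 ≤ L * κ * δ := by
    have : κ ^ 2 * δ ≤ κ * δ := by
      gcongr
      nlinarith
    nlinarith
  have h5 : κ * (1 + L * √B + L) * δ ≤ a' / 4 * δ := by
    gcongr
    linarith
  rw [h.eq_setOf]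
  change ρ (x + u) < 0
  nlinarith [mul_pos ha'0 hδ0]

theorem IsStronglyConvexDomain.stronglyConvexAt [NormedSpace ℂ E] [IsScalarTower ℝ ℂ E]
    (h : IsStronglyConvexDomain Ω ρ) {p : E} (hp : p ∈ frontier Ω) :
    ∃ ω : E →L[ℂ] ℂ, StronglyConvexAt Ω p ω := by
  set η : E → E →L[ℂ] ℂ := fun b => StrongDual.extendRCLike (𝕜 := ℂ) (-fderiv ℝ ρ b) with hη
  have hηre : ∀ b x, (η b x).re = -fderiv ℝ ρ b x := fun b x =>
    StrongDual.re_extendRCLike_apply (𝕜 := ℂ) (-fderiv ℝ ρ b) x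
  have hηnorm : ∀ b, ‖η b‖ = ‖fderiv ℝ ρ b‖ := fun b => by
    rw [hη, StrongDual.norm_extendRCLike, norm_neg]
  obtain ⟨r, hr⟩ := h.isBounded.closure.subset_closedBall (0 : E)
  obtain ⟨L, hL, hT⟩ := exists_taylor_bound h.contDiff (max r (‖p‖ + 1))
  have hsub : ∀ x ∈ closure Ω, x ∈ closedBall (0 : E) (max r (‖p‖ + 1)) := fun x hx =>
    closedBall_subset_closedBall (le_max_left _ _) (hr hx)
  have hpc := frontier_subset_closure hp
  obtain ⟨c, hc, hsupp⟩ := h.exists_quadratic_support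
  refine ⟨η p, h.isOpen, ?_, ?_, hp, ?_, ?_, ?_, ?_⟩
  · refine ⟨max r 1, by positivity, fun x hx => ?_⟩
    have : ‖x‖ ≤ r := by simpa using hr (subset_closure hx)
    exact this.trans (le_max_left _ _)
  · intro x hx y hy t ht
    have := h.convex.add_smul_sub_mem hx hy ht
    rwa [RCLike.real_smul_eq_coe_smul (K := ℂ)] at this
  · refine ⟨c, hc, L, hL, fun b hb => ⟨η b, ?_, fun x hx => ?_⟩⟩
    · rw [hηnorm]
      exact (hT b (hsub b (frontier_subset_closure hb))).1
    · rw [hηre]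
      exact hsupp b hb x hx
  · refine ⟨c, hc, fun x hx => ?_⟩
    rw [hηre]
    exact hsupp p hp x hx
  · refine ⟨L, hL, fun x hx => ?_⟩
    have hx1 : ‖x - p‖ < 1 := by
      have h1 : (η p (x - p)).re ≤ L * ‖x - p‖ := by
        refine (re_le_norm _).trans ((ContinuousLinearMap.le_opNorm _ _).trans ?_)
        rw [hηnorm]
        gcongr
        exact (hT p (hsub p hpc)).1
      have h2 : L * ‖x - p‖ * ‖x - p‖ < L * ‖x - p‖ * 1 := by nlinarith
      have h3 : 0 ≤ L * ‖x - p‖ := by positivity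
      exact lt_of_mul_lt_mul_left h2 h3
    have hxr : x ∈ closedBall (0 : E) (max r (‖p‖ + 1)) := by
      rw [mem_closedBall_zero_iff]
      refine le_trans ?_ (le_max_right _ _)
      have : x = p + (x - p) := by abel
      rw [this]
      exact (norm_add_le _ _).trans (by linarith)
    have h1 := (abs_le.mp ((hT p (hsub p hpc)).2 x hxr).2.1).2
    rw [h.eq_zero_of_mem_frontier hp] at h1
    rw [hηre] at hx
    rw [h.eq_setOf]
    change ρ x < 0
    linarith
  · intro a ha B hB
    obtain ⟨κ, hκ, hev⟩ := h.exists_push hp ha hB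
    refine ⟨κ, hκ, ?_⟩
    filter_upwards [hev] with δ hδ x hx u h1 h2 h3 h4
    refine hδ x hx u h1 h2 ?_ h4
    have h5 := (abs_le.mp ((abs_re_le_norm (η p u)).trans h3)).1
    rw [hηre] at h5
    linarith

end LocalGeometry

section Discs

variable {E : Type*} [NormedAddCommGroup E] [NormedSpace ℂ E]

theorem ball_subset_of_forall_frontier {Ω : Set E} (hΩ : IsOpen Ω) {x : E} (hx : x ∈ Ω) {d : ℝ}
    (h : ∀ b ∈ frontier Ω, d ≤ ‖x - b‖) : ball x d ⊆ Ω := by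
  rcases le_or_gt d 0 with hd | hd
  · rw [ball_eq_empty.mpr hd]; exact empty_subset _
  refine (convex_ball x d).isPreconnected.subset_of_closure_inter_subset hΩ
    ⟨x, mem_ball_self hd, hx⟩ ?_
  rintro y ⟨hy, hyb⟩
  by_contra hyΩ
  have := h y (by rw [hΩ.frontier_eq]; exact ⟨hy, hyΩ⟩)
  rw [mem_ball, dist_comm, dist_eq_norm] at hyb
  linarith

/-- A holomorphic disc in `Ω` centred at `z`. -/
structure IsDiscAt (Ω : Set E) (z : E) (φ : ℂ → E) : Prop where
  differentiableOn : DifferentiableOn ℂ φ (ball 0 1)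
  mapsTo : MapsTo φ (ball 0 1) Ω
  map_zero : φ 0 = z

namespace StronglyConvexAt

variable {Ω : Set E} {p : E} {ω : E →L[ℂ] ℂ}

theorem convex (h : StronglyConvexAt Ω p ω) : Convex ℝ Ω := by
  intro x hx y hy a b ha hb hab
  have := h.segment x hx y hy b ⟨hb, by linarith⟩
  rw [Complex.coe_smul] at this
  convert this using 1
  rw [← eq_sub_iff_add_eq] at hab
  rw [hab]
  module

theorem starlike (h : StronglyConvexAt Ω p ω) {y : E} (hy : y ∈ Ω) {t : ℝ} (h0 : 0 < t)
    (h1 : t ≤ 1) : p + (t : ℂ) • (y - p) ∈ Ω := by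
  have := h.convex.add_smul_sub_mem_interior' (frontier_subset_closure h.mem_frontier)
    (by rwa [h.isOpen.interior_eq]) ⟨h0, h1⟩
  rw [h.isOpen.interior_eq] at this
  simpa only [Complex.coe_smul] using this

theorem notMem (h : StronglyConvexAt Ω p ω) : p ∉ Ω := by
  have := h.mem_frontier
  rw [h.isOpen.frontier_eq] at this
  exact this.2

theorem re_pos (h : StronglyConvexAt Ω p ω) {x : E} (hx : x ∈ Ω) : 0 < (ω (x - p)).re := by
  obtain ⟨c, hc, hs⟩ := h.support_at
  have hxp : x - p ≠ 0 := sub_ne_zero.mpr fun e => h.notMem (e ▸ hx)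
  have := norm_pos_iff.mpr hxp
  exact lt_of_lt_of_le (by positivity) (hs x (subset_closure hx))

theorem exists_ball_midpoint_subset (h : StronglyConvexAt Ω p ω) : ∃ c > 0, ∀ x ∈ Ω, ∀ y ∈ Ω,
    ball ((2⁻¹ : ℂ) • (x + y)) (c * ‖x - y‖ ^ 2) ⊆ Ω := by
  obtain ⟨c, hc, K, hK, hs⟩ := h.support
  refine ⟨c / (4 * K), by positivity, fun x hx y hy => ?_⟩
  have hm : (2⁻¹ : ℂ) • (x + y) ∈ Ω := by
    have := h.segment x hx y hy (1 / 2) (by norm_num)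
    convert this using 1
    push_cast
    module
  refine ball_subset_of_forall_frontier h.isOpen hm fun b hb => ?_
  obtain ⟨η, hη, hηs⟩ := hs b hb
  have e : (2⁻¹ : ℂ) • (x + y) - b = (2⁻¹ : ℂ) • ((x - b) + (y - b)) := by module
  have h1 := hηs x (subset_closure hx)
  have h2 := hηs y (subset_closure hy)
  have h3 : (η ((2⁻¹ : ℂ) • (x + y) - b)).re = ((η (x - b)).re + (η (y - b)).re) / 2 := by
    rw [e, map_smul, map_add, smul_eq_mul, show (2⁻¹ : ℂ) = ((2⁻¹ : ℝ) : ℂ) by push_cast; rfl,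
      re_ofReal_mul, add_re]
    ring
  have h4 : (η ((2⁻¹ : ℂ) • (x + y) - b)).re ≤ K * ‖(2⁻¹ : ℂ) • (x + y) - b‖ :=
    (re_le_norm _).trans (η.le_of_opNorm_le hη _)
  have h5 : ‖x - y‖ ≤ ‖x - b‖ + ‖y - b‖ := by
    rw [show x - y = (x - b) - (y - b) by abel]; exact norm_sub_le _ _
  have h6 : ‖x - y‖ ^ 2 ≤ 2 * (‖x - b‖ ^ 2 + ‖y - b‖ ^ 2) := by
    nlinarith [norm_nonneg (x - y), sq_nonneg (‖x - b‖ - ‖y - b‖)]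
  have h7 : c * ‖x - y‖ ^ 2 ≤ c * (2 * (‖x - b‖ ^ 2 + ‖y - b‖ ^ 2)) := by gcongr
  rw [div_mul_eq_mul_div, div_le_iff₀ (by positivity)]
  nlinarith

theorem exists_ball_disc_subset_of_ball_subset (h : StronglyConvexAt Ω p ω) :
    ∃ a > (0 : ℝ), ∀ z, ∀ r > 0, ball z r ⊆ Ω → ∀ φ, IsDiscAt Ω z φ → ∀ ζ ∈ ball (0 : ℂ) 1,
      ball (φ ζ) (a * r ^ 2 * (1 - ‖ζ‖)) ⊆ Ω := by
  obtain ⟨c, hc, K, hK, hs⟩ := h.support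
  refine ⟨c / (2 * K), by positivity, fun z r hr hrΩ φ hφ ζ hζ => ?_⟩
  have hz : z ∈ Ω := hrΩ (mem_ball_self hr)
  refine ball_subset_of_forall_frontier h.isOpen (hφ.mapsTo hζ) fun b hb => ?_
  obtain ⟨η, hη, hηs⟩ := hs b hb
  have hzb : r ≤ ‖z - b‖ := by
    by_contra! hlt
    rw [h.isOpen.frontier_eq] at hb
    exact hb.2 (hrΩ (by rwa [mem_ball, dist_comm, dist_eq_norm]))
  have hd : DifferentiableOn ℂ (fun ζ => η (φ ζ - b)) (ball 0 1) :=
    η.differentiable.comp_differentiableOn (hφ.differentiableOn.sub_const b)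
  have hre : ∀ x ∈ ball (0 : ℂ) 1, 0 ≤ (η (φ x - b)).re := fun x hx =>
    le_trans (by positivity) (hηs _ (subset_closure (hφ.mapsTo hx)))
  have key := harnack_of_re_nonneg hd hre hζ
  simp only [sub_zero, div_one, hφ.map_zero] at key
  have hζ1 : ‖ζ‖ < 1 := by simpa using hζ
  have h0 := hηs z (subset_closure hz)
  have h4 : (η (φ ζ - b)).re ≤ K * ‖φ ζ - b‖ :=
    (re_le_norm _).trans (η.le_of_opNorm_le hη _)
  have h5 : c * r ^ 2 ≤ c * ‖z - b‖ ^ 2 := by gcongr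
  rw [div_mul_eq_mul_div, div_mul_eq_mul_div, div_le_iff₀ (by positivity)]
  have h6 : c * r ^ 2 * (1 - ‖ζ‖) ≤ (η (z - b)).re * (1 - ‖ζ‖) := by
    have : 0 ≤ 1 - ‖ζ‖ := by linarith
    gcongr
    linarith
  have h7 : (1 + ‖ζ‖) * (η (φ ζ - b)).re ≤ 2 * (η (φ ζ - b)).re := by
    have := hre ζ hζ
    gcongr
    linarith
  nlinarith

theorem exists_ball_disc_subset (h : StronglyConvexAt Ω p ω) {z : E} (hz : z ∈ Ω) :
    ∃ a > (0 : ℝ), ∀ φ, IsDiscAt Ω z φ → ∀ ζ ∈ ball (0 : ℂ) 1,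
      ball (φ ζ) (a * (1 - ‖ζ‖)) ⊆ Ω := by
  obtain ⟨a, ha, hs⟩ := h.exists_ball_disc_subset_of_ball_subset
  obtain ⟨r, hr, hrΩ⟩ := Metric.isOpen_iff.mp h.isOpen z hz
  exact ⟨a * r ^ 2, by positivity, hs z r hr hrΩ⟩

end StronglyConvexAt

/-- The disc `φ` has slope at most `J` at the boundary point `p`, in the conormal direction `ω`. -/
def SlopeLE (ω : E →L[ℂ] ℂ) (p : E) (φ : ℂ → E) (J : ℝ) : Prop :=
  ∀ r ∈ Ico (0 : ℝ) 1, (ω (φ r - p)).re * ((1 + r) / (1 - r)) ≤ J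

theorem ofReal_mem_ball_of_mem_Ico {r : ℝ} (hr : r ∈ Ico (0 : ℝ) 1) : (r : ℂ) ∈ ball (0 : ℂ) 1 := by
  simp only [mem_ball, dist_zero_right, norm_real, Real.norm_of_nonneg hr.1]
  exact hr.2

namespace IsDiscAt

variable {Ω : Set E} {p z : E} {ω : E →L[ℂ] ℂ} {φ : ℂ → E}

theorem slopeLE_of_tendsto (hΩ : StronglyConvexAt Ω p ω) (hφ : IsDiscAt Ω z φ) {J : ℝ} {u : ℝ → ℝ}
    (hu : Tendsto u (𝓝[<] 1) (𝓝 J))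
    (hle : ∀ᶠ r : ℝ in 𝓝[<] 1, (ω (φ r - p)).re * ((1 + r) / (1 - r)) ≤ u r) :
    SlopeLE ω p φ J := by
  intro r hr
  refine ge_of_tendsto hu ?_
  filter_upwards [hle, Ioo_mem_nhdsLT hr.2] with r' h1 h2
  refine le_trans (re_mul_div_mono (h := fun ζ => ω (φ ζ - p)) ?_ ?_ hr.1 h2.1.le h2.2) h1
  · exact ω.differentiable.comp_differentiableOn (hφ.differentiableOn.sub_const p)
  · exact fun x hx => (hΩ.re_pos (hφ.mapsTo hx)).le

theorem re_le_of_slopeLE (hφ : IsDiscAt Ω z φ) {J : ℝ} (hJ : SlopeLE ω p φ J) :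
    (ω (z - p)).re ≤ J := by
  have := hJ 0 (by simp)
  simpa [hφ.map_zero] using this

theorem re_le_mul_of_slopeLE (hΩ : StronglyConvexAt Ω p ω) (hφ : IsDiscAt Ω z φ) {J : ℝ}
    (hJ : SlopeLE ω p φ J)
    {r : ℝ} (hr : r ∈ Ico (0 : ℝ) 1) : (ω (φ r - p)).re ≤ J * (1 - r) := by
  have h1 := hJ r hr
  have h2 : 0 < 1 - r := by linarith [hr.2]
  have h3 := hΩ.re_pos (hφ.mapsTo (ofReal_mem_ball_of_mem_Ico hr))
  rw [mul_div_assoc', div_le_iff₀ h2] at h1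
  nlinarith [hr.1]

theorem exists_norm_sub_sq_le (hΩ : StronglyConvexAt Ω p ω) : ∃ C > 0, ∀ φ : ℂ → E, ∀ J,
    IsDiscAt Ω z φ → SlopeLE ω p φ J →
    ∀ r ∈ Ico (0 : ℝ) 1, ‖φ r - p‖ ^ 2 ≤ C * J * (1 - r) := by
  obtain ⟨c, hc, hs⟩ := hΩ.support_at
  refine ⟨c⁻¹, by positivity, fun φ J hφ hJ r hr => ?_⟩
  have h1 := hs _ (subset_closure (hφ.mapsTo (ofReal_mem_ball_of_mem_Ico hr)))
  have h2 := re_le_mul_of_slopeLE hΩ hφ hJ hr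
  rw [mul_assoc, ← div_eq_inv_mul, le_div_iff₀ hc]
  linarith

end IsDiscAt

end Discs

section ExtremalDisc

variable {E : Type*} [NormedAddCommGroup E] [NormedSpace ℂ E]

theorem mul_one_add_div_two_mem_ball {ζ : ℂ} (hζ : ζ ∈ ball (0 : ℂ) 1) :
    ζ * (1 + ζ) / 2 ∈ ball (0 : ℂ) 1 ∧ ‖1 - ζ‖ ^ 2 / 8 ≤ 1 - ‖ζ * (1 + ζ) / 2‖ := by
  have h1 : ‖ζ‖ < 1 := by simpa using hζ
  have h2 : ‖1 + ζ‖ ≤ 1 + ‖ζ‖ := (norm_add_le _ _).trans (by simp)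
  have h3 : ‖ζ * (1 + ζ) / 2‖ = ‖ζ‖ * ‖1 + ζ‖ / 2 := by simp
  have h4 := parallelogram_law_with_norm ℝ (1 : ℂ) ζ
  rw [norm_one] at h4
  have h5 := norm_nonneg (1 + ζ)
  have h6 := norm_nonneg ζ
  rw [mem_ball, dist_zero_right, h3]
  constructor <;> nlinarith

/-- The points which are centres of discs of finite slope at `p`. -/
def finiteSlopeCentres (Ω : Set E) (p : E) (ω : E →L[ℂ] ℂ) : Set E :=
  {z | ∃ φ J, IsDiscAt Ω z φ ∧ SlopeLE ω p φ J}

namespace StronglyConvexAt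

variable {Ω : Set E} {p : E} {ω : E →L[ℂ] ℂ}

theorem slopeLE_of_le_mul (hΩ : StronglyConvexAt Ω p ω) {φ : ℂ → E} {z : E} (hφ : IsDiscAt Ω z φ)
    {J : ℝ} (hJ : ∀ r ∈ Ico (0 : ℝ) 1, (ω (φ r - p)).re ≤ J * (1 - r)) :
    SlopeLE ω p φ (2 * J) := by
  intro r hr
  have h2 : 0 < 1 - r := by linarith [hr.2]
  have h3 := hΩ.re_pos (hφ.mapsTo (ofReal_mem_ball_of_mem_Ico hr))
  rw [mul_div_assoc', div_le_iff₀ h2]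
  have := hJ r hr
  nlinarith [hr.1, hr.2]

theorem finiteSlopeCentres_subset : finiteSlopeCentres Ω p ω ⊆ Ω := by
  rintro z ⟨φ, J, hφ, -⟩
  rw [← hφ.map_zero]
  exact hφ.mapsTo (by simp)

theorem exists_ball_subset_finiteSlopeCentres (hΩ : StronglyConvexAt Ω p ω) {z : E} (hz : z ∈ Ω) :
    ∃ δ > 0, ∀ y ∈ ball z δ, y ∈ finiteSlopeCentres Ω p ω →
      ball y δ ⊆ finiteSlopeCentres Ω p ω := by
  obtain ⟨a, ha, hs⟩ := hΩ.exists_ball_disc_subset_of_ball_subset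
  obtain ⟨r, hr, hrΩ⟩ := Metric.isOpen_iff.mp hΩ.isOpen z hz
  refine ⟨min (r / 2) (a * (r / 2) ^ 2 / 8), by positivity, ?_⟩
  rintro y hy ⟨φ, J, hφ, hJ⟩ w hw
  have hyr : ball y (r / 2) ⊆ Ω := by
    refine (ball_subset_ball' ?_).trans hrΩ
    have := (mem_ball.mp hy).le.trans (min_le_left _ _)
    linarith
  have hwy : ‖w - y‖ < a * (r / 2) ^ 2 / 8 := by
    rw [← dist_eq_norm]; exact (mem_ball.mp hw).trans_le (min_le_right _ _)
  set ψ : ℂ → E := fun ζ => φ (ζ * (1 + ζ) / 2) + (1 - ζ) ^ 2 • (w - y) with hψ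
  have hψd : IsDiscAt Ω w ψ := by
    refine ⟨?_, ?_, ?_⟩
    · refine DifferentiableOn.add ?_ (by fun_prop)
      exact hφ.differentiableOn.comp (by fun_prop) fun ζ hζ => (mul_one_add_div_two_mem_ball hζ).1
    · intro ζ hζ
      obtain ⟨h1, h2⟩ := mul_one_add_div_two_mem_ball hζ
      refine hs y (r / 2) (by positivity) hyr φ hφ _ h1 ?_
      simp only [hψ, mem_ball, dist_eq_norm, add_sub_cancel_left, norm_smul, norm_pow]
      have hne : 0 < ‖1 - ζ‖ := by
        rw [norm_pos_iff, sub_ne_zero]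
        rintro rfl
        simp at hζ
      calc ‖1 - ζ‖ ^ 2 * ‖w - y‖ < ‖1 - ζ‖ ^ 2 * (a * (r / 2) ^ 2 / 8) := by gcongr
        _ = a * (r / 2) ^ 2 * (‖1 - ζ‖ ^ 2 / 8) := by ring
        _ ≤ _ := by gcongr
    · simp [hψ, hφ.map_zero]
  refine ⟨ψ, _, hψd, hΩ.slopeLE_of_le_mul hψd (J := J * (3 / 2) + ‖ω (w - y)‖) fun t ht => ?_⟩
  have hm : t * (1 + t) / 2 ∈ Ico (0 : ℝ) 1 := by
    constructor
    · have := ht.1; positivity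
    · nlinarith [ht.1, ht.2]
  have h1 := hφ.re_le_mul_of_slopeLE hΩ hJ hm
  have hJ0 : 0 ≤ J := (hΩ.re_pos (hyr (mem_ball_self (by positivity)))).le.trans
    (hφ.re_le_of_slopeLE hJ)
  have h2 : (ω (ψ t - p)).re
      = (ω (φ ((t * (1 + t) / 2 : ℝ) : ℂ) - p)).re + (1 - t) ^ 2 * (ω (w - y)).re := by
    have : ψ t - p = (φ ((t * (1 + t) / 2 : ℝ) : ℂ) - p) + (((1 - t) ^ 2 : ℝ) : ℂ) • (w - y) := by
      simp only [hψ]; push_cast; abel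
    rw [this, map_add, map_smul, add_re, smul_eq_mul, re_ofReal_mul]
  rw [h2]
  have h3 : (1 - t) ^ 2 * (ω (w - y)).re ≤ (1 - t) * ‖ω (w - y)‖ := by
    have h4 := re_le_norm (ω (w - y))
    have h5 : (1 - t) ^ 2 ≤ 1 - t := by nlinarith [ht.1, ht.2]
    calc _ ≤ (1 - t) ^ 2 * ‖ω (w - y)‖ := by gcongr
      _ ≤ _ := by gcongr
  have h6 : J * (1 - t * (1 + t) / 2) ≤ J * (3 / 2) * (1 - t) := by
    rw [mul_assoc]
    gcongr
    nlinarith [ht.1, ht.2]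
  linarith

theorem finiteSlopeCentres_nonempty (hΩ : StronglyConvexAt Ω p ω) {z : E} (hz : z ∈ Ω) :
    (finiteSlopeCentres Ω p ω).Nonempty := by
  obtain ⟨ν, hν⟩ : ∃ ν, ω ν = 1 := by
    have hne : ω (z - p) ≠ 0 := fun e => by
      have := hΩ.re_pos hz
      simp [e] at this
    exact ⟨(ω (z - p))⁻¹ • (z - p), by rw [map_smul, smul_eq_mul, inv_mul_cancel₀ hne]⟩
  obtain ⟨C, hC, hm⟩ := hΩ.mem_of_lt
  obtain ⟨t, ht0, ht⟩ : ∃ t > (0 : ℝ), C * (t * ‖ν‖ ^ 2) * 2 < 1 :=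
    ⟨1 / (2 * (C * ‖ν‖ ^ 2 + 1)), by positivity, by field_simp; linarith⟩
  have hd : IsDiscAt Ω (p + (t : ℂ) • ν) fun ζ => p + ((t : ℂ) * (1 - ζ)) • ν := by
    refine ⟨by fun_prop, fun ζ hζ => hm _ ?_, by simp⟩
    simp only [add_sub_cancel_left, map_smul, hν, norm_smul, norm_mul, norm_real,
      Real.norm_of_nonneg ht0.le, smul_eq_mul, mul_one, re_ofReal_mul]
    have h1 : ‖ζ‖ < 1 := by simpa using hζ
    have h2 : ‖1 - ζ‖ ^ 2 ≤ 2 * (1 - ζ).re := by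
      have h3 : ‖ζ‖ ^ 2 ≤ 1 := by nlinarith [norm_nonneg ζ]
      rw [← normSq_eq_norm_sq, normSq_apply] at h3 ⊢
      simp only [sub_re, sub_im, one_re, one_im]
      nlinarith
    have h4 : 0 < (1 - ζ).re := by
      have := (re_le_norm ζ).trans_lt h1
      simp only [sub_re, one_re]; linarith
    calc C * (t * ‖1 - ζ‖ * ‖ν‖) ^ 2 = t * (C * (t * ‖ν‖ ^ 2)) * ‖1 - ζ‖ ^ 2 := by ring
      _ ≤ t * (C * (t * ‖ν‖ ^ 2)) * (2 * (1 - ζ).re) := by gcongr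
      _ = t * (1 - ζ).re * (C * (t * ‖ν‖ ^ 2) * 2) := by ring
      _ < t * (1 - ζ).re * 1 := by gcongr
      _ = _ := mul_one _
  refine ⟨_, _, _, hd, hΩ.slopeLE_of_le_mul hd (J := t) fun r _ => le_of_eq ?_⟩
  simp [hν]

theorem mem_finiteSlopeCentres (hΩ : StronglyConvexAt Ω p ω) {z : E} (hz : z ∈ Ω) :
    z ∈ finiteSlopeCentres Ω p ω := by
  have hopen : IsOpen (finiteSlopeCentres Ω p ω) := by
    refine Metric.isOpen_iff.mpr fun y hy => ?_
    obtain ⟨δ, hδ, h⟩ := hΩ.exists_ball_subset_finiteSlopeCentres (finiteSlopeCentres_subset hy)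
    exact ⟨δ, hδ, h y (mem_ball_self hδ) hy⟩
  refine hΩ.convex.isPreconnected.subset_of_closure_inter_subset hopen ?_ ?_ hz
  · obtain ⟨y, hy⟩ := hΩ.finiteSlopeCentres_nonempty hz
    exact ⟨y, finiteSlopeCentres_subset hy, hy⟩
  · rintro y ⟨hyc, hy⟩
    obtain ⟨δ, hδ, h⟩ := hΩ.exists_ball_subset_finiteSlopeCentres hy
    obtain ⟨w, hw, hyw⟩ := Metric.mem_closure_iff.mp hyc δ hδ
    exact h w (by rwa [mem_ball, dist_comm]) hw hyw

/-- Among all discs centred at `z` there is one of minimal slope at `p`. -/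
theorem exists_minimal_disc [FiniteDimensional ℂ E] (hΩ : StronglyConvexAt Ω p ω) {z : E}
    (hz : z ∈ Ω) : ∃ φ J, IsDiscAt Ω z φ ∧ SlopeLE ω p φ J ∧
      ∀ ψ J', IsDiscAt Ω z ψ → SlopeLE ω p ψ J' → J ≤ J' := by
  have : ProperSpace E := FiniteDimensional.proper ℂ E
  set S : Set ℝ := {J | ∃ φ, IsDiscAt Ω z φ ∧ SlopeLE ω p φ J} with hS
  have hne : S.Nonempty := by
    obtain ⟨φ, J, h⟩ := hΩ.mem_finiteSlopeCentres hz
    exact ⟨J, φ, h⟩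
  have hbdd : BddBelow S := ⟨(ω (z - p)).re, by
    rintro J ⟨φ, hφ, hJ⟩
    exact hφ.re_le_of_slopeLE hJ⟩
  obtain ⟨J, -, hJtend, hJS⟩ := exists_seq_tendsto_sInf hne hbdd
  choose φ hφ hφJ using hJS
  obtain ⟨R, hR, hb⟩ := hΩ.bounded
  obtain ⟨a, ha, hs⟩ := hΩ.exists_ball_disc_subset hz
  obtain ⟨g, hgd, hg, -⟩ := exists_holomorphic_ultralimit (U := ball (0 : ℂ) 1) (f := φ)
    (hyperfilter ℕ) (fun x hx => by
      obtain ⟨δ, hδ, hsub⟩ := Metric.isOpen_iff.mp isOpen_ball x hx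
      exact ⟨δ, hδ, R, Eventually.of_forall fun j =>
        ⟨(hφ j).differentiableOn.mono hsub, fun y hy => hb _ ((hφ j).mapsTo (hsub hy))⟩⟩)
    isOpen_ball
  have hgD : IsDiscAt Ω z g := by
    refine ⟨hgd, fun ζ hζ => ?_, ?_⟩
    · have h1 : 0 < a * (1 - ‖ζ‖) := by
        have : ‖ζ‖ < 1 := by simpa using hζ
        have : 0 < 1 - ‖ζ‖ := by linarith
        positivity
      obtain ⟨j, hj⟩ := ((hg ζ hζ).eventually (ball_mem_nhds _ h1)).exists
      exact hs _ (hφ j) ζ hζ (by rwa [mem_ball, dist_comm])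
    · have h0 := hg 0 (by simp)
      simp only [(hφ _).map_zero] at h0
      exact (tendsto_nhds_unique h0 tendsto_const_nhds)
  refine ⟨g, sInf S, hgD, fun r hr => ?_, fun ψ J' hψ hJ' => csInf_le hbdd ⟨ψ, hψ, hJ'⟩⟩
  have h1 : Tendsto (fun j => (ω (φ j r - p)).re * ((1 + r) / (1 - r))) (hyperfilter ℕ)
      (𝓝 ((ω (g r - p)).re * ((1 + r) / (1 - r)))) := by
    refine Tendsto.mul_const _ ((continuous_re.tendsto _).comp ((ω.continuous.tendsto _).comp ?_))
    exact (hg r (ofReal_mem_ball_of_mem_Ico hr)).sub_const p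
  exact le_of_tendsto_of_tendsto' h1 (hJtend.mono_left Nat.hyperfilter_le_atTop)
    fun j => hφJ j r hr

end StronglyConvexAt

end ExtremalDisc

section Uniqueness

variable {E : Type*} [NormedAddCommGroup E] [NormedSpace ℂ E]

theorem exists_eq_pow_mul_of_ne_zero {g : ℂ → ℂ} (hg : DifferentiableOn ℂ g (ball 0 1)) {w : ℂ}
    (hw : w ∈ ball (0 : ℂ) 1) (hgw : g w ≠ 0) :
    ∃ N : ℕ, ∃ h : ℂ → ℂ, DifferentiableOn ℂ h (ball 0 1) ∧ h 0 ≠ 0 ∧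
      ∀ ζ ∈ ball (0 : ℂ) 1, g ζ = ζ ^ N * h ζ := by
  have h0 : (0 : ℂ) ∈ ball (0 : ℂ) 1 := by simp
  have hA : AnalyticOnNhd ℂ g (ball 0 1) := hg.analyticOnNhd isOpen_ball
  have hne : ¬ ∀ᶠ z in 𝓝 (0 : ℂ), g z = 0 := fun he => hgw <|
    hA.eqOn_zero_of_preconnected_of_eventuallyEq_zero (convex_ball 0 1).isPreconnected h0 he hw
  obtain ⟨N, k, hk, hk0, hgk⟩ := (hA 0 h0).exists_eventuallyEq_pow_smul_nonzero_iff.mpr hne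
  simp only [sub_zero, smul_eq_mul] at hgk
  set h : ℂ → ℂ := fun ζ => if ζ = 0 then k 0 else g ζ / ζ ^ N with hh
  have heq : h =ᶠ[𝓝 0] k := by
    filter_upwards [hgk] with ζ hζ
    by_cases hz : ζ = 0
    · simp [hh, hz]
    · simp only [hh, hz, if_false, hζ]
      field_simp
  have hne' : ∀ ζ, ζ ≠ 0 → h ζ = g ζ / ζ ^ N := fun ζ hζ => by simp [hh, hζ]
  refine ⟨N, h, fun ζ hζ => ?_, by simpa [hh] using hk0, fun ζ hζ => ?_⟩
  · refine DifferentiableAt.differentiableWithinAt ?_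
    by_cases hz : ζ = 0
    · rw [hz]
      exact hk.differentiableAt.congr_of_eventuallyEq heq
    · have : (fun ζ => g ζ / ζ ^ N) =ᶠ[𝓝 ζ] h := by
        filter_upwards [isOpen_ne.mem_nhds hz] with y hy using (hne' y hy).symm
      refine DifferentiableAt.congr_of_eventuallyEq ?_ this.symm
      exact (hg.differentiableAt (isOpen_ball.mem_nhds hζ)).div (by fun_prop) (pow_ne_zero _ hz)
  · by_cases hz : ζ = 0
    · subst hz
      rw [hgk.self_of_nhds]
      simp [hh]
    · rw [hne' ζ hz]
      field_simp

/-- A nonzero holomorphic function can be divided by a power of the coordinate and normalized so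
as to take the value `1` at the origin. -/
theorem exists_normalized_factor {g : ℂ → ℂ} (hg : DifferentiableOn ℂ g (ball 0 1)) {w : ℂ}
    (hw : w ∈ ball (0 : ℂ) 1) (hgw : g w ≠ 0) :
    ∃ k : ℂ → ℂ, DifferentiableOn ℂ k (ball 0 1) ∧ k 0 = 1 ∧
      (∃ C > 0, ∀ ζ ∈ ball (0 : ℂ) 1, 1 / 2 ≤ ‖ζ‖ → ‖k ζ‖ ≤ C * ‖g ζ‖) ∧
      ∃ B > 0, ∀ ζ, ‖ζ‖ ≤ 1 / 2 → ‖k ζ‖ ≤ B := by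
  obtain ⟨N, h, hd, h0, hgh⟩ := exists_eq_pow_mul_of_ne_zero hg hw hgw
  have hkd : DifferentiableOn ℂ (fun ζ => h ζ / h 0) (ball 0 1) := hd.div_const _
  refine ⟨fun ζ => h ζ / h 0, hkd, div_self h0,
    ⟨2 ^ N / ‖h 0‖, by positivity, fun ζ hζ h2 => ?_⟩, ?_⟩
  · have h3 : 1 ≤ 2 ^ N * ‖ζ‖ ^ N := by
      rw [← mul_pow]
      exact one_le_pow₀ (by linarith)
    rw [hgh ζ hζ, norm_div, norm_mul, norm_pow, div_mul_eq_mul_div]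
    gcongr
    nlinarith [norm_nonneg (h ζ)]
  · have hsub : closedBall (0 : ℂ) (1 / 2) ⊆ ball 0 1 := closedBall_subset_ball (by norm_num)
    obtain ⟨B, hB⟩ := (isCompact_closedBall (0 : ℂ) (1 / 2)).exists_bound_of_continuousOn
      (hkd.continuousOn.mono hsub)
    refine ⟨max B 1, by positivity, fun ζ hζ => (hB ζ (by simpa using hζ)).trans (le_max_left _ _)⟩

namespace StronglyConvexAt

variable {Ω : Set E} {p : E} {ω : E →L[ℂ] ℂ}

theorem isDiscAt_midpoint (hΩ : StronglyConvexAt Ω p ω) {z : E} {φ₁ φ₂ : ℂ → E}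
    (h₁ : IsDiscAt Ω z φ₁) (h₂ : IsDiscAt Ω z φ₂) :
    IsDiscAt Ω z fun ζ => (2⁻¹ : ℂ) • (φ₁ ζ + φ₂ ζ) := by
  refine ⟨(h₁.differentiableOn.add h₂.differentiableOn).const_smul _, fun ζ hζ => ?_, ?_⟩
  · have := hΩ.segment _ (h₁.mapsTo hζ) _ (h₂.mapsTo hζ) (1 / 2) (by norm_num)
    convert this using 1
    push_cast
    module
  · simp only [h₁.map_zero, h₂.map_zero]
    module

/-- The disc of minimal slope is unique. -/
theorem eqOn_of_minimal_disc (hΩ : StronglyConvexAt Ω p ω) {z : E} {φ₁ φ₂ : ℂ → E} {J : ℝ}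
    (h₁ : IsDiscAt Ω z φ₁) (h₂ : IsDiscAt Ω z φ₂) (hJ₁ : SlopeLE ω p φ₁ J)
    (hJ₂ : SlopeLE ω p φ₂ J) (hmin : ∀ ψ J', IsDiscAt Ω z ψ → SlopeLE ω p ψ J' → J ≤ J') :
    EqOn φ₁ φ₂ (ball 0 1) := by
  intro w hw
  by_contra hne
  have hz : z ∈ Ω := h₁.map_zero ▸ h₁.mapsTo (by simp)
  have hJ0 : 0 < J := (hΩ.re_pos hz).trans_le (h₁.re_le_of_slopeLE hJ₁)
  obtain ⟨ℓ, hℓ1, hℓ⟩ := exists_dual_vector ℂ (φ₁ w - φ₂ w)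
    (norm_ne_zero_iff.mpr (sub_ne_zero.mpr hne))
  have hℓw : ℓ (φ₁ w - φ₂ w) ≠ 0 := by
    rw [hℓ]; simpa [sub_eq_zero] using hne
  obtain ⟨k, hkd, hk0, ⟨C, hC, hkC⟩, B, hB, hkB⟩ := exists_normalized_factor
    (g := fun ζ => ℓ (φ₁ ζ - φ₂ ζ)) (ℓ.differentiable.comp_differentiableOn
      (h₁.differentiableOn.sub h₂.differentiableOn)) hw hℓw
  replace hkC : ∀ ζ ∈ ball (0 : ℂ) 1, 1 / 2 ≤ ‖ζ‖ → ‖k ζ‖ ≤ C * ‖φ₁ ζ - φ₂ ζ‖ :=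
    fun ζ hζ h => (hkC ζ hζ h).trans (by
      gcongr
      simpa [hℓ1] using ℓ.le_opNorm (φ₁ ζ - φ₂ ζ))
  obtain ⟨c, hc, hcm⟩ := hΩ.exists_ball_midpoint_subset
  obtain ⟨a, ha, had⟩ := hΩ.exists_ball_disc_subset hz
  set φ : ℂ → E := fun ζ => (2⁻¹ : ℂ) • (φ₁ ζ + φ₂ ζ) with hφ
  have hφD : IsDiscAt Ω z φ := hΩ.isDiscAt_midpoint h₁ h₂
  set u : E := z - p with hu
  obtain ⟨ε, hε, hε1, hε2⟩ : ∃ ε > (0 : ℝ), ε * (C ^ 2 * 2 * ‖u‖) < c ∧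
      ε * (B ^ 2 * 2 * ‖u‖) < a / 2 := by
    have e1 : ∀ᶠ ε in 𝓝[>] (0 : ℝ), ε * (C ^ 2 * 2 * ‖u‖) < c := by
      refine nhdsWithin_le_nhds
        (Tendsto.eventually_lt_const (v := 0 * (C ^ 2 * 2 * ‖u‖)) (by simpa) ?_)
      exact tendsto_id.mul_const _
    have e2 : ∀ᶠ ε in 𝓝[>] (0 : ℝ), ε * (B ^ 2 * 2 * ‖u‖) < a / 2 := by
      refine nhdsWithin_le_nhds (Tendsto.eventually_lt_const (v := 0 * (B ^ 2 * 2 * ‖u‖))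
        (by simpa) ?_)
      exact tendsto_id.mul_const _
    obtain ⟨ε, h⟩ := (e1.and (e2.and self_mem_nhdsWithin)).exists
    exact ⟨ε, h.2.2, h.1, h.2.1⟩
  set f : ℂ → E := fun ζ => ((ε : ℂ) * (k ζ ^ 2 * (1 - ζ))) • u with hf
  have hfn : ∀ ζ ∈ ball (0 : ℂ) 1, ‖f ζ‖ ≤ ε * (‖k ζ‖ ^ 2 * 2 * ‖u‖) := by
    intro ζ hζ
    have h1 : ‖ζ‖ < 1 := by simpa using hζ
    have h2 : ‖1 - ζ‖ ≤ 2 := (norm_sub_le _ _).trans (by rw [norm_one]; linarith)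
    simp only [hf, norm_smul, norm_mul, norm_pow, norm_real, Real.norm_of_nonneg hε.le]
    calc ε * (‖k ζ‖ ^ 2 * ‖1 - ζ‖) * ‖u‖ ≤ ε * (‖k ζ‖ ^ 2 * 2) * ‖u‖ := by gcongr
      _ = _ := by ring
  have hmem : ∀ ζ ∈ ball (0 : ℂ) 1, φ ζ + f ζ ∈ Ω := by
    intro ζ hζ
    rcases le_total ‖ζ‖ (1 / 2) with h | h
    · refine had φ hφD ζ hζ ?_
      rw [mem_ball, dist_eq_norm, add_sub_cancel_left]
      calc ‖f ζ‖ ≤ ε * (‖k ζ‖ ^ 2 * 2 * ‖u‖) := hfn ζ hζ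
        _ ≤ ε * (B ^ 2 * 2 * ‖u‖) := by gcongr; exact hkB ζ h
        _ < a / 2 := hε2
        _ ≤ a * (1 - ‖ζ‖) := by nlinarith
    · have hk := hkC ζ hζ h
      by_cases he : φ₁ ζ = φ₂ ζ
      · have : k ζ = 0 := by simpa [he] using hk
        have : f ζ = 0 := by simp [hf, this]
        rw [this, add_zero]
        exact hφD.mapsTo hζ
      · refine hcm _ (h₁.mapsTo hζ) _ (h₂.mapsTo hζ) ?_
        rw [mem_ball, dist_eq_norm, add_sub_cancel_left]
        have hpos : 0 < ‖φ₁ ζ - φ₂ ζ‖ := norm_pos_iff.mpr (sub_ne_zero.mpr he)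
        calc ‖f ζ‖ ≤ ε * (‖k ζ‖ ^ 2 * 2 * ‖u‖) := hfn ζ hζ
          _ ≤ ε * ((C * ‖φ₁ ζ - φ₂ ζ‖) ^ 2 * 2 * ‖u‖) := by gcongr
          _ = ε * (C ^ 2 * 2 * ‖u‖) * ‖φ₁ ζ - φ₂ ζ‖ ^ 2 := by ring
          _ < c * ‖φ₁ ζ - φ₂ ζ‖ ^ 2 := by gcongr
  set ψ : ℂ → E := fun ζ => p + (((1 + ε)⁻¹ : ℝ) : ℂ) • (φ ζ + f ζ - p) with hψ
  have hψD : IsDiscAt Ω z ψ := by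
    refine ⟨?_, fun ζ hζ => hΩ.starlike (hmem ζ hζ) (by positivity)
      (inv_le_one_of_one_le₀ (by linarith)), ?_⟩
    · refine (((hφD.differentiableOn.add ?_).sub_const p).const_smul _).const_add p
      exact (((hkd.pow 2).mul (by fun_prop)).const_mul _).smul_const u
    · have hne : (1 + ε : ℂ) ≠ 0 := by
        rw [← ofReal_one, ← ofReal_add]; exact ofReal_ne_zero.mpr (by positivity)
      simp only [hψ, hf, hk0, hφD.map_zero, sub_zero, one_pow, mul_one, hu]
      push_cast
      rw [show z + (ε : ℂ) • (z - p) - p = (1 + ε : ℂ) • (z - p) by module, smul_smul,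
        inv_mul_cancel₀ hne, one_smul, add_sub_cancel]
  obtain ⟨D, hD, hDn⟩ := IsDiscAt.exists_norm_sub_sq_le (z := z) hΩ
  have hkr : ∀ r ∈ Ico (1 / 2 : ℝ) 1, ‖k r‖ ^ 2 ≤ C ^ 2 * (4 * (D * J)) * (1 - r) := by
    intro r hr
    have hr' : r ∈ Ico (0 : ℝ) 1 := ⟨by linarith [hr.1], hr.2⟩
    have h3 := hkC r (ofReal_mem_ball_of_mem_Ico hr') (by
      rw [norm_real, Real.norm_of_nonneg hr'.1]; exact hr.1)
    have h4 := hDn φ₁ J h₁ hJ₁ r hr'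
    have h5 := hDn φ₂ J h₂ hJ₂ r hr'
    have h6 : ‖φ₁ r - φ₂ r‖ ≤ ‖φ₁ r - p‖ + ‖φ₂ r - p‖ := by
      rw [show φ₁ r - φ₂ r = (φ₁ r - p) - (φ₂ r - p) by abel]; exact norm_sub_le _ _
    have h7 : ‖φ₁ r - φ₂ r‖ ^ 2 ≤ 4 * (D * J) * (1 - r) := by
      nlinarith [norm_nonneg (φ₁ r - φ₂ r), sq_nonneg (‖φ₁ r - p‖ - ‖φ₂ r - p‖)]
    calc ‖k r‖ ^ 2 ≤ (C * ‖φ₁ r - φ₂ r‖) ^ 2 := by gcongr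
      _ = C ^ 2 * ‖φ₁ r - φ₂ r‖ ^ 2 := by ring
      _ ≤ _ := by rw [mul_assoc (C ^ 2)]; gcongr
  set K : ℝ := 2 * ε * ‖ω u‖ * (C ^ 2 * (4 * (D * J))) with hK
  have hslope : SlopeLE ω p ψ ((1 + ε)⁻¹ * (J + K * (1 - 1))) := by
    refine hψD.slopeLE_of_tendsto hΩ (u := fun r => (1 + ε)⁻¹ * (J + K * (1 - r))) ?_ ?_
    · exact (Continuous.tendsto (by fun_prop) _).mono_left nhdsWithin_le_nhds
    · filter_upwards [Ico_mem_nhdsLT (show (1 / 2 : ℝ) < 1 by norm_num)] with r hr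
      have hr' : r ∈ Ico (0 : ℝ) 1 := ⟨by linarith [hr.1], hr.2⟩
      have hr1 : 0 < 1 - r := by linarith [hr.2]
      have e1 : (ω (ψ r - p)).re = (1 + ε)⁻¹ * (((ω (φ₁ r - p)).re + (ω (φ₂ r - p)).re) / 2
          + ε * (k r ^ 2 * ω u).re * (1 - r)) := by
        have : ψ r - p = (((1 + ε)⁻¹ : ℝ) : ℂ) • ((((1 / 2 : ℝ)) : ℂ) • ((φ₁ r - p) + (φ₂ r - p))
            + ((ε * (1 - r) : ℝ) : ℂ) • (k r ^ 2 • u)) := by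
          simp only [hψ, hφ, hf]
          push_cast
          module
        rw [this]
        simp only [map_smul, map_add, smul_eq_mul, re_ofReal_mul, add_re]
        ring
      have e2 := hJ₁ r hr'
      have e3 := hJ₂ r hr'
      have e4 : (k r ^ 2 * ω u).re * (1 + r) ≤ 2 * ‖ω u‖ * (C ^ 2 * (4 * (D * J)) * (1 - r)) := by
        have := (re_le_norm (k r ^ 2 * ω u))
        rw [norm_mul, norm_pow] at this
        calc _ ≤ (‖k r‖ ^ 2 * ‖ω u‖) * 2 := by
              apply mul_le_mul this (by linarith [hr.2]) (by linarith [hr'.1]) (by positivity)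
          _ ≤ (C ^ 2 * (4 * (D * J)) * (1 - r) * ‖ω u‖) * 2 := by
            gcongr
            exact hkr r hr
          _ = _ := by ring
      rw [e1, mul_assoc]
      gcongr
      have e5 : (((ω (φ₁ r - p)).re + (ω (φ₂ r - p)).re) / 2
          + ε * (k r ^ 2 * ω u).re * (1 - r)) * ((1 + r) / (1 - r))
          = ((ω (φ₁ r - p)).re * ((1 + r) / (1 - r)) + (ω (φ₂ r - p)).re * ((1 + r) / (1 - r))) / 2
            + ε * ((k r ^ 2 * ω u).re * (1 + r)) := by
        field_simp
      rw [e5]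
      have e6 := mul_le_mul_of_nonneg_left e4 hε.le
      rw [hK]
      linarith
  have := hmin ψ _ hψD hslope
  rw [sub_self, mul_zero, add_zero, ← div_eq_inv_mul, le_div_iff₀ (by positivity)] at this
  nlinarith

/-- A disc through `z` and `p` which is fixed pointwise by a self-map fixing `z` and osculating
the identity at `p`. -/
theorem exists_fixed_disc [FiniteDimensional ℂ E] (hΩ : StronglyConvexAt Ω p ω) {z : E}
    (hz : z ∈ Ω) {F : E → E} (hF : DifferentiableOn ℂ F Ω) (hmaps : MapsTo F Ω Ω) (hfix : F z = z)
    (ho : Tendsto (fun x => ‖F x - x‖ / ‖x - p‖ ^ 2) (𝓝[Ω] p) (𝓝 0)) :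
    ∃ φ J, IsDiscAt Ω z φ ∧ SlopeLE ω p φ J ∧ ∀ ζ ∈ ball (0 : ℂ) 1, F (φ ζ) = φ ζ := by
  obtain ⟨φ, J, hφ, hJ, hmin⟩ := hΩ.exists_minimal_disc hz
  have hFφ : IsDiscAt Ω z fun ζ => F (φ ζ) :=
    ⟨hF.comp hφ.differentiableOn hφ.mapsTo, fun ζ hζ => hmaps (hφ.mapsTo hζ),
      by simp only [hφ.map_zero, hfix]⟩
  refine ⟨φ, J, hφ, hJ, ?_⟩
  refine hΩ.eqOn_of_minimal_disc hFφ hφ ?_ hJ hmin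
  obtain ⟨D, hD, hDn⟩ := IsDiscAt.exists_norm_sub_sq_le (z := z) hΩ
  have hDφ := hDn φ J hφ hJ
  have hIco : ∀ᶠ r in 𝓝[<] (1 : ℝ), r ∈ Ico (0 : ℝ) 1 := Ico_mem_nhdsLT one_pos
  have htend : Tendsto (fun r : ℝ => φ r) (𝓝[<] 1) (𝓝[Ω] p) := by
    refine tendsto_nhdsWithin_iff.mpr ⟨?_, ?_⟩
    · rw [tendsto_iff_norm_sub_tendsto_zero]
      have h1 : Tendsto (fun r : ℝ => √(D * J * (1 - r))) (𝓝[<] 1) (𝓝 (√(D * J * (1 - 1)))) :=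
        (Continuous.tendsto (by fun_prop) _).mono_left nhdsWithin_le_nhds
      rw [sub_self, mul_zero, Real.sqrt_zero] at h1
      refine squeeze_zero' (Eventually.of_forall fun _ => norm_nonneg _) ?_ h1
      filter_upwards [hIco] with r hr
      exact Real.le_sqrt_of_sq_le (hDφ r hr)
    · filter_upwards [hIco] with r hr using hφ.mapsTo (ofReal_mem_ball_of_mem_Ico hr)
  have ho' := ho.comp htend
  have hu : Tendsto (fun r : ℝ => J + 2 * ‖ω‖ * (D * J) * (‖F (φ r) - φ r‖ / ‖φ r - p‖ ^ 2))
      (𝓝[<] 1) (𝓝 J) := by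
    simpa using (ho'.const_mul (2 * ‖ω‖ * (D * J))).const_add J
  refine hFφ.slopeLE_of_tendsto hΩ hu ?_
  filter_upwards [hIco] with r hr
  have hr1 : 0 < 1 - r := by linarith [hr.2]
  have hne : 0 < ‖φ r - p‖ := norm_pos_iff.mpr <| sub_ne_zero.mpr fun e =>
    hΩ.notMem (e ▸ hφ.mapsTo (ofReal_mem_ball_of_mem_Ico hr))
  have e1 : (ω (F (φ r) - p)).re ≤ (ω (φ r - p)).re + ‖ω‖ * ‖F (φ r) - φ r‖ := by
    rw [show F (φ r) - p = (φ r - p) + (F (φ r) - φ r) by abel, map_add, add_re]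
    gcongr
    exact (re_le_norm _).trans (ω.le_opNorm _)
  have e2 : ‖F (φ r) - φ r‖ ≤ D * J * (1 - r) * (‖F (φ r) - φ r‖ / ‖φ r - p‖ ^ 2) := by
    calc ‖F (φ r) - φ r‖ = ‖φ r - p‖ ^ 2 * (‖F (φ r) - φ r‖ / ‖φ r - p‖ ^ 2) := by field_simp
      _ ≤ _ := by gcongr; exact hDφ r hr
  have e3 : 0 ≤ (1 + r) / (1 - r) := div_nonneg (by linarith [hr.1]) hr1.le
  calc (ω (F (φ r) - p)).re * ((1 + r) / (1 - r))
      ≤ ((ω (φ r - p)).re + ‖ω‖ * ‖F (φ r) - φ r‖) * ((1 + r) / (1 - r)) := by gcongr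
    _ = (ω (φ r - p)).re * ((1 + r) / (1 - r)) + ‖ω‖ * ‖F (φ r) - φ r‖ * ((1 + r) / (1 - r)) := by
      ring
    _ ≤ J + ‖ω‖ * ‖F (φ r) - φ r‖ * (2 / (1 - r)) := by
      gcongr
      · exact hJ r hr
      · linarith [hr.2]
    _ ≤ J + ‖ω‖ * (D * J * (1 - r) * (‖F (φ r) - φ r‖ / ‖φ r - p‖ ^ 2)) * (2 / (1 - r)) := by
      gcongr
    _ = _ := by field_simp

end StronglyConvexAt

end Uniqueness

section Kernel

variable {E : Type*} [NormedAddCommGroup E] [NormedSpace ℂ E]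

/-- Two holomorphic maps on a convex open set which agree near a point are equal. -/
theorem eqOn_of_convex_of_eventuallyEq {F : Type*} [NormedAddCommGroup F] [NormedSpace ℂ F]
    [CompleteSpace F] {V : Set E} (hV : IsOpen V) (hc : Convex ℝ V) {f g : E → F}
    (hf : DifferentiableOn ℂ f V) (hg : DifferentiableOn ℂ g V) {a : E} (ha : a ∈ V)
    (hfg : f =ᶠ[𝓝 a] g) : EqOn f g V := by
  intro x hx
  set γ : ℂ → E := fun ζ => a + ζ • (x - a) with hγ
  have hγd : Differentiable ℂ γ := by fun_prop
  have hopen : IsOpen (γ ⁻¹' V) := hV.preimage hγd.continuous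
  have hconv : Convex ℝ (γ ⁻¹' V) := by
    intro ζ hζ ξ hξ s t hs ht hst
    have := hc hζ hξ hs ht hst
    simp only [mem_preimage, hγ] at this ⊢
    convert this using 1
    have e : a = (s + t) • a := by rw [hst, one_smul]
    nth_rewrite 1 [e]
    simp only [← Complex.coe_smul, smul_eq_mul]
    push_cast
    module
  have key : EqOn (f ∘ γ) (g ∘ γ) (γ ⁻¹' V) := by
    refine AnalyticOnNhd.eqOn_of_preconnected_of_eventuallyEq (z₀ := 0)
      ((hf.comp hγd.differentiableOn fun _ h => h).analyticOnNhd hopen)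
      ((hg.comp hγd.differentiableOn fun _ h => h).analyticOnNhd hopen)
      hconv.isPreconnected (by simpa [hγ] using ha) ?_
    have : Tendsto γ (𝓝 0) (𝓝 a) := by
      have := hγd.continuous.tendsto 0
      simpa [hγ] using this
    exact this.eventually hfg
  have := key (x := 1) (by simpa [hγ] using hx)
  simpa [hγ] using this

variable {ι : Type*} (𝒰 : Ultrafilter ι)

/-- The points having a neighbourhood contained in almost all of the sets `Ωs j`. -/
def ultraKernel (Ωs : ι → Set E) : Set E :=
  {x | ∃ R > 0, ∀ᶠ j in 𝒰, ball x R ⊆ Ωs j}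

variable {𝒰} {Ωs : ι → Set E}

theorem ultraKernel_of_subset_ball {E : Type*} [NormedAddCommGroup E] {Ωs : ι → Set E} {x y : E}
    {R r : ℝ} (hr : 0 < r) (hyx : ‖y - x‖ + r ≤ R)
    (h : ∀ᶠ j in 𝒰, ball x R ⊆ Ωs j) : y ∈ ultraKernel 𝒰 Ωs := by
  refine ⟨r, hr, ?_⟩
  filter_upwards [h] with j hj
  exact (ball_subset_ball' (by rw [dist_eq_norm]; linarith)).trans hj

theorem isOpen_ultraKernel {E : Type*} [NormedAddCommGroup E] {Ωs : ι → Set E} :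
    IsOpen (ultraKernel 𝒰 Ωs) := by
  refine Metric.isOpen_iff.mpr fun x ⟨R, hR, h⟩ => ⟨R / 2, by positivity, fun y hy => ?_⟩
  rw [mem_ball, dist_eq_norm] at hy
  exact ultraKernel_of_subset_ball (half_pos hR) (by linarith) h

theorem convex_ultraKernel (hc : ∀ j, Convex ℝ (Ωs j)) : Convex ℝ (ultraKernel 𝒰 Ωs) := by
  rintro x ⟨R, hR, hx⟩ y ⟨r, hr, hy⟩ s t hs ht hst
  refine ⟨min R r, lt_min hR hr, ?_⟩
  filter_upwards [hx, hy] with j hxj hyj w hw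
  set u := w - (s • x + t • y) with hu
  have hun : ‖u‖ < min R r := by rw [hu, ← dist_eq_norm]; exact hw
  have h1 : x + u ∈ Ωs j := hxj (by
    rw [mem_ball, dist_eq_norm, add_sub_cancel_left]; exact hun.trans_le (min_le_left _ _))
  have h2 : y + u ∈ Ωs j := hyj (by
    rw [mem_ball, dist_eq_norm, add_sub_cancel_left]; exact hun.trans_le (min_le_right _ _))
  have := hc j h1 h2 hs ht hst
  convert this using 1
  have e : w = s • x + t • y + (s + t) • u := by rw [hst, one_smul, hu]; abel
  rw [e]
  module

variable {ω : E →L[ℂ] ℂ} {ν : E} {C : ℝ}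

/-- Holomorphic self-maps with positive real part along `ω` which are bounded at one point of the
kernel are bounded, in the direction `ω`, at each point of the kernel. -/
theorem exists_eventually_norm_le_of_mem_ultraKernel {G : ι → E → E}
    (hc : ∀ j, Convex ℝ (Ωs j)) (hpos : ∀ j, ∀ x ∈ Ωs j, 0 < (ω x).re) (hν : ν ∈ ultraKernel 𝒰 Ωs)
    (hd : ∀ j, DifferentiableOn ℂ (G j) (Ωs j)) (hm : ∀ j, MapsTo (G j) (Ωs j) (Ωs j))
    {M : ℝ} (hM : ∀ᶠ j in 𝒰, ‖ω (G j ν)‖ ≤ M) {x : E} (hx : x ∈ ultraKernel 𝒰 Ωs) :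
    ∃ M, ∀ᶠ j in 𝒰, ‖ω (G j x)‖ ≤ M := by
  set W : Set E := {x | x ∈ ultraKernel 𝒰 Ωs ∧ ∃ M, ∀ᶠ j in 𝒰, ‖ω (G j x)‖ ≤ M} with hW
  have key : ∀ x ∈ ultraKernel 𝒰 Ωs, ∃ R > 0, ∀ y ∈ ball x R, y ∈ W → ball y R ⊆ W := by
    rintro x ⟨R, hR, hx⟩
    refine ⟨R / 4, by positivity, ?_⟩
    rintro y hy ⟨-, M, hM⟩ w hw
    rw [mem_ball, dist_eq_norm] at hy hw
    refine ⟨ultraKernel_of_subset_ball (x := x) (r := R / 2) (by positivity) ?_ hx, 3 * M, ?_⟩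
    · have : ‖w - x‖ ≤ ‖w - y‖ + ‖y - x‖ := norm_sub_le_norm_sub_add_norm_sub _ _ _
      linarith
    · filter_upwards [hx, hM] with j hxj hMj
      have hsub : ball y (R / 2) ⊆ Ωs j :=
        (ball_subset_ball' (by rw [dist_eq_norm]; linarith)).trans hxj
      refine (norm_le_three_mul_of_re_nonneg (h := fun x => ω (G j x)) (half_pos hR) ?_ ?_ ?_
        (by linarith : ‖w - y‖ ≤ R / 2 / 2)).trans (by linarith)
      · exact ω.differentiable.comp_differentiableOn ((hd j).mono hsub)
      · exact fun z hz => (hpos j _ (hm j (hsub hz))).le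
      · exact hpos j _ (hm j (hsub (mem_ball_self (half_pos hR))))
  have hWopen : IsOpen W := Metric.isOpen_iff.mpr fun y hy => by
    obtain ⟨R, hR, h⟩ := key y hy.1
    exact ⟨R, hR, h y (mem_ball_self hR) hy⟩
  refine ((convex_ultraKernel hc).isPreconnected.subset_of_closure_inter_subset hWopen
    ⟨ν, hν, hν, M, hM⟩ ?_ hx).2
  rintro y ⟨hyc, hy⟩
  obtain ⟨R, hR, h⟩ := key y hy
  obtain ⟨w, hw, hyw⟩ := Metric.mem_closure_iff.mp hyc R hR
  exact h w (by rwa [mem_ball, dist_comm]) hw hyw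

theorem exists_eventually_bounded_on_ball {G : ι → E → E}
    (hc : ∀ j, Convex ℝ (Ωs j)) (hpos : ∀ j, ∀ x ∈ Ωs j, 0 < (ω x).re)
    (hbd : ∀ j, ∀ x ∈ Ωs j, ‖x‖ ≤ C * (1 + ‖ω x‖)) (hν : ν ∈ ultraKernel 𝒰 Ωs) (hC : 0 ≤ C)
    (hd : ∀ j, DifferentiableOn ℂ (G j) (Ωs j)) (hm : ∀ j, MapsTo (G j) (Ωs j) (Ωs j))
    {M : ℝ} (hM : ∀ᶠ j in 𝒰, ‖ω (G j ν)‖ ≤ M) {x : E} (hx : x ∈ ultraKernel 𝒰 Ωs) :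
    ∃ R > 0, ∃ M, ∀ᶠ j in 𝒰,
      DifferentiableOn ℂ (G j) (ball x R) ∧ ∀ y ∈ ball x R, ‖G j y‖ ≤ M := by
  obtain ⟨M', hM'⟩ := exists_eventually_norm_le_of_mem_ultraKernel hc hpos hν hd hm hM hx
  obtain ⟨R, hR, hxR⟩ := hx
  refine ⟨R / 2, by positivity, C * (1 + 3 * M'), ?_⟩
  filter_upwards [hM', hxR] with j hMj hj
  have hsub : ball x (R / 2) ⊆ Ωs j := (ball_subset_ball (by linarith)).trans hj
  refine ⟨(hd j).mono hsub, fun y hy => ?_⟩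
  refine (hbd j _ (hm j (hsub hy))).trans ?_
  rw [mem_ball, dist_eq_norm] at hy
  gcongr
  refine (norm_le_three_mul_of_re_nonneg (h := fun x => ω (G j x)) hR ?_ ?_ ?_ hy.le).trans
    (by linarith)
  · exact ω.differentiable.comp_differentiableOn ((hd j).mono hj)
  · exact fun z hz => (hpos j _ (hm j (hj hz))).le
  · exact hpos j _ (hm j (hj (mem_ball_self hR)))

/-- A Cartan type uniqueness theorem for a normal family of self-maps: if all the iterates
asymptotically fix `ν` and the limiting derivative at `ν` is unipotent, then the derivatives
tend to the identity everywhere. -/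
theorem tendsto_fderiv_one_of_iterates [FiniteDimensional ℂ E] {G : ι → ℕ → E → E}
    (hc : ∀ j, Convex ℝ (Ωs j)) (hpos : ∀ j, ∀ x ∈ Ωs j, 0 < (ω x).re)
    (hbd : ∀ j, ∀ x ∈ Ωs j, ‖x‖ ≤ C * (1 + ‖ω x‖)) (hν : ν ∈ ultraKernel 𝒰 Ωs) (hC : 0 ≤ C)
    (hd : ∀ j m, DifferentiableOn ℂ (G j m) (Ωs j)) (hm : ∀ j m, MapsTo (G j m) (Ωs j) (Ωs j))
    (hG0 : ∀ j, ∀ x ∈ Ωs j, G j 0 x = x)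
    (hGs : ∀ j m, ∀ x ∈ Ωs j, G j (m + 1) x = G j 1 (G j m x))
    (hων : ω ν = 1) (hGν : ∀ m, Tendsto (fun j => G j m ν) 𝒰 (𝓝 ν))
    (hnil : ∀ Z, Tendsto (fun j => fderiv ℂ (G j 1) ν) 𝒰 (𝓝 Z) → IsNilpotent (Z - 1))
    {x : ι → E} {x₀ : E} (hx : Tendsto x 𝒰 (𝓝 x₀)) (hx₀ : x₀ ∈ ultraKernel 𝒰 Ωs) :
    Tendsto (fun j => fderiv ℂ (G j 1) (x j)) 𝒰 (𝓝 1) := by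
  have : ProperSpace E := FiniteDimensional.proper ℂ E
  have : CompleteSpace E := FiniteDimensional.complete ℂ E
  set V := ultraKernel 𝒰 Ωs with hV
  have hVo : IsOpen V := isOpen_ultraKernel
  have hωG : ∀ m, ∀ᶠ j in 𝒰, ‖ω (G j m ν)‖ ≤ 2 := fun m => by
    have h1 : Tendsto (fun j => ‖ω (G j m ν)‖) 𝒰 (𝓝 ‖ω ν‖) :=
      ((ω.continuous.norm).tendsto _).comp (hGν m)
    exact (h1.eventually_lt_const (by rw [hων, norm_one]; norm_num : ‖ω ν‖ < 2)).mono
      fun _ h => h.le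
  have hloc := fun m x (hx : x ∈ V) => exists_eventually_bounded_on_ball (G := fun j => G j m)
    hc hpos hbd hν hC (fun j => hd j m) (fun j => hm j m) (hωG m) hx
  choose g hgd hgt hgf using fun m => exists_holomorphic_ultralimit (f := fun j => G j m) 𝒰
    (hloc m) hVo
  have hgν : ∀ m, g m ν = ν := fun m => tendsto_nhds_unique (hgt m ν hν) (hGν m)
  have hmem : ∀ y ∈ V, ∀ᶠ j in 𝒰, y ∈ Ωs j := by
    rintro y ⟨R, hR, hy⟩
    filter_upwards [hy] with j hj using hj (mem_ball_self hR)
  have hωg : ∀ m, ∀ y ∈ V, Tendsto (fun j => ω (G j m y)) 𝒰 (𝓝 (ω (g m y))) := fun m y hy =>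
    (ω.continuous.tendsto _).comp (hgt m y hy)
  have hgre : ∀ m, ∀ y ∈ V, 0 ≤ (ω (g m y)).re := fun m y hy => by
    refine ge_of_tendsto ((continuous_re.tendsto _).comp (hωg m y hy)) ?_
    filter_upwards [hmem y hy] with j hj using (hpos j _ (hm j m hj)).le
  have hgb : ∀ m, ∀ y ∈ V, ‖g m y‖ ≤ C * (1 + ‖ω (g m y)‖) := fun m y hy => by
    refine le_of_tendsto_of_tendsto (hgt m y hy).norm
      (((hωg m y hy).norm.const_add 1).const_mul C) ?_
    filter_upwards [hmem y hy] with j hj using hbd j _ (hm j m hj)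
  obtain ⟨R, hR, hRV⟩ := Metric.isOpen_iff.mp hVo ν hν
  have hsub : ball ν (R / 2) ⊆ V := (ball_subset_ball (by linarith)).trans hRV
  have hid : ∀ y ∈ ball ν (R / 2), g 1 y = y := by
    refine eq_self_of_bounded_iterates (g := g) (M := C * (1 + 3)) (half_pos hR)
      (fun m => (hgd m).mono hsub) (fun m y hy => ?_) hgν ?_ (fun m => ?_) (hnil _ (hgf 1 ν hν))
    · refine (hgb m y (hsub hy)).trans ?_
      gcongr
      rw [mem_ball, dist_eq_norm] at hy
      have := norm_le_three_mul_of_re_nonneg (h := fun x => ω (g m x)) hR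
        (ω.differentiable.comp_differentiableOn ((hgd m).mono hRV))
        (fun z hz => hgre m z (hRV hz)) (by simp [hgν, hων]) hy.le
      simpa [hgν, hων] using this
    · filter_upwards [ball_mem_nhds ν (half_pos hR)] with y hy
      refine tendsto_nhds_unique (hgt 0 y (hsub hy)) (tendsto_const_nhds.congr' ?_)
      filter_upwards [hmem y (hsub hy)] with j hj using (hG0 j y hj).symm
    · obtain ⟨r, hr, M, hrM⟩ := hloc 1 ν hν
      have hcont : ContinuousAt (g m) ν :=
        ((hgd m).differentiableAt (hVo.mem_nhds hν)).continuousAt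
      have hnear : ∀ᶠ y in 𝓝 ν, g m y ∈ ball ν (min (r / 2) R) := by
        refine hcont.eventually_mem ?_
        rw [hgν]
        exact ball_mem_nhds _ (by positivity)
      filter_upwards [hnear, ball_mem_nhds ν hR] with y hy hyR
      have hyV := hRV hyR
      have hgyV : g m y ∈ V := hRV (ball_subset_ball (min_le_right _ _) hy)
      have hgyr : ball (g m y) (r / 2) ⊆ ball ν r := by
        refine ball_subset_ball' ?_
        have := (mem_ball.mp hy).le.trans (min_le_left _ _)
        linarith
      refine tendsto_nhds_unique (hgt (m + 1) y hyV) ?_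
      have h1 : Tendsto (fun j => G j 1 (G j m y) - G j 1 (g m y)) 𝒰 (𝓝 0) := by
        have h2 : Tendsto (fun j => 2 * M / (r / 2) * ‖G j m y - g m y‖) 𝒰 (𝓝 0) := by
          have := (tendsto_iff_norm_sub_tendsto_zero.mp (hgt m y hyV)).const_mul (2 * M / (r / 2))
          simpa using this
        refine squeeze_zero_norm' ?_ h2
        filter_upwards [hrM, (hgt m y hyV).eventually (ball_mem_nhds _ (half_pos hr))] with j hj hj2
        exact norm_sub_le_of_bounded_on_ball (hj.1.mono hgyr) (fun z hz => hj.2 z (hgyr hz)) hj2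
      have h3 := h1.add (hgt 1 (g m y) hgyV)
      rw [zero_add] at h3
      refine h3.congr' ?_
      filter_upwards [hmem y hyV] with j hj
      rw [hGs j m y hj]
      abel
  have hidV : EqOn (g 1) id V :=
    eqOn_of_convex_of_eventuallyEq hVo (convex_ultraKernel hc) (hgd 1) differentiableOn_id hν
      (by filter_upwards [ball_mem_nhds ν (half_pos hR)] with y hy using hid y hy)
  have hlim : Tendsto (fun j => fderiv ℂ (G j 1) x₀) 𝒰 (𝓝 1) := by
    have h1 := hgf 1 x₀ hx₀
    have h2 : fderiv ℂ (g 1) x₀ = 1 := by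
      have : g 1 =ᶠ[𝓝 x₀] id := by
        filter_upwards [hVo.mem_nhds hx₀] with y hy using hidV hy
      rw [this.fderiv_eq, fderiv_id]
      rfl
    rwa [h2] at h1
  obtain ⟨r, hr, M, hrM⟩ := hloc 1 x₀ hx₀
  have h1 : Tendsto (fun j => fderiv ℂ (G j 1) (x j) - fderiv ℂ (G j 1) x₀) 𝒰 (𝓝 0) := by
    have h2 : Tendsto (fun j => 32 * M / r ^ 2 * ‖x j - x₀‖) 𝒰 (𝓝 0) := by
      have := (tendsto_iff_norm_sub_tendsto_zero.mp hx).const_mul (32 * M / r ^ 2)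
      simpa using this
    refine squeeze_zero_norm' ?_ h2
    filter_upwards [hrM, hx.eventually (ball_mem_nhds _ (half_pos hr))] with j hj hj2
    exact norm_fderiv_sub_le_of_bounded_on_ball hr hj.1 hj.2 hj2
  simpa using h1.add hlim

end Kernel

section Rescaling

variable {E : Type*} [NormedAddCommGroup E] [NormedSpace ℂ E]

/-- The anisotropic dilation which scales the direction `ν` by `s ^ 2` and the kernel of `ω`
by `s`. -/
def dilation (ω : E →L[ℂ] ℂ) (ν : E) (s : ℝ) : E →L[ℂ] E :=
  (s : ℂ) • ContinuousLinearMap.id ℂ E + ((s ^ 2 - s : ℝ) : ℂ) • ω.smulRight ν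

variable {ω : E →L[ℂ] ℂ} {ν : E}

theorem dilation_apply (s : ℝ) (x : E) :
    dilation ω ν s x = (s : ℂ) • x + ((s ^ 2 - s : ℝ) : ℂ) • ω x • ν := rfl

theorem map_dilation (hν : ω ν = 1) (s : ℝ) (x : E) : ω (dilation ω ν s x) = (s ^ 2 : ℝ) * ω x := by
  rw [dilation_apply]
  simp only [map_add, map_smul, hν, smul_eq_mul]
  push_cast
  ring

theorem dilation_dilation (hν : ω ν = 1) (s t : ℝ) (x : E) :
    dilation ω ν s (dilation ω ν t x) = dilation ω ν (s * t) x := by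
  rw [dilation_apply s, map_dilation hν, dilation_apply, dilation_apply]
  push_cast
  module

theorem dilation_one (x : E) : dilation ω ν 1 x = x := by simp [dilation_apply]

theorem dilation_inv_dilation (hν : ω ν = 1) {s : ℝ} (hs : s ≠ 0) (x : E) :
    dilation ω ν s⁻¹ (dilation ω ν s x) = x := by
  rw [dilation_dilation hν, inv_mul_cancel₀ hs, dilation_one]

theorem dilation_dilation_inv (hν : ω ν = 1) {s : ℝ} (hs : s ≠ 0) (x : E) :
    dilation ω ν s (dilation ω ν s⁻¹ x) = x := by
  rw [dilation_dilation hν, mul_inv_cancel₀ hs, dilation_one]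

theorem dilation_normal (hν : ω ν = 1) (s : ℝ) : dilation ω ν s ν = ((s ^ 2 : ℝ) : ℂ) • ν := by
  rw [dilation_apply, hν]
  push_cast
  module

theorem dilation_sub_normal (hν : ω ν = 1) (s : ℝ) (x : E) :
    dilation ω ν s x - ω (dilation ω ν s x) • ν = (s : ℂ) • (x - ω x • ν) := by
  rw [map_dilation hν, dilation_apply]
  push_cast
  module

theorem norm_dilation_le_of_le_one {s : ℝ} (h0 : 0 ≤ s) (h1 : s ≤ 1) (x : E) :
    ‖dilation ω ν s x‖ ≤ s * ((1 + ‖ω‖ * ‖ν‖) * ‖x‖) := by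
  rw [dilation_apply]
  have h2 := ω.le_opNorm x
  have h3 : |s ^ 2 - s| ≤ s := by rw [abs_le]; constructor <;> nlinarith
  calc _ ≤ ‖(s : ℂ) • x‖ + ‖((s ^ 2 - s : ℝ) : ℂ) • ω x • ν‖ := norm_add_le _ _
    _ = s * ‖x‖ + |s ^ 2 - s| * (‖ω x‖ * ‖ν‖) := by
      simp only [norm_smul, norm_real, Real.norm_eq_abs, abs_of_nonneg h0]
    _ ≤ s * ‖x‖ + s * (‖ω‖ * ‖x‖ * ‖ν‖) := by gcongr
    _ = _ := by ring

theorem norm_dilation_le_of_one_le {s : ℝ} (h1 : 1 ≤ s) (x : E) :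
    ‖dilation ω ν s x‖ ≤ s ^ 2 * ((1 + ‖ω‖ * ‖ν‖) * ‖x‖) := by
  rw [dilation_apply]
  have h2 := ω.le_opNorm x
  have h3 : |s ^ 2 - s| ≤ s ^ 2 := by rw [abs_le]; constructor <;> nlinarith
  have h4 : |s| ≤ s ^ 2 := by rw [abs_of_nonneg (by linarith)]; nlinarith
  calc _ ≤ ‖(s : ℂ) • x‖ + ‖((s ^ 2 - s : ℝ) : ℂ) • ω x • ν‖ := norm_add_le _ _
    _ = |s| * ‖x‖ + |s ^ 2 - s| * (‖ω x‖ * ‖ν‖) := by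
      simp only [norm_smul, norm_real, Real.norm_eq_abs]
    _ ≤ s ^ 2 * ‖x‖ + s ^ 2 * (‖ω‖ * ‖x‖ * ‖ν‖) := by gcongr
    _ = _ := by ring

/-- The domain `Ω` rescaled by a dilation centred at `p`. -/
def rescaled (Ω : Set E) (p : E) (ω : E →L[ℂ] ℂ) (ν : E) (s : ℝ) : Set E :=
  {x | p + dilation ω ν s x ∈ Ω}

namespace StronglyConvexAt

variable {Ω : Set E} {p : E}

theorem re_pos_of_mem_rescaled (hΩ : StronglyConvexAt Ω p ω) (hν : ω ν = 1) {s : ℝ} {x : E}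
    (hx : x ∈ rescaled Ω p ω ν s) : 0 < (ω x).re := by
  have h := hΩ.re_pos hx
  rw [add_sub_cancel_left, map_dilation hν, re_ofReal_mul] at h
  exact (pos_iff_pos_of_mul_pos h).mp (by
    by_contra! hle
    have : s ^ 2 = 0 := le_antisymm hle (sq_nonneg s)
    simp [this] at h)

theorem exists_norm_le_of_mem_rescaled (hΩ : StronglyConvexAt Ω p ω) (hν : ω ν = 1) :
    ∃ C ≥ 0, ∀ s > 0, ∀ x ∈ rescaled Ω p ω ν s, ‖x‖ ≤ C * (1 + ‖ω x‖) := by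
  obtain ⟨c, hc, hs⟩ := hΩ.support_at
  set A : ℝ := 1 + ‖ω‖ * ‖ν‖ with hA
  refine ⟨1 + A ^ 2 / c + ‖ν‖, by positivity, fun s hs0 x hx => ?_⟩
  have h1 := hs _ (subset_closure hx)
  rw [add_sub_cancel_left] at h1
  set y := dilation ω ν s x with hy
  have h2 : (ω y).re ≤ s ^ 2 * ‖ω x‖ := by
    rw [hy, map_dilation hν, re_ofReal_mul]
    gcongr
    exact re_le_norm _
  have h3 : s * ‖x - ω x • ν‖ ≤ A * ‖y‖ := by
    have e := congrArg norm (dilation_sub_normal hν s x)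
    rw [norm_smul, norm_real, Real.norm_of_nonneg hs0.le, ← hy] at e
    rw [← e]
    calc ‖y - ω y • ν‖ ≤ ‖y‖ + ‖ω y • ν‖ := norm_sub_le _ _
      _ ≤ ‖y‖ + ‖ω‖ * ‖y‖ * ‖ν‖ := by rw [norm_smul]; gcongr; exact ω.le_opNorm y
      _ = _ := by rw [hA]; ring
  have h4 : ‖x - ω x • ν‖ ^ 2 ≤ A ^ 2 / c * ‖ω x‖ := by
    have h5 : (s * ‖x - ω x • ν‖) ^ 2 ≤ (A * ‖y‖) ^ 2 := by gcongr
    have h6 : ‖y‖ ^ 2 ≤ s ^ 2 * ‖ω x‖ / c := by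
      rw [le_div_iff₀ hc]; linarith
    have h7 : s ^ 2 * ‖x - ω x • ν‖ ^ 2 ≤ s ^ 2 * (A ^ 2 / c * ‖ω x‖) := by
      calc s ^ 2 * ‖x - ω x • ν‖ ^ 2 ≤ A ^ 2 * ‖y‖ ^ 2 := by linarith
        _ ≤ A ^ 2 * (s ^ 2 * ‖ω x‖ / c) := by gcongr
        _ = _ := by ring
    exact le_of_mul_le_mul_left h7 (by positivity)
  have h8 : ‖x - ω x • ν‖ ≤ 1 + A ^ 2 / c * ‖ω x‖ := by
    nlinarith [sq_nonneg (‖x - ω x • ν‖ - 1), norm_nonneg (x - ω x • ν)]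
  have h9 : ‖x‖ ≤ ‖x - ω x • ν‖ + ‖ω x‖ * ‖ν‖ := by
    rw [← norm_smul]
    exact norm_le_norm_sub_add x _
  have : 0 ≤ A ^ 2 / c := by positivity
  nlinarith [norm_nonneg (ω x), norm_nonneg ν]

theorem convex_rescaled (hΩ : StronglyConvexAt Ω p ω) (s : ℝ) :
    Convex ℝ (rescaled Ω p ω ν s) := by
  intro x hx y hy a b ha hb hab
  have := hΩ.convex hx hy ha hb hab
  change p + dilation ω ν s (a • x + b • y) ∈ Ω
  convert this using 1
  have e : p = (a + b) • p := by rw [hab, one_smul]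
  nth_rewrite 1 [e]
  simp only [← Complex.coe_smul, map_add, map_smul]
  push_cast
  module

theorem exists_ball_subset_rescaled (hΩ : StronglyConvexAt Ω p ω) (hν : ω ν = 1) {a B : ℝ}
    (ha : 0 < a) (hB : 0 < B) : ∃ κ > 0, ∀ᶠ δ in 𝓝[>] (0 : ℝ), ∀ x ∈ Ω, ‖x - p‖ ^ 2 ≤ B * δ →
      ball x (a * δ) ⊆ Ω → ball (dilation ω ν (√δ)⁻¹ (x - p)) κ ⊆ rescaled Ω p ω ν √δ := by
  obtain ⟨κ, hκ, h⟩ := hΩ.add_mem a ha B hB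
  set A : ℝ := 1 + ‖ω‖ * ‖ν‖ with hA
  have hA0 : 0 < A := by positivity
  refine ⟨κ / (A + ‖ω‖), by positivity, ?_⟩
  filter_upwards [h, Ioo_mem_nhdsGT one_pos] with δ hδ hδ1 x hx hxB hxa y hy
  have hs0 : 0 < √δ := Real.sqrt_pos.mpr hδ1.1
  have hs1 : √δ ≤ 1 := Real.sqrt_le_one.mpr hδ1.2.le
  have hsq : √δ ^ 2 = δ := Real.sq_sqrt hδ1.1.le
  set u := y - dilation ω ν (√δ)⁻¹ (x - p) with hu
  have hun : ‖u‖ ≤ κ / (A + ‖ω‖) := by rw [hu, ← dist_eq_norm]; exact (mem_ball.mp hy).le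
  have hun' : (A + ‖ω‖) * ‖u‖ ≤ κ := by
    rw [le_div_iff₀ (by positivity)] at hun; linarith
  have e : p + dilation ω ν √δ y = x + dilation ω ν √δ u := by
    rw [hu, map_sub, dilation_dilation_inv hν hs0.ne']; abel
  change p + dilation ω ν √δ y ∈ Ω
  rw [e]
  have hωn := norm_nonneg ω
  have hunn := norm_nonneg u
  refine hδ x hx _ hxB hxa ?_ ?_
  · rw [map_dilation hν, hsq, norm_mul, norm_real, Real.norm_of_nonneg hδ1.1.le, mul_comm κ]
    have h1 := ω.le_opNorm u
    have := hδ1.1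
    gcongr
    nlinarith
  · have h1 := norm_dilation_le_of_le_one (ω := ω) (ν := ν) hs0.le hs1 u
    calc ‖dilation ω ν √δ u‖ ^ 2 ≤ (√δ * (A * ‖u‖)) ^ 2 := by gcongr
      _ = δ * (A * ‖u‖) ^ 2 := by rw [mul_pow, hsq]
      _ ≤ δ * κ ^ 2 := by
        have := hδ1.1
        gcongr
        nlinarith
      _ = _ := mul_comm _ _

theorem exists_ball_normal_subset (hΩ : StronglyConvexAt Ω p ω) (hν : ω ν = 1) :
    ∃ a > (0 : ℝ), ∀ᶠ δ : ℝ in 𝓝[>] 0, ball (p + (δ : ℂ) • ν) (a * δ) ⊆ Ω := by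
  obtain ⟨C, hC, hm⟩ := hΩ.mem_of_lt
  set a : ℝ := 1 / (2 * (‖ω‖ + 1)) with ha
  have ha0 : 0 < a := by positivity
  have hωa : ‖ω‖ * a ≤ 1 / 2 := by
    rw [ha]; field_simp; linarith
  refine ⟨a, ha0, ?_⟩
  have hev : ∀ᶠ δ in 𝓝[>] (0 : ℝ), δ * (C * (‖ν‖ + a) ^ 2) < 1 / 2 := by
    refine nhdsWithin_le_nhds (Tendsto.eventually_lt_const
      (v := 0 * (C * (‖ν‖ + a) ^ 2)) (by norm_num) ?_)
    exact tendsto_id.mul_const _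
  filter_upwards [hev, self_mem_nhdsWithin] with δ hδ (hδ0 : 0 < δ) y hy
  set u := y - (p + (δ : ℂ) • ν) with hu
  have hun : ‖u‖ ≤ a * δ := by rw [hu, ← dist_eq_norm]; exact (mem_ball.mp hy).le
  have e : y - p = (δ : ℂ) • ν + u := by rw [hu]; abel
  apply hm
  rw [e]
  have h1 : ‖(δ : ℂ) • ν + u‖ ≤ δ * (‖ν‖ + a) := by
    calc _ ≤ ‖(δ : ℂ) • ν‖ + ‖u‖ := norm_add_le _ _
      _ ≤ δ * ‖ν‖ + a * δ := by
        rw [norm_smul, norm_real, Real.norm_of_nonneg hδ0.le]; gcongr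
      _ = _ := by ring
  have h2 : δ - ‖ω‖ * (a * δ) ≤ (ω ((δ : ℂ) • ν + u)).re := by
    rw [map_add, map_smul, hν, smul_eq_mul, mul_one, add_re, ofReal_re]
    have h3 : |(ω u).re| ≤ ‖ω‖ * (a * δ) :=
      (abs_re_le_norm _).trans ((ω.le_opNorm u).trans (by gcongr))
    linarith [neg_abs_le (ω u).re]
  calc C * ‖(δ : ℂ) • ν + u‖ ^ 2 ≤ C * (δ * (‖ν‖ + a)) ^ 2 := by gcongr
    _ = δ * (δ * (C * (‖ν‖ + a) ^ 2)) := by ring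
    _ < δ * (1 / 2) := by gcongr
    _ ≤ δ - ‖ω‖ * (a * δ) := by nlinarith
    _ ≤ _ := h2

theorem exists_iterate_sub_le (hΩ : StronglyConvexAt Ω p ω) (hν : ω ν = 1) {F : E → E}
    (ho : Tendsto (fun x => ‖F x - x‖ / ‖x - p‖ ^ 2) (𝓝[Ω] p) (𝓝 0)) :
    ∃ a > (0 : ℝ), ∀ m ≥ (0 : ℝ), ∀ ε > (0 : ℝ), ∀ᶠ δ : ℝ in 𝓝[>] 0,
      ball (p + (δ : ℂ) • ν) (2 * a * δ) ⊆ Ω ∧ ∀ x ∈ ball (p + (δ : ℂ) • ν) (a * δ), ∀ i : ℕ,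
        i * δ ≤ m → ‖F^[i] x - x‖ ≤ ε * δ := by
  obtain ⟨a, ha, hball⟩ := hΩ.exists_ball_normal_subset hν
  refine ⟨a / 2, by positivity, fun m hm ε hε => ?_⟩
  set B : ℝ := ‖ν‖ + a with hB
  have hB0 : 0 < B := by positivity
  set ε' : ℝ := min ε (a / 2) with hε'
  have hε'0 : 0 < ε' := by positivity
  set η : ℝ := ε' / ((m + 1) * B ^ 2) with hη
  have hη0 : 0 < η := by positivity
  have hmη : m * (η * B ^ 2) ≤ ε' := by
    rw [hη]
    field_simp
    nlinarith
  obtain ⟨r, hr, hrF⟩ : ∃ r > 0, ∀ y ∈ Ω, ‖y - p‖ < r → ‖F y - y‖ ≤ η * ‖y - p‖ ^ 2 := by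
    have h1 := ho.eventually_lt_const hη0
    rw [eventually_nhdsWithin_iff, Metric.eventually_nhds_iff] at h1
    obtain ⟨r, hr, h⟩ := h1
    refine ⟨r, hr, fun y hy hyr => ?_⟩
    have h2 := (h (by rwa [dist_eq_norm]) hy).le
    have h3 : 0 < ‖y - p‖ := norm_pos_iff.mpr <| sub_ne_zero.mpr fun e => hΩ.notMem (e ▸ hy)
    rwa [div_le_iff₀ (by positivity)] at h2
  have hev : ∀ᶠ δ in 𝓝[>] (0 : ℝ), δ * B < r := by
    refine nhdsWithin_le_nhds (Tendsto.eventually_lt_const (v := 0 * B) (by simpa) ?_)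
    exact tendsto_id.mul_const _
  filter_upwards [hball, hev, self_mem_nhdsWithin] with δ hδ hδr (hδ0 : 0 < δ)
  refine ⟨by rwa [show 2 * (a / 2) * δ = a * δ by ring], fun x hx => ?_⟩
  rw [mem_ball, dist_eq_norm] at hx
  have key : ∀ i : ℕ, i * δ ≤ m → ‖F^[i] x - x‖ ≤ i * (η * (δ * B) ^ 2) := by
    intro i
    induction i with
    | zero => simp
    | succ i ih =>
      intro hi
      push_cast at hi ⊢
      have hi' : i * δ ≤ m := by linarith
      have h1 := ih hi'
      have h2 : ‖F^[i] x - x‖ ≤ a / 2 * δ := by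
        calc _ ≤ i * (η * (δ * B) ^ 2) := h1
          _ = i * δ * (η * B ^ 2) * δ := by ring
          _ ≤ m * (η * B ^ 2) * δ := by gcongr
          _ ≤ a / 2 * δ := by gcongr; exact hmη.trans (min_le_right _ _)
      have h3 : ‖F^[i] x - (p + (δ : ℂ) • ν)‖ < a * δ := by
        have := norm_sub_le_norm_sub_add_norm_sub (F^[i] x) x (p + (δ : ℂ) • ν)
        linarith
      have h4 : F^[i] x ∈ Ω := hδ (by rwa [mem_ball, dist_eq_norm])
      have h5 : ‖F^[i] x - p‖ < δ * B := by
        have : ‖F^[i] x - p‖ ≤ ‖F^[i] x - (p + (δ : ℂ) • ν)‖ + ‖(δ : ℂ) • ν‖ := by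
          rw [show F^[i] x - p = (F^[i] x - (p + (δ : ℂ) • ν)) + (δ : ℂ) • ν by abel]
          exact norm_add_le _ _
        rw [norm_smul, norm_real, Real.norm_of_nonneg hδ0.le] at this
        rw [hB]
        linarith
      have h6 := hrF _ h4 (h5.trans hδr)
      rw [iterate_succ_apply']
      calc ‖F (F^[i] x) - x‖ ≤ ‖F (F^[i] x) - F^[i] x‖ + ‖F^[i] x - x‖ :=
            norm_sub_le_norm_sub_add_norm_sub _ _ _
        _ ≤ η * (δ * B) ^ 2 + i * (η * (δ * B) ^ 2) := by
          gcongr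
          exact h6.trans (by gcongr)
        _ = _ := by ring
  intro i hi
  calc _ ≤ i * (η * (δ * B) ^ 2) := key i hi
    _ = i * δ * (η * B ^ 2) * δ := by ring
    _ ≤ m * (η * B ^ 2) * δ := by gcongr
    _ ≤ ε * δ := by gcongr; exact hmη.trans (min_le_left _ _)

end StronglyConvexAt

end Rescaling

section RescaledIterates

variable {E : Type*} [NormedAddCommGroup E] [NormedSpace ℂ E] {ω : E →L[ℂ] ℂ} {ν : E}

/-- The `k`-th iterate of `F` in rescaled coordinates at `p`. -/
def rescaledIterate (F : E → E) (p : E) (ω : E →L[ℂ] ℂ) (ν : E) (s : ℝ) (k : ℕ) (x : E) : E :=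
  dilation ω ν s⁻¹ (F^[k] (p + dilation ω ν s x) - p)

variable {F : E → E} {p : E} {Ω : Set E} {s : ℝ}

theorem hasFDerivAt_rescaledIterate {k : ℕ} {x : E} {B : E →L[ℂ] E}
    (hB : HasFDerivAt (F^[k]) B (p + dilation ω ν s x)) :
    HasFDerivAt (rescaledIterate F p ω ν s k)
      (dilation ω ν s⁻¹ ∘L B ∘L dilation ω ν s) x := by
  have h1 : HasFDerivAt (fun x => p + dilation ω ν s x) (dilation ω ν s) x :=
    (dilation ω ν s).hasFDerivAt.const_add p
  exact (dilation ω ν s⁻¹).hasFDerivAt.comp x ((hB.comp x h1).sub_const p)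

theorem differentiableOn_rescaledIterate (hF : DifferentiableOn ℂ F Ω) (hm : MapsTo F Ω Ω)
    (k : ℕ) : DifferentiableOn ℂ (rescaledIterate F p ω ν s k) (rescaled Ω p ω ν s) := by
  refine (dilation ω ν s⁻¹).differentiable.comp_differentiableOn (DifferentiableOn.sub_const ?_ p)
  exact (hF.iterate hm k).comp ((dilation ω ν s).differentiable.const_add p).differentiableOn
    fun _ h => h

theorem add_dilation_rescaledIterate (hν : ω ν = 1) (hs : s ≠ 0) (k : ℕ) (x : E) :
    p + dilation ω ν s (rescaledIterate F p ω ν s k x) = F^[k] (p + dilation ω ν s x) := by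
  rw [rescaledIterate, dilation_dilation_inv hν hs, add_sub_cancel]

theorem mapsTo_rescaledIterate (hν : ω ν = 1) (hs : s ≠ 0) (hm : MapsTo F Ω Ω) (k : ℕ) :
    MapsTo (rescaledIterate F p ω ν s k) (rescaled Ω p ω ν s) (rescaled Ω p ω ν s) := by
  intro x hx
  change _ ∈ Ω
  rw [add_dilation_rescaledIterate hν hs]
  exact hm.iterate k hx

theorem rescaledIterate_zero (hν : ω ν = 1) (hs : s ≠ 0) (x : E) :
    rescaledIterate F p ω ν s 0 x = x := by
  rw [rescaledIterate, iterate_zero, id, add_sub_cancel_left, dilation_inv_dilation hν hs]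

theorem rescaledIterate_add (hν : ω ν = 1) (hs : s ≠ 0) (k l : ℕ) (x : E) :
    rescaledIterate F p ω ν s (k + l) x
      = rescaledIterate F p ω ν s k (rescaledIterate F p ω ν s l x) := by
  rw [rescaledIterate, iterate_add_apply, rescaledIterate, add_dilation_rescaledIterate hν hs]

theorem rescaledIterate_normal_sub (hν : ω ν = 1) (hs : s ≠ 0) (k : ℕ) :
    rescaledIterate F p ω ν s k ν - ν
      = dilation ω ν s⁻¹ (F^[k] (p + ((s ^ 2 : ℝ) : ℂ) • ν) - (p + ((s ^ 2 : ℝ) : ℂ) • ν)) := by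
  have h : ν = dilation ω ν s⁻¹ (((s ^ 2 : ℝ) : ℂ) • ν) := by
    rw [← dilation_normal hν, dilation_inv_dilation hν hs]
  nth_rewrite 3 [h]
  rw [rescaledIterate, dilation_normal hν, ← map_sub]
  congr 1
  abel

/-- If `T j → 0`, then limits of the conjugates of `T j` by dilations are nilpotent. -/
theorem isNilpotent_of_tendsto_conj_dilation {ι : Type*} {l : Filter ι} [l.NeBot] (hν : ω ν = 1)
    {s : ι → ℝ} (hs : ∀ᶠ j in l, 0 < s j ∧ s j ≤ 1) {T : ι → E →L[ℂ] E}
    (hT : Tendsto T l (𝓝 0)) {Z : E →L[ℂ] E}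
    (hZ : Tendsto (fun j => dilation ω ν (s j)⁻¹ ∘L T j ∘L dilation ω ν (s j)) l (𝓝 Z)) :
    IsNilpotent Z := by
  have hap : ∀ x, Tendsto (fun j => dilation ω ν (s j)⁻¹ (T j (dilation ω ν (s j) x))) l
      (𝓝 (Z x)) := fun x =>
    hZ.continuousLinearMap_apply (tendsto_const_nhds (x := x))
  have hT0 : ∀ x, Tendsto (fun j => T j x) l (𝓝 0) := fun x => by
    simpa using hT.continuousLinearMap_apply (tendsto_const_nhds (x := x))
  have hZν : Z ν = 0 := by
    refine tendsto_nhds_unique (hap ν) ?_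
    have h1 : Tendsto (fun j => (1 + ‖ω‖ * ‖ν‖) * ‖T j ν‖) l (𝓝 0) := by
      simpa using (hT0 ν).norm.const_mul (1 + ‖ω‖ * ‖ν‖)
    refine squeeze_zero_norm' ?_ h1
    filter_upwards [hs] with j hj
    rw [dilation_normal hν, map_smul, map_smul, norm_smul, norm_real,
      Real.norm_of_nonneg (sq_nonneg _)]
    have h2 := norm_dilation_le_of_one_le (ω := ω) (ν := ν)
      ((one_le_inv₀ hj.1).mpr hj.2) (T j ν)
    have := hj.1
    calc s j ^ 2 * ‖dilation ω ν (s j)⁻¹ (T j ν)‖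
        ≤ s j ^ 2 * ((s j)⁻¹ ^ 2 * ((1 + ‖ω‖ * ‖ν‖) * ‖T j ν‖)) := by gcongr
      _ = _ := by field_simp
  have hZe : ∀ e, ω e = 0 → Z e = ω (Z e) • ν := by
    intro e he
    have h1 : Tendsto (fun j => T j e - ω (T j e) • ν) l (𝓝 (Z e - ω (Z e) • ν)) := by
      have h2 := (hap e).sub (((ω.continuous.tendsto _).comp (hap e)).smul_const ν)
      refine h2.congr' ?_
      filter_upwards [hs] with j hj
      have hne : (s j : ℂ) ≠ 0 := ofReal_ne_zero.mpr hj.1.ne'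
      simp only [comp_apply]
      rw [dilation_sub_normal hν, dilation_apply (s j) e, he]
      simp only [zero_smul, smul_zero, add_zero, map_smul, ofReal_inv, smul_eq_mul]
      rw [mul_smul, ← smul_sub, smul_smul, inv_mul_cancel₀ hne, one_smul]
    have h3 : Tendsto (fun j => T j e - ω (T j e) • ν) l (𝓝 0) := by
      have := (hT0 e).sub (((ω.continuous.tendsto _).comp (hT0 e)).smul_const ν)
      simpa using this
    exact sub_eq_zero.mp (tendsto_nhds_unique h1 h3)
  refine ⟨2, ?_⟩
  ext x
  have h1 : Z x = Z (x - ω x • ν) := by rw [map_sub, map_smul, hZν]; simp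
  rw [sq, mul_apply_eq_comp, h1, hZe (x - ω x • ν) (by simp [hν]), map_smul, hZν,
    smul_zero, zero_apply]

theorem pow_apply_eq_smul {A : E →L[ℂ] E} {c : ℂ} {v : E} (h : A v = c • v) (k : ℕ) :
    (A ^ k) v = c ^ k • v := by
  induction k with
  | zero => simp
  | succ k ih => rw [pow_succ, mul_apply_eq_comp, h, map_smul, ih, smul_smul, pow_succ, mul_comm]

namespace StronglyConvexAt

/-- Eigenvalues of the derivative of `F` at fixed points tending to `p` within a nontangential
region are asymptotically rigid. -/
theorem tendsto_eigenvalue_pow [FiniteDimensional ℂ E] (hΩ : StronglyConvexAt Ω p ω)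
    (hν : ω ν = 1) (hF : DifferentiableOn ℂ F Ω) (hm : MapsTo F Ω Ω)
    (ho : Tendsto (fun x => ‖F x - x‖ / ‖x - p‖ ^ 2) (𝓝[Ω] p) (𝓝 0))
    {δ : ℕ → ℝ} (hδ0 : ∀ j, 0 < δ j) (hδ : Tendsto δ atTop (𝓝 0)) {N : ℕ → ℕ}
    (hN : ∀ j, N j * δ j ≤ 1) {x : ℕ → E} {a B C : ℝ} (ha : 0 < a) (hB : 0 < B)
    (hxΩ : ∀ j, x j ∈ Ω) (hxF : ∀ j, F (x j) = x j) (hxa : ∀ j, ball (x j) (a * δ j) ⊆ Ω)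
    (hxB : ∀ j, ‖x j - p‖ ^ 2 ≤ B * δ j) (hxC : ∀ j, ‖ω (x j - p)‖ ≤ C * δ j)
    {c : ℕ → ℂ} {v : ℕ → E} (hv0 : ∀ j, v j ≠ 0)
    (hv : ∀ j, fderiv ℂ F (x j) (v j) = c j • v j) :
    Tendsto (fun j => c j ^ N j) (hyperfilter ℕ) (𝓝 1) := by
  have : ProperSpace E := FiniteDimensional.proper ℂ E
  have hδ' : Tendsto δ (hyperfilter ℕ) (𝓝[>] 0) :=
    tendsto_nhdsWithin_iff.mpr ⟨hδ.mono_left Nat.hyperfilter_le_atTop,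
      Eventually.of_forall hδ0⟩
  have hs0 : ∀ j, 0 < √(δ j) := fun j => Real.sqrt_pos.mpr (hδ0 j)
  have hsq : ∀ j, √(δ j) ^ 2 = δ j := fun j => Real.sq_sqrt (hδ0 j).le
  have hs : ∀ᶠ j in hyperfilter ℕ, 0 < √(δ j) ∧ √(δ j) ≤ 1 := by
    filter_upwards [hδ'.eventually (Ioo_mem_nhdsGT one_pos)] with j hj
    exact ⟨hs0 j, Real.sqrt_le_one.mpr hj.2.le⟩
  set A : ℝ := 1 + ‖ω‖ * ‖ν‖ with hA
  have hA0 : 0 < A := by positivity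
  set Ωs : ℕ → Set E := fun j => rescaled Ω p ω ν √(δ j) with hΩs
  set G : ℕ → ℕ → E → E := fun j m => rescaledIterate F p ω ν √(δ j) (m * N j) with hG
  obtain ⟨D, hD, hbd⟩ := hΩ.exists_norm_le_of_mem_rescaled hν
  obtain ⟨b, hb, hit⟩ := hΩ.exists_iterate_sub_le hν ho
  -- the base point belongs to the kernel
  have hνV : ν ∈ ultraKernel (hyperfilter ℕ) Ωs := by
    obtain ⟨κ, hκ, hev⟩ := hΩ.exists_ball_subset_rescaled hν (a := 2 * b) (B := ‖ν‖ ^ 2 + 1)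
      (by positivity) (by positivity)
    refine ⟨κ, hκ, ?_⟩
    filter_upwards [hδ'.eventually hev, hδ'.eventually (hit 0 le_rfl 1 one_pos),
      hδ'.eventually (Ioo_mem_nhdsGT one_pos)] with j hj1 hj2 hj3
    have h1 := hj1 (p + (δ j : ℂ) • ν) (hj2.1 (mem_ball_self (by have := hδ0 j; positivity))) ?_
      hj2.1
    · have h2 : (δ j : ℂ) • ν = dilation ω ν √(δ j) ν := by rw [dilation_normal hν, hsq]
      rwa [add_sub_cancel_left, h2, dilation_inv_dilation hν (hs0 j).ne'] at h1
    · rw [add_sub_cancel_left, norm_smul, norm_real, Real.norm_of_nonneg hj3.1.le]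
      have h2 := hj3.1
      have h3 := hj3.2
      have h4 : δ j ^ 2 ≤ δ j := by nlinarith
      calc (δ j * ‖ν‖) ^ 2 = ‖ν‖ ^ 2 * δ j ^ 2 := by ring
        _ ≤ ‖ν‖ ^ 2 * δ j := by gcongr
        _ ≤ _ := by nlinarith
  have hGν : ∀ m, Tendsto (fun j => G j m ν) (hyperfilter ℕ) (𝓝 ν) := by
    intro m
    rw [tendsto_iff_norm_sub_tendsto_zero, Metric.tendsto_nhds]
    intro ε hε
    filter_upwards [hs, hδ'.eventually (hit m (by positivity) (ε / (2 * A)) (by positivity))]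
      with j hj1 hj2
    have hδj := hδ0 j
    have h1 := hj2.2 (p + (δ j : ℂ) • ν) (mem_ball_self (by positivity)) (m * N j) (by
      push_cast
      have := hN j
      nlinarith [(Nat.cast_nonneg m : (0 : ℝ) ≤ m)])
    rw [dist_zero_right, norm_norm, hG]
    simp only
    rw [rescaledIterate_normal_sub hν (hs0 j).ne', hsq]
    have h2 := norm_dilation_le_of_one_le (ω := ω) (ν := ν) ((one_le_inv₀ hj1.1).mpr hj1.2)
      (F^[m * N j] (p + (δ j : ℂ) • ν) - (p + (δ j : ℂ) • ν))
    refine h2.trans_lt ?_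
    rw [inv_pow, hsq]
    calc (δ j)⁻¹ * (A * ‖F^[m * N j] (p + (δ j : ℂ) • ν) - (p + (δ j : ℂ) • ν)‖)
        ≤ (δ j)⁻¹ * (A * (ε / (2 * A) * δ j)) := by gcongr
      _ = ε / 2 := by field_simp
      _ < ε := by linarith
  -- the limiting derivative at the base point is unipotent
  set T : ℕ → E →L[ℂ] E := fun j => fderiv ℂ (F^[1 * N j]) (p + (δ j : ℂ) • ν) - 1 with hT
  have hdiff : ∀ j k, ∀ y ∈ Ω, DifferentiableAt ℂ (F^[k * N j]) y := fun j k y hy =>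
    (hF.iterate hm _).differentiableAt (hΩ.isOpen.mem_nhds hy)
  have hTlim : Tendsto T (hyperfilter ℕ) (𝓝 0) := by
    rw [tendsto_zero_iff_norm_tendsto_zero, Metric.tendsto_nhds]
    intro ε hε
    filter_upwards [hδ'.eventually (hit 1 zero_le_one (ε * b / 4) (by positivity))] with j hj
    have hδj := hδ0 j
    have hsub : ball (p + (δ j : ℂ) • ν) (b * δ j) ⊆ Ω :=
      (ball_subset_ball (by nlinarith)).trans hj.1
    have h1 := norm_fderiv_le_of_bounded_on_ball (f := fun y => F^[1 * N j] y - y)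
      (a := p + (δ j : ℂ) • ν) (R := b * δ j) (M := ε * b / 4 * δ j) (by positivity)
      (((hF.iterate hm _).mono hsub).sub differentiableOn_id)
      (fun y hy => hj.2 y hy _ (by push_cast; rw [one_mul]; exact hN j))
    have h2 : fderiv ℂ (fun y => F^[1 * N j] y - y) (p + (δ j : ℂ) • ν) = T j := by
      rw [hT]
      exact ((hdiff j 1 _ (hsub (mem_ball_self (by positivity)))).hasFDerivAt.sub
        (hasFDerivAt_id _)).fderiv
    rw [h2] at h1
    rw [dist_zero_right, norm_norm]
    refine h1.trans_lt ?_
    rw [show 2 * (ε * b / 4 * δ j) / (b * δ j) = ε / 2 by field_simp; norm_num]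
    linarith
  have hnil : ∀ Z, Tendsto (fun j => fderiv ℂ (G j 1) ν) (hyperfilter ℕ) (𝓝 Z) →
      IsNilpotent (Z - 1) := by
    intro Z hZ
    refine isNilpotent_of_tendsto_conj_dilation hν hs hTlim ((hZ.sub_const 1).congr' ?_)
    filter_upwards [hδ'.eventually (hit 0 le_rfl 1 one_pos)] with j hj
    have hδj := hδ0 j
    have hmem : p + (δ j : ℂ) • ν ∈ Ω := hj.1 (mem_ball_self (by positivity))
    have e : p + dilation ω ν √(δ j) ν = p + (δ j : ℂ) • ν := by rw [dilation_normal hν, hsq]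
    have h1 := hasFDerivAt_rescaledIterate (F := F) (p := p) (ω := ω) (ν := ν) (s := √(δ j))
      (k := 1 * N j) (x := ν) (e ▸ (hdiff j 1 _ hmem).hasFDerivAt)
    rw [hG, hT]
    simp only
    rw [h1.fderiv]
    ext y
    simp only [ContinuousLinearMap.comp_apply, sub_apply, map_sub,
      one_apply_eq_self, dilation_inv_dilation hν (hs0 j).ne', e]
  set q : ℕ → E := fun j => dilation ω ν (√(δ j))⁻¹ (x j - p) with hq
  have hpq : ∀ j, p + dilation ω ν √(δ j) (q j) = x j := fun j => by
    rw [hq]; simp only; rw [dilation_dilation_inv hν (hs0 j).ne', add_sub_cancel]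
  have hqΩ : ∀ j, q j ∈ Ωs j := fun j => by
    change p + dilation ω ν √(δ j) (q j) ∈ Ω
    rw [hpq]
    exact hxΩ j
  have hqb : ∀ j, ‖q j‖ ≤ D * (1 + C) := fun j => by
    refine (hbd _ (hs0 j) _ (hqΩ j)).trans ?_
    gcongr
    rw [hq]
    simp only
    rw [map_dilation hν, inv_pow, hsq, norm_mul, norm_real, norm_inv,
      Real.norm_of_nonneg (hδ0 j).le, inv_mul_le_iff₀ (hδ0 j), mul_comm (δ j)]
    exact hxC j
  obtain ⟨q₀, hq₀⟩ := exists_tendsto_ultrafilter_of_norm_le (u := q) (hyperfilter ℕ)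
    (Eventually.of_forall hqb)
  have hq₀V : q₀ ∈ ultraKernel (hyperfilter ℕ) Ωs := by
    obtain ⟨κ, hκ, hev⟩ := hΩ.exists_ball_subset_rescaled hν ha hB
    refine ⟨κ / 2, by positivity, ?_⟩
    filter_upwards [hδ'.eventually hev, hq₀.eventually (ball_mem_nhds _ (half_pos hκ))] with j h1 h2
    refine (ball_subset_ball' ?_).trans (h1 (x j) (hxΩ j) (hxB j) (hxa j))
    rw [dist_comm] at h2
    linarith
  have hlim := tendsto_fderiv_one_of_iterates (𝒰 := hyperfilter ℕ) (Ωs := Ωs) (ω := ω) (C := D)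
    (G := G) (fun j => hΩ.convex_rescaled _) (fun j y hy => hΩ.re_pos_of_mem_rescaled hν hy)
    (fun j => hbd _ (hs0 j)) hνV hD
    (fun j m => differentiableOn_rescaledIterate hF hm _)
    (fun j m => mapsTo_rescaledIterate hν (hs0 j).ne' hm _)
    (fun j y _ => by rw [hG]; simp only; rw [zero_mul, rescaledIterate_zero hν (hs0 j).ne'])
    (fun j m y _ => by
      rw [hG]
      simp only
      rw [← rescaledIterate_add hν (hs0 j).ne']
      congr 1
      ring)
    hν hGν hnil hq₀ hq₀V
  -- eigenvectors are preserved
  rw [tendsto_iff_norm_sub_tendsto_zero] at hlim ⊢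
  refine squeeze_zero (fun _ => norm_nonneg _) (fun j => ?_) hlim
  have hFx : HasFDerivAt F (fderiv ℂ F (x j)) (x j) :=
    (hF.differentiableAt (hΩ.isOpen.mem_nhds (hxΩ j))).hasFDerivAt
  have hFN : HasFDerivAt (F^[1 * N j]) (fderiv ℂ F (x j) ^ (1 * N j))
      (p + dilation ω ν √(δ j) (q j)) := by
    rw [hpq]
    exact hFx.iterate (hxF j) _
  set w := dilation ω ν (√(δ j))⁻¹ (v j) with hw
  have hw0 : w ≠ 0 := fun h => hv0 j <| by
    rw [← dilation_dilation_inv hν (hs0 j).ne' (v j), ← hw, h, map_zero]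
  have hGw : (fderiv ℂ (G j 1) (q j) - 1) w = (c j ^ N j - 1) • w := by
    rw [hG]
    simp only
    rw [(hasFDerivAt_rescaledIterate hFN).fderiv]
    simp only [ContinuousLinearMap.comp_apply, sub_apply, one_apply_eq_self]
    rw [hw, dilation_dilation_inv hν (hs0 j).ne', pow_apply_eq_smul (hv j), map_smul, one_mul,
      sub_smul, one_smul]
  have h1 := (fderiv ℂ (G j 1) (q j) - 1).le_opNorm w
  rw [hGw, norm_smul] at h1
  exact le_of_mul_le_mul_right h1 (norm_pos_iff.mpr hw0)

end StronglyConvexAt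

end RescaledIterates

section PowerBounded

theorem norm_le_one_of_pow_bounded {c : ℂ} {K : ℝ} (h : ∀ k : ℕ, ‖c‖ ^ k ≤ K) : ‖c‖ ≤ 1 := by
  by_contra! hc
  obtain ⟨k, hk⟩ := pow_unbounded_of_one_lt K hc
  exact absurd (h k) (not_le.mpr hk)

theorem exists_le_norm_pow_sub_one {c : ℂ} {δ s : ℝ} (hδ : 0 < δ) (hδ1 : δ ≤ 1)
    (hs : 0 < s) (hcs : s * δ ≤ ‖1 - c‖) :
    ∃ N : ℕ, N * δ ≤ 1 ∧ min (1 / 2) (s / 4) ≤ ‖c ^ N - 1‖ := by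
  by_contra! hcon
  set M := ⌊δ⁻¹⌋₊ with hM
  have hδi : 1 ≤ δ⁻¹ := (one_le_inv₀ hδ).mpr hδ1
  have hM1 : (1 : ℝ) ≤ M := by exact_mod_cast (Nat.one_le_floor_iff _).mpr hδi
  have hMδ : (M : ℝ) ≤ δ⁻¹ := Nat.floor_le (by positivity)
  have hMδ' : δ⁻¹ < M + 1 := Nat.lt_floor_add_one _
  have hle : ∀ N : ℕ, N ≤ M → ‖c ^ N - 1‖ < min (1 / 2) (s / 4) := fun N hN => hcon N <| by
    have h1 : (N : ℝ) ≤ δ⁻¹ := le_trans (by exact_mod_cast hN) hMδ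
    calc (N : ℝ) * δ ≤ δ⁻¹ * δ := by gcongr
      _ = 1 := inv_mul_cancel₀ hδ.ne'
  have h1 : ‖∑ i ∈ Finset.range M, (c ^ i - 1)‖ ≤ M * (1 / 2) := by
    refine (norm_sum_le _ _).trans ?_
    calc ∑ i ∈ Finset.range M, ‖c ^ i - 1‖ ≤ ∑ i ∈ Finset.range M, (1 / 2 : ℝ) := by
          refine Finset.sum_le_sum fun i hi => ?_
          exact ((hle i (Finset.mem_range.mp hi).le).trans_le (min_le_left _ _)).le
      _ = M * (1 / 2) := by simp
  have h2 : (M : ℝ) / 2 ≤ ‖∑ i ∈ Finset.range M, c ^ i‖ := by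
    rw [Finset.sum_sub_distrib] at h1
    simp only [Finset.sum_const, Finset.card_range, nsmul_eq_mul, mul_one] at h1
    have h3 := norm_sub_norm_le (M : ℂ) (M - ∑ i ∈ Finset.range M, c ^ i)
    rw [sub_sub_cancel, Complex.norm_natCast, norm_sub_rev (M : ℂ)] at h3
    linarith
  have h3 : ‖1 - c‖ * ‖∑ i ∈ Finset.range M, c ^ i‖ = ‖c ^ M - 1‖ := by
    rw [← norm_mul, mul_neg_geom_sum, norm_sub_rev]
  have h4 := (hle M le_rfl).trans_le (min_le_right _ _)
  have h5 : s * δ * (M / 2) ≤ ‖1 - c‖ * ‖∑ i ∈ Finset.range M, c ^ i‖ := by gcongr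
  have h6 : 1 < (M + 1) * δ := by
    rwa [inv_lt_iff_one_lt_mul₀ hδ] at hMδ'
  have h7 : 1 < 2 * M * δ := by nlinarith
  nlinarith

end PowerBounded

section Trace

variable {V : Type*} [AddCommGroup V] [Module ℂ V] [FiniteDimensional ℂ V] (f : Module.End ℂ V)

theorem finrank_sub_trace_eq_sum_roots :
    (Module.finrank ℂ V : ℂ) - LinearMap.trace ℂ V f = (f.charpoly.roots.map (1 - ·)).sum := by
  have hs : f.charpoly.Splits := IsAlgClosed.splits _
  rw [Module.End.trace_eq_sum_roots_charpoly_of_splits hs, Multiset.sum_map_sub, Multiset.map_id',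
    Multiset.map_const', Multiset.sum_replicate, ← hs.natDegree_eq_card_roots,
    LinearMap.charpoly_natDegree, nsmul_one]

theorem re_finrank_sub_trace_eq_sum_roots :
    ((Module.finrank ℂ V : ℂ) - LinearMap.trace ℂ V f).re =
      (f.charpoly.roots.map fun c => (1 - c).re).sum := by
  rw [finrank_sub_trace_eq_sum_roots, ← coe_reAddGroupHom, map_multiset_sum, Multiset.map_map]
  rfl

theorem hasEigenvalue_of_mem_roots_charpoly {c : ℂ} (hc : c ∈ f.charpoly.roots) :
    f.HasEigenvalue c :=
  (Module.End.hasEigenvalue_iff_isRoot_charpoly f c).mpr (Polynomial.isRoot_of_mem_roots hc)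

theorem exists_hasEigenvalue_le_re (h : 0 < Module.finrank ℂ V) :
    ∃ c, f.HasEigenvalue c ∧
      ((Module.finrank ℂ V : ℂ) - LinearMap.trace ℂ V f).re / Module.finrank ℂ V ≤ (1 - c).re := by
  by_contra! hcon
  have hcard : f.charpoly.roots.card = Module.finrank ℂ V := by
    rw [← (IsAlgClosed.splits f.charpoly).natDegree_eq_card_roots, LinearMap.charpoly_natDegree]
  have hne : f.charpoly.roots ≠ 0 := by
    rw [← Multiset.card_pos, hcard]; exact h
  have := Multiset.sum_lt_sum_of_nonempty hne fun c hc =>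
    hcon c (hasEigenvalue_of_mem_roots_charpoly f hc)
  rw [← re_finrank_sub_trace_eq_sum_roots, Multiset.map_const', Multiset.sum_replicate, hcard,
    nsmul_eq_mul, mul_div_cancel₀ _ (by positivity)] at this
  exact lt_irrefl _ this

theorem re_finrank_sub_trace_nonneg (h : ∀ c, f.HasEigenvalue c → ‖c‖ ≤ 1) :
    0 ≤ ((Module.finrank ℂ V : ℂ) - LinearMap.trace ℂ V f).re := by
  rw [re_finrank_sub_trace_eq_sum_roots]
  refine Multiset.sum_nonneg fun x hx => ?_
  obtain ⟨c, hc, rfl⟩ := Multiset.mem_map.mp hx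
  have := (re_le_norm c).trans (h c (hasEigenvalue_of_mem_roots_charpoly f hc))
  simpa using this

theorem isNilpotent_sub_one_of_re_trace (h : ∀ c, f.HasEigenvalue c → ‖c‖ ≤ 1)
    (h0 : ((Module.finrank ℂ V : ℂ) - LinearMap.trace ℂ V f).re = 0) : IsNilpotent (f - 1) := by
  have hre : ∀ c ∈ f.charpoly.roots, c.re ≤ 1 := fun c hc =>
    (re_le_norm c).trans (h c (hasEigenvalue_of_mem_roots_charpoly f hc))
  have hone : ∀ c ∈ f.charpoly.roots, c = 1 := by
    intro c hc
    rw [re_finrank_sub_trace_eq_sum_roots] at h0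
    have h1 : (1 - c).re ≤ 0 := by
      rw [← h0]
      refine Multiset.single_le_sum (fun x hx => ?_) _ (Multiset.mem_map_of_mem _ hc)
      obtain ⟨d, hd, rfl⟩ := Multiset.mem_map.mp hx
      simpa using hre d hd
    have h2 : c.re = 1 := le_antisymm (hre c hc) (by simpa using h1)
    have h3 := h c (hasEigenvalue_of_mem_roots_charpoly f hc)
    have h4 : ‖c‖ ^ 2 ≤ 1 := pow_le_one₀ (norm_nonneg _) h3
    rw [← normSq_eq_norm_sq, normSq_apply, h2] at h4
    exact Complex.ext (by simpa using h2) (by simp only [one_im]; nlinarith)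
  refine ⟨Multiset.card f.charpoly.roots, ?_⟩
  have h1 := LinearMap.aeval_self_charpoly f
  rw [(IsAlgClosed.splits f.charpoly).eq_prod_roots_of_monic f.charpoly_monic,
    Multiset.eq_replicate_of_mem hone] at h1
  simpa using h1

end Trace

section FixedDisc

variable {E : Type*} [NormedAddCommGroup E] [NormedSpace ℂ E]

/-- The derivative of a bounded holomorphic map varies holomorphically along a disc. -/
theorem differentiableOn_fderiv_comp {F : E → E} {φ : ℂ → E} {U : Set ℂ} {Ω : Set E} {M : ℝ}
    [CompleteSpace E] (hU : IsOpen U) (hΩ : IsOpen Ω) (hF : DifferentiableOn ℂ F Ω)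
    (hM : ∀ x ∈ Ω, ‖F x‖ ≤ M) (hφ : DifferentiableOn ℂ φ U) (hφΩ : MapsTo φ U Ω) (v : E) :
    DifferentiableOn ℂ (fun ζ => fderiv ℂ F (φ ζ) v) U := by
  intro ζ₀ hζ₀
  obtain ⟨R, hR, hRΩ⟩ := Metric.isOpen_iff.mp hΩ _ (hφΩ hζ₀)
  have hcont : ContinuousAt φ ζ₀ := (hφ.differentiableAt (hU.mem_nhds hζ₀)).continuousAt
  obtain ⟨W, hWs, hWo, hζW⟩ := _root_.mem_nhds_iff.mp
    (inter_mem (hU.mem_nhds hζ₀) (hcont (ball_mem_nhds _ (half_pos hR))))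
  have hball : ∀ ζ ∈ W, ball (φ ζ) (R / 2) ⊆ Ω := fun ζ hζ =>
    (ball_subset_ball' (by have : dist (φ ζ) (φ ζ₀) < R / 2 := (hWs hζ).2; linarith)).trans hRΩ
  obtain ⟨t, ht0, ht⟩ : ∃ t : ℝ, 0 < t ∧ t * ‖v‖ < R / 2 :=
    ⟨R / (4 * (‖v‖ + 1)), by positivity, by
      rw [div_mul_eq_mul_div, div_lt_iff₀ (by positivity)]
      nlinarith [norm_nonneg v]⟩
  have htends : Tendsto (fun k : ℕ => t / (k + 1)) atTop (𝓝 0) := by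
    simpa [div_eq_mul_inv] using (tendsto_one_div_add_atTop_nhds_zero_nat (𝕜 := ℝ)).const_mul t
  set u : ℕ → ℝ := fun k => t / (k + 1) with hu
  have hu0 : ∀ k, 0 < u k := fun k => by positivity
  have hut : ∀ k, u k ≤ t := fun k =>
    div_le_self ht0.le (by linarith [(Nat.cast_nonneg k : (0 : ℝ) ≤ k)])
  have hmem : ∀ k, ∀ x, x + (u k : ℂ) • v ∈ ball x (R / 2) := fun k x => by
    rw [mem_ball, dist_eq_norm, add_sub_cancel_left, norm_smul, norm_real,
      Real.norm_of_nonneg (hu0 k).le]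
    exact (mul_le_mul_of_nonneg_right (hut k) (norm_nonneg v)).trans_lt ht
  set q : ℕ → ℂ → E := fun k ζ => (u k : ℂ)⁻¹ • (F (φ ζ + (u k : ℂ) • v) - F (φ ζ)) with hq
  have hφW : DifferentiableOn ℂ φ W := hφ.mono fun ζ hζ => (hWs hζ).1
  have hqd : ∀ k, DifferentiableOn ℂ (q k) W := fun k =>
    ((hF.comp (hφW.add_const _) fun ζ hζ => hball ζ hζ (hmem k _)).sub
      (hF.comp hφW fun ζ hζ => hφΩ (hWs hζ).1)).const_smul _
  have hlim : TendstoUniformlyOn q (fun ζ => fderiv ℂ F (φ ζ) v) atTop W := by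
    have hz : Tendsto (fun k => 4 * M * (‖v‖ / (R / 2)) ^ 2 * u k) atTop (𝓝 0) := by
      simpa using htends.const_mul (4 * M * (‖v‖ / (R / 2)) ^ 2)
    rw [Metric.tendstoUniformlyOn_iff]
    intro ε hε
    filter_upwards [hz.eventually_lt_const hε] with k hk ζ hζ
    refine lt_of_le_of_lt ?_ hk
    have h1 := norm_sub_sub_fderiv_le_of_bounded_on_ball (hF.mono (hball ζ hζ))
      (fun x hx => hM x (hball ζ hζ hx)) (hmem k (φ ζ))
    have hne : (u k : ℂ) ≠ 0 := ofReal_ne_zero.mpr (hu0 k).ne'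
    rw [add_sub_cancel_left, map_smul, norm_smul, norm_real, Real.norm_of_nonneg (hu0 k).le] at h1
    have h2 : q k ζ - fderiv ℂ F (φ ζ) v = (u k : ℂ)⁻¹ •
        (F (φ ζ + (u k : ℂ) • v) - F (φ ζ) - (u k : ℂ) • fderiv ℂ F (φ ζ) v) := by
      rw [hq, smul_sub _ (_ - _), inv_smul_smul₀ hne]
    rw [dist_comm, dist_eq_norm, h2, norm_smul, norm_inv, norm_real,
      Real.norm_of_nonneg (hu0 k).le, inv_mul_le_iff₀ (hu0 k)]
    refine h1.trans_eq ?_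
    ring
  exact ((hlim.tendstoLocallyUniformlyOn.differentiableOn (Eventually.of_forall hqd)
    hWo).differentiableAt (hWo.mem_nhds hζW)).differentiableWithinAt

theorem LinearMap.trace_eq_sum_coord [FiniteDimensional ℂ E] (f : E →ₗ[ℂ] E) :
    LinearMap.trace ℂ E f = ∑ i, (Module.finBasis ℂ E).coord i (f (Module.finBasis ℂ E i)) := by
  rw [LinearMap.trace_eq_matrix_trace ℂ (Module.finBasis ℂ E)]
  simp [Matrix.trace, LinearMap.toMatrix_apply]

variable {Ω : Set E} {p : E} {ω : E →L[ℂ] ℂ} {F : E → E} {φ : ℂ → E} {z : E} {J : ℝ}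

theorem differentiableOn_trace_fderiv_comp [FiniteDimensional ℂ E] {U : Set ℂ} {M : ℝ}
    (hU : IsOpen U) (hΩ : IsOpen Ω) (hF : DifferentiableOn ℂ F Ω)
    (hM : ∀ x ∈ Ω, ‖F x‖ ≤ M) (hφ : DifferentiableOn ℂ φ U) (hφΩ : MapsTo φ U Ω) :
    DifferentiableOn ℂ
      (fun ζ => LinearMap.trace ℂ E (fderiv ℂ F (φ ζ) : E →ₗ[ℂ] E)) U := by
  have : CompleteSpace E := FiniteDimensional.complete ℂ E
  simp only [LinearMap.trace_eq_sum_coord]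
  refine DifferentiableOn.fun_sum fun i _ => ?_
  exact (LinearMap.toContinuousLinearMap
    ((Module.finBasis ℂ E).coord i)).differentiable.comp_differentiableOn
    (differentiableOn_fderiv_comp hU hΩ hF hM hφ hφΩ _)

/-- Along a disc of finite slope the approach to `p` is nontangential on the radius. -/
theorem IsDiscAt.norm_apply_sub_le (hφ : IsDiscAt Ω z φ) (hΩ : StronglyConvexAt Ω p ω)
    (hJ : SlopeLE ω p φ J) {r : ℝ} (hr : r ∈ Ico (0 : ℝ) 1) :
    ‖ω (φ r - p)‖ ≤ 4 * J * (1 - r) := by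
  set h : ℂ → ℂ := fun ζ => ω (φ ζ - p) with hh
  have hd : DifferentiableOn ℂ h (ball 0 1) :=
    ω.differentiable.comp_differentiableOn (hφ.differentiableOn.sub_const p)
  have hre : ∀ ζ ∈ ball (0 : ℂ) 1, 0 < (h ζ).re := fun ζ hζ => hΩ.re_pos (hφ.mapsTo hζ)
  have hJ0 : 0 < J := (hΩ.re_pos (hφ.map_zero ▸ hφ.mapsTo (mem_ball_self one_pos))).trans_le
    (hφ.re_le_of_slopeLE hJ)
  have hderiv : ∀ t ∈ Ico (0 : ℝ) 1, ‖deriv h t‖ ≤ 4 * J := by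
    intro t ht
    have ht1 : 0 < 1 - t := by linarith [ht.2]
    have hsub : ball (t : ℂ) (1 - t) ⊆ ball 0 1 := ball_subset_ball' (by
      rw [dist_zero_right, norm_real, Real.norm_of_nonneg ht.1]; linarith)
    have h1 := norm_fderiv_le_of_re_nonneg ht1 (hd.mono hsub) (fun x hx => (hre x (hsub hx)).le)
      (hre _ (ofReal_mem_ball_of_mem_Ico ht))
    rw [← norm_deriv_eq_norm_fderiv] at h1
    refine h1.trans ?_
    rw [div_le_iff₀ ht1]
    have := hφ.re_le_mul_of_slopeLE hΩ hJ ht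
    linarith
  have hmv : ∀ r' ∈ Ioo r 1, ‖h r‖ ≤ ‖h r'‖ + 4 * J * (1 - r) := by
    intro r' hr'
    have hIco : ∀ t ∈ Icc r r', t ∈ Ico (0 : ℝ) 1 := fun t ht =>
      ⟨hr.1.trans ht.1, ht.2.trans_lt hr'.2⟩
    have h1 := norm_image_sub_le_of_norm_deriv_le_segment' (f := fun t : ℝ => h t)
      (f' := fun t => deriv h t) (C := 4 * J) (a := r) (b := r')
      (fun t ht => ((hd.differentiableAt (isOpen_ball.mem_nhds
        (ofReal_mem_ball_of_mem_Ico (hIco t ht)))).hasDerivAt.comp_ofReal).hasDerivWithinAt)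
      (fun t ht => hderiv t (hIco t ⟨ht.1, ht.2.le⟩)) r' ⟨hr'.1.le, le_rfl⟩
    have h2 := norm_sub_norm_le (h r) (h r')
    rw [norm_sub_rev] at h2
    have h3 : 4 * J * (r' - r) ≤ 4 * J * (1 - r) := by gcongr; exact hr'.2.le
    linarith
  obtain ⟨C, hC, hCb⟩ := IsDiscAt.exists_norm_sub_sq_le (z := z) hΩ
  have hlim : Tendsto (fun r' : ℝ => ‖h r'‖) (𝓝[<] 1) (𝓝 0) := by
    have h1 : Tendsto (fun r' : ℝ => ‖ω‖ * √(C * J * (1 - r'))) (𝓝[<] 1) (𝓝 0) := by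
      have : ContinuousAt (fun r' : ℝ => ‖ω‖ * √(C * J * (1 - r'))) 1 := by fun_prop
      have := this.tendsto.mono_left (nhdsWithin_le_nhds (s := Iio 1))
      simpa using this
    refine squeeze_zero' (Eventually.of_forall fun _ => norm_nonneg _) ?_ h1
    filter_upwards [Ioo_mem_nhdsLT (zero_lt_one' ℝ)] with r' hr'
    refine (ω.le_opNorm _).trans ?_
    gcongr
    exact Real.le_sqrt_of_sq_le (hCb φ J hφ hJ r' ⟨hr'.1.le, hr'.2⟩)
  refine ge_of_tendsto (x := 𝓝[<] (1 : ℝ)) (f := fun r' : ℝ => ‖h r'‖ + 4 * J * (1 - r))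
    (by simpa using hlim.add_const (4 * J * (1 - r))) ?_
  filter_upwards [Ioo_mem_nhdsLT hr.2] with r' hr' using hmv r' hr'

end FixedDisc

section Conclusion

variable {E : Type*} [NormedAddCommGroup E] [NormedSpace ℂ E] {Ω : Set E} {p : E} {ω : E →L[ℂ] ℂ}
  {F : E → E} {z : E}

/-- Eigenvalues at a fixed point of a holomorphic self-map of a bounded open set have modulus at
most one. -/
theorem norm_le_one_of_hasEigenvalue_fderiv (hΩ : IsOpen Ω) {M : ℝ} (hM : ∀ x ∈ Ω, ‖x‖ ≤ M)
    (hF : DifferentiableOn ℂ F Ω) (hm : MapsTo F Ω Ω) {x : E} (hx : x ∈ Ω) (hfix : F x = x) {c : ℂ}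
    (hc : Module.End.HasEigenvalue (fderiv ℂ F x : E →ₗ[ℂ] E) c) : ‖c‖ ≤ 1 := by
  obtain ⟨R, hR, hRΩ⟩ := Metric.isOpen_iff.mp hΩ x hx
  obtain ⟨v, hv⟩ := hc.exists_hasEigenvector
  refine norm_le_one_of_pow_bounded (K := 2 * M / R) fun k => ?_
  have h1 := norm_fderiv_le_of_bounded_on_ball hR ((hF.iterate hm k).mono hRΩ)
    (fun y hy => hM _ (hm.iterate k (hRΩ hy)))
  rw [((hF.differentiableAt (hΩ.mem_nhds hx)).hasFDerivAt.iterate hfix k).fderiv] at h1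
  have h2 : (fderiv ℂ F x ^ k) v = c ^ k • v :=
    pow_apply_eq_smul hv.apply_eq_smul k
  have h3 := (fderiv ℂ F x ^ k).le_of_opNorm_le h1 v
  rw [h2, norm_smul, norm_pow] at h3
  exact le_of_mul_le_mul_right h3 (norm_pos_iff.mpr hv.2)

namespace StronglyConvexAt

theorem re_finrank_sub_trace_fderiv_eq_zero [FiniteDimensional ℂ E] (hΩ : StronglyConvexAt Ω p ω)
    (hz : z ∈ Ω) (hF : DifferentiableOn ℂ F Ω) (hm : MapsTo F Ω Ω) (hfix : F z = z)
    (ho : Tendsto (fun x => ‖F x - x‖ / ‖x - p‖ ^ 2) (𝓝[Ω] p) (𝓝 0)) :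
    ((Module.finrank ℂ E : ℂ) - LinearMap.trace ℂ E (fderiv ℂ F z : E →ₗ[ℂ] E)).re = 0 := by
  obtain ⟨M, -, hM⟩ := hΩ.bounded
  obtain ⟨φ, J, hφ, hJ, hφF⟩ := hΩ.exists_fixed_disc hz hF hm hfix ho
  obtain ⟨a, ha, hball⟩ := hΩ.exists_ball_disc_subset hz
  obtain ⟨B, hB, hsq⟩ := IsDiscAt.exists_norm_sub_sq_le (z := z) hΩ
  have hJ0 : 0 < J := (hΩ.re_pos hz).trans_le (hφ.re_le_of_slopeLE hJ)
  have hne : ω (z - p) ≠ 0 := fun e => by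
    have := hΩ.re_pos hz
    simp [e] at this
  have hpos : 0 < Module.finrank ℂ E := by
    have : Nontrivial E := ⟨z, p, fun e => hΩ.notMem (e ▸ hz)⟩
    exact Module.finrank_pos
  obtain ⟨ν, hν⟩ : ∃ ν, ω ν = 1 :=
    ⟨(ω (z - p))⁻¹ • (z - p), by rw [map_smul, smul_eq_mul, inv_mul_cancel₀ hne]⟩
  set T : ℂ → ℂ := fun ζ =>
    (Module.finrank ℂ E : ℂ) - LinearMap.trace ℂ E (fderiv ℂ F (φ ζ) : E →ₗ[ℂ] E) with hT
  have hTd : DifferentiableOn ℂ T (ball 0 1) := (differentiableOn_trace_fderiv_comp isOpen_ball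
    hΩ.isOpen hF (fun x hx => hM _ (hm hx)) hφ.differentiableOn hφ.mapsTo).const_sub _
  have hT0 : ∀ ζ ∈ ball (0 : ℂ) 1, 0 ≤ (T ζ).re := fun ζ hζ =>
    re_finrank_sub_trace_nonneg _ fun c hc =>
      norm_le_one_of_hasEigenvalue_fderiv hΩ.isOpen hM hF hm (hφ.mapsTo hζ) (hφF ζ hζ) hc
  have hTz : T 0 = (Module.finrank ℂ E : ℂ) - LinearMap.trace ℂ E (fderiv ℂ F z : E →ₗ[ℂ] E) := by
    rw [hT]; simp only [hφ.map_zero]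
  rw [← hTz]
  by_contra hcon
  have hTpos : 0 < (T 0).re := lt_of_le_of_ne (hT0 0 (mem_ball_self one_pos)) (Ne.symm hcon)
  set δ : ℕ → ℝ := fun j => 1 / ((j : ℝ) + 1) with hδ
  have hδ0 : ∀ j, 0 < δ j := fun j => by positivity
  have hδ1 : ∀ j, δ j ≤ 1 := fun j =>
    (div_le_one (by positivity)).mpr (by linarith [(Nat.cast_nonneg j : (0 : ℝ) ≤ j)])
  have hr : ∀ j, 1 - δ j ∈ Ico (0 : ℝ) 1 := fun j =>
    ⟨by linarith [hδ1 j], by linarith [hδ0 j]⟩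
  have hrb : ∀ j, ((1 - δ j : ℝ) : ℂ) ∈ ball (0 : ℂ) 1 := fun j => ofReal_mem_ball_of_mem_Ico (hr j)
  have hnorm : ∀ j, ‖((1 - δ j : ℝ) : ℂ)‖ = 1 - δ j := fun j => by
    rw [norm_real, Real.norm_of_nonneg (hr j).1]
  set s : ℝ := (T 0).re / 2 / Module.finrank ℂ E with hs
  have hs0 : 0 < s := by positivity
  have hTj : ∀ j, (T 0).re / 2 * δ j ≤ (T (1 - δ j : ℝ)).re := fun j => by
    have h1 := harnack_of_re_nonneg hTd hT0 (hrb j)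
    rw [sub_zero, hnorm, div_one] at h1
    have h2 := hT0 _ (hrb j)
    have h3 := hδ0 j
    nlinarith
  have hex : ∀ j, ∃ c : ℂ, ∃ v : E, ∃ N : ℕ, v ≠ 0 ∧ fderiv ℂ F (φ (1 - δ j : ℝ)) v = c • v ∧
      N * δ j ≤ 1 ∧ min (1 / 2) (s / 4) ≤ ‖c ^ N - 1‖ := by
    intro j
    obtain ⟨c, hc, hcr⟩ := exists_hasEigenvalue_le_re
      (fderiv ℂ F (φ (1 - δ j : ℝ)) : E →ₗ[ℂ] E) hpos
    obtain ⟨v, hv⟩ := hc.exists_hasEigenvector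
    have h1 : s * δ j ≤ ‖1 - c‖ := by
      refine le_trans ?_ (hcr.trans (re_le_norm _))
      rw [hs, div_mul_eq_mul_div]
      gcongr
      exact hTj j
    obtain ⟨N, hN, hcN⟩ := exists_le_norm_pow_sub_one (hδ0 j) (hδ1 j) hs0 h1
    exact ⟨c, v, N, hv.2, hv.apply_eq_smul, hN, hcN⟩
  choose c v N hv0 hv hN hcN using hex
  have hlim := hΩ.tendsto_eigenvalue_pow hν hF hm ho hδ0 tendsto_one_div_add_atTop_nhds_zero_nat hN
    (x := fun j => φ (1 - δ j : ℝ)) (a := a) (B := B * J) (C := 4 * J) ha (by positivity)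
    (fun j => hφ.mapsTo (hrb j)) (fun j => hφF _ (hrb j))
    (fun j => by
      have := hball φ hφ _ (hrb j)
      rwa [hnorm, sub_sub_cancel] at this)
    (fun j => by
      have := hsq φ J hφ hJ _ (hr j)
      rwa [sub_sub_cancel] at this)
    (fun j => by
      have := hφ.norm_apply_sub_le hΩ hJ (hr j)
      rwa [sub_sub_cancel] at this) hv0 hv
  have h0 := tendsto_iff_norm_sub_tendsto_zero.mp hlim
  have : min (1 / 2) (s / 4) ≤ 0 := ge_of_tendsto h0 (Eventually.of_forall hcN)
  exact absurd this (not_le.mpr (by positivity))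

/-- A holomorphic self-map with an interior fixed point that agrees with the identity to second
order at a strongly convex boundary point is the identity. -/
theorem eq_self_of_fixed_point [FiniteDimensional ℂ E] (hΩ : StronglyConvexAt Ω p ω)
    (hz : z ∈ Ω) (hF : DifferentiableOn ℂ F Ω) (hm : MapsTo F Ω Ω) (hfix : F z = z)
    (ho : Tendsto (fun x => ‖F x - x‖ / ‖x - p‖ ^ 2) (𝓝[Ω] p) (𝓝 0)) :
    ∀ x ∈ Ω, F x = x := by
  have : CompleteSpace E := FiniteDimensional.complete ℂ E
  obtain ⟨M, -, hM⟩ := hΩ.bounded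
  obtain ⟨R, hR, hRΩ⟩ := Metric.isOpen_iff.mp hΩ.isOpen z hz
  have hnil : IsNilpotent (fderiv ℂ F z - 1) := by
    obtain ⟨k, hk⟩ := isNilpotent_sub_one_of_re_trace (fderiv ℂ F z : E →ₗ[ℂ] E)
      (fun c hc => norm_le_one_of_hasEigenvalue_fderiv hΩ.isOpen hM hF hm hz hfix hc)
      (hΩ.re_finrank_sub_trace_fderiv_eq_zero hz hF hm hfix ho)
    refine ⟨k, ContinuousLinearMap.coe_injective ?_⟩
    rw [ContinuousLinearMap.toLinearMap_pow]
    exact hk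
  have hid := eq_self_of_bounded_iterates (g := fun m => F^[m]) hR
    (fun m => (hF.iterate hm m).mono hRΩ) (fun m x hx => hM _ (hm.iterate m (hRΩ hx)))
    (fun m => iterate_fixed hfix m) (Eventually.of_forall fun x => rfl)
    (fun m => Eventually.of_forall fun x => iterate_succ_apply' F m x) hnil
  exact eqOn_of_convex_of_eventuallyEq hΩ.isOpen hΩ.convex hF differentiableOn_id hz
    (eventually_of_mem (ball_mem_nhds z hR) hid)

end StronglyConvexAt

end Conclusion

theorem huang_strongly_convex_interior_fixed_point
    {n : ℕ} (hn : 2 ≤ n) (Ω : Set (En n)) (ρ : En n → ℝ)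
    (hΩ : IsDomain' Ω) (hbd : Bornology.IsBounded Ω)
    (hρ : IsDefiningFunction Ω ⊤ ρ)
    (hsc : ∀ q ∈ frontier Ω, ∀ ξ : En n, ξ ≠ 0 → fderiv ℝ ρ q ξ = 0 →
      0 < iteratedFDeriv ℝ 2 ρ q ![ξ, ξ])
    (p : En n) (hp : p ∈ frontier Ω)
    (F : En n → En n) (hF : DifferentiableOn ℂ F Ω) (hFself : MapsTo F Ω Ω)
    (z₀ : En n) (hz₀ : z₀ ∈ Ω) (hfix : F z₀ = z₀)
    (ho : LittleOh Ω F p 2) :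
    ∀ z ∈ Ω, F z = z := by
  have h : IsStronglyConvexDomain Ω ρ :=
    { contDiff := hρ.1.of_le (WithTop.coe_le_coe.mpr (le_top (a := (3 : ℕ∞))))
      isOpen := hΩ.1
      isPreconnected := hΩ.2.isPreconnected
      isBounded := hbd
      eq_setOf := hρ.2.1
      frontier_eq := hρ.2.2.1
      fderiv_ne_zero := hρ.2.2.2
      hessian_pos := fun q hq ξ hξ hdξ => by
        simpa [iteratedFDeriv_two_apply] using hsc q hq ξ hξ hdξ }
  obtain ⟨ω, hω⟩ := h.stronglyConvexAt hp
  exact hω.eq_self_of_fixed_point hz₀ hF hFself hfix ho
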